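/- Let q = p^f be a power of an odd prime p, let n ≥ 7, let Q be a nondegenerate quadratic form on V = F_q^n, and let GO(V,Q) be the group of similitudes of Q; suppose GO(V,Q) is not solvable. Let π be a set of primes with 2 ∈ π, 3 ∈ π and p ∉ π, and let H be a solvable Hall π-subgroup of GO(V,Q). Set G = H·(GO(V,Q) ∩ SL_n(F_q)). Then there exist x, y, z ∈ G such that H ∩ H^x ∩ H^y ∩ H^z is contained in the center of GO(V,Q), i.e. consists of scalar matrices. -/

import Mathlib

open Matrix Pointwise

/-- `H^x = x⁻¹ H x`. -/
def conjBy {G : Type*} [Group G] (H : Subgroup G) (x : G) : Subgroup G :=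
  Subgroup.map ((MulAut.conj x⁻¹).toMonoidHom) H

/-- Hall π-subgroup of the whole group. -/
def IsHallSubgroup {G : Type*} [Group G] (π : Set ℕ) (H : Subgroup G) : Prop :=
  (∀ r : ℕ, r.Prime → r ∣ Nat.card H → r ∈ π) ∧ ∀ r ∈ π, ¬ r ∣ H.index

/-- Hall π-subgroup of the subgroup `K`. -/
def IsHallSubgroupIn {G : Type*} [Group G] (π : Set ℕ) (K H : Subgroup G) : Prop :=
  H ≤ K ∧ (∀ r : ℕ, r.Prime → r ∣ Nat.card H → r ∈ π) ∧ ∀ r ∈ π, ¬ r ∣ H.relIndex K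

/-- The subgroup `SL_n` of `GL_n`. -/
def SLsub (n : ℕ) (F : Type*) [Field F] : Subgroup (GL (Fin n) F) where
  carrier := {g | Matrix.det (g : Matrix (Fin n) (Fin n) F) = 1}
  one_mem' := by simp
  mul_mem' := by
    intro a b ha hb
    simp only [Set.mem_setOf_eq, Units.val_mul, Matrix.det_mul] at *
    rw [ha, hb, one_mul]
  inv_mem' := by
    intro g hg
    simp only [Set.mem_setOf_eq] at *
    have h1 : ((g⁻¹ : GL (Fin n) F) : Matrix (Fin n) (Fin n) F) *
        (g : Matrix (Fin n) (Fin n) F) = 1 := g.inv_mul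
    have := congrArg Matrix.det h1
    rw [Matrix.det_mul, Matrix.det_one, hg, mul_one] at this
    exact this

/-- The group of similitudes of the bilinear form `B` (acting on row vectors). -/
def similitudeGroup {n : ℕ} {F : Type*} [Field F]
    (B : (Fin n → F) → (Fin n → F) → F) : Subgroup (GL (Fin n) F) where
  carrier := {g | ∃ c : Fˣ, ∀ u v : Fin n → F,
    B (Matrix.vecMul u (g : Matrix (Fin n) (Fin n) F))
      (Matrix.vecMul v (g : Matrix (Fin n) (Fin n) F)) = (c : F) * B u v}
  one_mem' := ⟨1, by simp⟩
  mul_mem' := by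
    rintro a b ⟨c, hc⟩ ⟨d, hd⟩
    refine ⟨c * d, fun u v => ?_⟩
    simp only [Units.val_mul, ← Matrix.vecMul_vecMul, hd, hc]
    ring
  inv_mem' := by
    rintro g ⟨c, hc⟩
    refine ⟨c⁻¹, fun u v => ?_⟩
    have h1 : ∀ w : Fin n → F, Matrix.vecMul
        (Matrix.vecMul w ((g⁻¹ : GL (Fin n) F) : Matrix (Fin n) (Fin n) F))
        (g : Matrix (Fin n) (Fin n) F) = w := by
      intro w
      rw [Matrix.vecMul_vecMul, g.inv_mul, Matrix.vecMul_one]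
    have h2 := hc (Matrix.vecMul u ((g⁻¹ : GL (Fin n) F) : Matrix (Fin n) (Fin n) F))
      (Matrix.vecMul v ((g⁻¹ : GL (Fin n) F) : Matrix (Fin n) (Fin n) F))
    rw [h1, h1] at h2
    rw [h2, Units.val_inv_eq_inv_val, inv_mul_cancel_left₀ (by exact_mod_cast c.ne_zero)]

/-- The isometry group of the bilinear form `B` (acting on row vectors). -/
def isometryGroup {n : ℕ} {F : Type*} [Field F]
    (B : (Fin n → F) → (Fin n → F) → F) : Subgroup (GL (Fin n) F) where
  carrier := {g | ∀ u v : Fin n → F,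
    B (Matrix.vecMul u (g : Matrix (Fin n) (Fin n) F))
      (Matrix.vecMul v (g : Matrix (Fin n) (Fin n) F)) = B u v}
  one_mem' := by simp
  mul_mem' := by
    intro a b ha hb u v
    simp only [Set.mem_setOf_eq] at ha hb
    simp only [Units.val_mul, ← Matrix.vecMul_vecMul]
    rw [hb, ha]
  inv_mem' := by
    intro g hg u v
    have h1 : ∀ w : Fin n → F, Matrix.vecMul
        (Matrix.vecMul w ((g⁻¹ : GL (Fin n) F) : Matrix (Fin n) (Fin n) F))
        (g : Matrix (Fin n) (Fin n) F) = w := by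
      intro w
      rw [Matrix.vecMul_vecMul, g.inv_mul, Matrix.vecMul_one]
    have h2 := hg (Matrix.vecMul u ((g⁻¹ : GL (Fin n) F) : Matrix (Fin n) (Fin n) F))
      (Matrix.vecMul v ((g⁻¹ : GL (Fin n) F) : Matrix (Fin n) (Fin n) F))
    rw [h1, h1] at h2
    exact h2.symm

/-- The group of similitudes of the quadratic form `Q` (acting on row vectors). -/
def qSimilitudeGroup {n : ℕ} {F : Type*} [Field F]
    (Q : (Fin n → F) → F) : Subgroup (GL (Fin n) F) where
  carrier := {g | ∃ c : Fˣ, ∀ v : Fin n → F,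
    Q (Matrix.vecMul v (g : Matrix (Fin n) (Fin n) F)) = (c : F) * Q v}
  one_mem' := ⟨1, by simp⟩
  mul_mem' := by
    rintro a b ⟨c, hc⟩ ⟨d, hd⟩
    refine ⟨c * d, fun v => ?_⟩
    simp only [Units.val_mul, ← Matrix.vecMul_vecMul, hd, hc]
    ring
  inv_mem' := by
    rintro g ⟨c, hc⟩
    refine ⟨c⁻¹, fun v => ?_⟩
    have h1 : ∀ w : Fin n → F, Matrix.vecMul
        (Matrix.vecMul w ((g⁻¹ : GL (Fin n) F) : Matrix (Fin n) (Fin n) F))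
        (g : Matrix (Fin n) (Fin n) F) = w := by
      intro w
      rw [Matrix.vecMul_vecMul, g.inv_mul, Matrix.vecMul_one]
    have h2 := hc (Matrix.vecMul v ((g⁻¹ : GL (Fin n) F) : Matrix (Fin n) (Fin n) F))
    rw [h1] at h2
    rw [h2, Units.val_inv_eq_inv_val, inv_mul_cancel_left₀ (by exact_mod_cast c.ne_zero)]

/-- The unitary group `GU_n` with respect to the field automorphism `φ`. -/
def GUgrp (n : ℕ) {K : Type*} [Field K] (φ : K →+* K) : Subgroup (GL (Fin n) K) where
  carrier := {g | ((g : Matrix (Fin n) (Fin n) K).map φ)ᵀ * (g : Matrix (Fin n) (Fin n) K) = 1}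
  one_mem' := by
    simp [Matrix.map_one φ φ.map_zero φ.map_one]
  mul_mem' := by
    intro a b ha hb
    simp only [Set.mem_setOf_eq, Units.val_mul, Matrix.map_mul, Matrix.transpose_mul] at *
    calc ((b : Matrix (Fin n) (Fin n) K).map φ)ᵀ * ((a : Matrix (Fin n) (Fin n) K).map φ)ᵀ *
          ((a : Matrix (Fin n) (Fin n) K) * (b : Matrix (Fin n) (Fin n) K))
        = ((b : Matrix (Fin n) (Fin n) K).map φ)ᵀ *
          (((a : Matrix (Fin n) (Fin n) K).map φ)ᵀ * (a : Matrix (Fin n) (Fin n) K)) *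
          (b : Matrix (Fin n) (Fin n) K) := by noncomm_ring
      _ = 1 := by rw [ha, mul_one, hb]
  inv_mem' := by
    intro g hg
    simp only [Set.mem_setOf_eq] at *
    have hcomm : (g : Matrix (Fin n) (Fin n) K) * ((g : Matrix (Fin n) (Fin n) K).map φ)ᵀ = 1 :=
      mul_eq_one_comm.mp hg
    have h1 : ((g : Matrix (Fin n) (Fin n) K) * ((g⁻¹ : GL (Fin n) K) : Matrix (Fin n) (Fin n) K)).map φ = 1 := by
      rw [g.mul_inv]
      exact Matrix.map_one φ φ.map_zero φ.map_one
    rw [Matrix.map_mul] at h1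
    have h2 := congrArg Matrix.transpose h1
    rw [Matrix.transpose_mul, Matrix.transpose_one] at h2
    calc (((g⁻¹ : GL (Fin n) K) : Matrix (Fin n) (Fin n) K).map φ)ᵀ *
          ((g⁻¹ : GL (Fin n) K) : Matrix (Fin n) (Fin n) K)
        = (((g⁻¹ : GL (Fin n) K) : Matrix (Fin n) (Fin n) K).map φ)ᵀ *
          (((g : Matrix (Fin n) (Fin n) K).map φ)ᵀ * (g : Matrix (Fin n) (Fin n) K)) *
          ((g⁻¹ : GL (Fin n) K) : Matrix (Fin n) (Fin n) K) := by rw [hg, mul_one]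
      _ = ((((g⁻¹ : GL (Fin n) K) : Matrix (Fin n) (Fin n) K).map φ)ᵀ *
          ((g : Matrix (Fin n) (Fin n) K).map φ)ᵀ) *
          ((g : Matrix (Fin n) (Fin n) K) * ((g⁻¹ : GL (Fin n) K) : Matrix (Fin n) (Fin n) K)) := by
            noncomm_ring
      _ = 1 := by rw [h2, g.mul_inv, mul_one]

section
namespace HallOrth

variable {F : Type*} [Field F] {V : Type*} [AddCommGroup V] [Module F V]

/-- reflection in `u` (the identity when `B u u = 0`). -/
noncomputable def reflMap (B : V →ₗ[F] V →ₗ[F] F) (u : V) : V →ₗ[F] V :=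
  LinearMap.id - ((2 / B u u) • (B.flip u)).smulRight u

theorem reflMap_apply (B : V →ₗ[F] V →ₗ[F] F) (u x : V) :
    reflMap B u x = x - (2 / B u u * B x u) • u := by
  simp [reflMap]

theorem reflMap_invol (B : V →ₗ[F] V →ₗ[F] F) (u : V) :
    Function.Involutive (reflMap B u) := by
  intro x
  rw [reflMap_apply, reflMap_apply]
  by_cases h : B u u = 0
  · simp [h]
  · simp only [map_sub, LinearMap.sub_apply, map_smul, LinearMap.smul_apply, smul_eq_mul]
    rw [sub_sub, ← add_smul]
    have : (2 / B u u * B x u + 2 / B u u * (B x u - 2 / B u u * B x u * B u u)) = 0 := by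
      field_simp; ring
    rw [this]; simp

noncomputable def refl (B : V →ₗ[F] V →ₗ[F] F) (u : V) : V ≃ₗ[F] V :=
  LinearEquiv.ofInvolutive (reflMap B u) (reflMap_invol B u)

theorem refl_apply (B : V →ₗ[F] V →ₗ[F] F) (u x : V) :
    refl B u x = x - (2 / B u u * B x u) • u := by
  rw [← reflMap_apply]; rfl

theorem refl_refl (B : V →ₗ[F] V →ₗ[F] F) (u x : V) : refl B u (refl B u x) = x :=
  reflMap_invol B u x

theorem refl_mul_self (B : V →ₗ[F] V →ₗ[F] F) (u : V) : refl B u * refl B u = 1 := by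
  ext x; exact refl_refl B u x

theorem refl_inv (B : V →ₗ[F] V →ₗ[F] F) (u : V) : (refl B u)⁻¹ = refl B u :=
  inv_eq_of_mul_eq_one_left (refl_mul_self B u)

theorem refl_of_orth (B : V →ₗ[F] V →ₗ[F] F) {u x : V} (h : B x u = 0) : refl B u x = x := by
  rw [refl_apply, h]; simp

theorem refl_self (B : V →ₗ[F] V →ₗ[F] F) {u : V} (h : B u u ≠ 0) : refl B u u = -u := by
  rw [refl_apply, div_mul_cancel₀ _ h, two_smul]; abel

theorem refl_isom (B : V →ₗ[F] V →ₗ[F] F) (hs : ∀ x y, B x y = B y x) (u x y : V) :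
    B (refl B u x) (refl B u y) = B x y := by
  rw [refl_apply, refl_apply]
  by_cases h : B u u = 0
  · simp [h]
  · simp only [map_sub, LinearMap.sub_apply, map_smul, LinearMap.smul_apply, smul_eq_mul]
    rw [hs u y]
    field_simp; ring

theorem refl_conj (B : V →ₗ[F] V →ₗ[F] F) (g : V ≃ₗ[F] V) (μ : F) (hμ : μ ≠ 0)
    (hg : ∀ x y, B (g x) (g y) = μ * B x y) (u : V) :
    g * refl B u * g⁻¹ = refl B (g u) := by
  ext x
  obtain ⟨y, rfl⟩ := g.surjective x
  have h1 : (g⁻¹ : V ≃ₗ[F] V) (g y) = y := g.symm_apply_apply y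
  rw [LinearEquiv.mul_apply, LinearEquiv.mul_apply, h1, refl_apply, refl_apply, hg, hg, map_sub, map_smul]
  congr 2
  by_cases h : B u u = 0
  · simp [h]
  · field_simp

theorem refl_smul (B : V →ₗ[F] V →ₗ[F] F) {a : F} (ha : a ≠ 0) (u : V) :
    refl B (a • u) = refl B u := by
  ext x
  rw [refl_apply, refl_apply, smul_smul]
  congr 2
  simp only [map_smul, LinearMap.smul_apply, smul_eq_mul]
  by_cases h : B u u = 0
  · simp [h]
  · field_simp

theorem refl_eq_parallel (B : V →ₗ[F] V →ₗ[F] F) (h2 : (2 : F) ≠ 0) {u v : V} (hu : B u u ≠ 0)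
    (h : refl B u = refl B v) : ∃ a : F, a ≠ 0 ∧ u = a • v := by
  have h1 : refl B v u = -u := by rw [← h]; exact refl_self B hu
  rw [refl_apply] at h1
  have h3 : (2 : F) • u = (2 / B v v * B u v) • v := by
    rw [two_smul]
    have := sub_eq_iff_eq_add.mp h1
    rw [eq_neg_add_iff_add_eq] at this
    exact this
  have hu0 : u ≠ 0 := by rintro rfl; simp at hu
  refine ⟨2⁻¹ * (2 / B v v * B u v), ?_, ?_⟩
  · intro h0
    apply hu0
    have : u = (2⁻¹ * (2 / B v v * B u v)) • v := by
      rw [mul_smul, ← h3, smul_smul, inv_mul_cancel₀ h2, one_smul]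
    rw [this, h0, zero_smul]
  · rw [mul_smul, ← h3, smul_smul, inv_mul_cancel₀ h2, one_smul]

/-- Two roots spanning a degenerate plane give an element of order `p`. -/
theorem no_unip (p : ℕ) [Fact p.Prime] [CharP F p] (hp2 : p ≠ 2)
    (B : V →ₗ[F] V →ₗ[F] F) (hs : ∀ x y, B x y = B y x)
    (H : Subgroup (V ≃ₗ[F] V)) (hH : ∀ g ∈ H, g ^ p = 1 → g = 1)
    {u e : V} (hu : B u u ≠ 0) (he : B e e = 0) (hue : B u e = 0)
    (h1 : refl B u ∈ H) (h2 : refl B (u + e) ∈ H) : e = 0 := by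
  have hp : p.Prime := Fact.out
  have h20 : (2 : F) ≠ 0 := by
    intro h
    have h' : ((2 : ℕ) : F) = 0 := by exact_mod_cast h
    rw [CharP.cast_eq_zero_iff F p] at h'
    exact hp2 ((Nat.prime_dvd_prime_iff_eq hp Nat.prime_two).mp h')
  have hQ : B (u + e) (u + e) = B u u := by
    simp [he, hue, hs e u]
  set c : V ≃ₗ[F] V := refl B u * refl B (u + e) with hc
  have hca : ∀ x, c x = x + ((2 / B u u) * B x e) • u - ((2 / B u u) * (B x u + B x e)) • e := by
    intro x
    have h9 : refl B u (u + e) = -u + e := by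
      rw [map_add, refl_self B hu, refl_of_orth B (show B e u = 0 by rw [hs]; exact hue)]
    rw [hc, LinearEquiv.mul_apply, refl_apply B (u+e), hQ, map_sub, map_smul, h9, refl_apply]
    simp only [map_add]
    module
  let N : Module.End F V := (c : V →ₗ[F] V) - 1
  have hN : ∀ x, N x = ((2 / B u u) * B x e) • u - ((2 / B u u) * (B x u + B x e)) • e := by
    intro x
    simp only [N, LinearMap.sub_apply, LinearEquiv.coe_coe, Module.End.one_apply, hca]
    abel
  have hNe : N e = 0 := by rw [hN]; simp [he, hs e u, hue]
  have hNu : N u = (-2 : F) • e := by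
    rw [hN]; simp only [hue, mul_zero, zero_smul, add_zero, zero_sub]
    rw [div_mul_cancel₀ _ hu, neg_smul]
  have hN3 : N ^ 3 = 0 := by
    ext x
    simp only [pow_succ, pow_zero, one_mul, Module.End.mul_apply, LinearMap.zero_apply]
    rw [hN x]
    simp only [map_sub, map_smul, hNe, hNu, smul_zero, sub_zero]
  have hNp : N ^ p = 0 := by
    have h3 : 3 ≤ p := by have := hp.two_le; omega
    rw [← Nat.sub_add_cancel h3, pow_add, hN3, mul_zero]
  have : CharP (Module.End F V) p ∨ Subsingleton V := by
    rcases subsingleton_or_nontrivial V with h | h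
    · exact Or.inr h
    · left
      exact charP_of_injective_algebraMap (algebraMap F (Module.End F V)).injective p
  rcases this with hch | hsub
  · have hcN : ((c : V →ₗ[F] V) : Module.End F V) ^ p = 1 := by
      have h4 : ((c : V →ₗ[F] V) : Module.End F V) = N + 1 := by simp [N]
      rw [h4, add_pow_char_of_commute p (Commute.one_right N), hNp, one_pow, zero_add]
    have hc1 : c ^ p = 1 := by
      ext x
      have h5 := congrArg (fun f : Module.End F V => f x) hcN
      have h6 : ∀ k : ℕ, ∀ y, (c ^ k) y = (((c : V →ₗ[F] V) : Module.End F V) ^ k) y := by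
        intro k
        induction k with
        | zero => intro y; rfl
        | succ k ih => intro y; rw [pow_succ, pow_succ, LinearEquiv.mul_apply, Module.End.mul_apply, ih]; rfl
      rw [h6]; exact h5
    have hc2 := hH c (H.mul_mem h1 h2) hc1
    have h7 : N u = 0 := by simp [N, hc2]
    rw [hNu] at h7
    rcases smul_eq_zero.mp h7 with h | h
    · exact absurd (neg_eq_zero.mp h) h20
    · exact h
  · exact Subsingleton.elim _ _

end HallOrth
end

section
namespace HallOrth

/-- A nonabelian solvable group has a noncentral normal subgroup with central derived subgroup. -/
theorem exists_noncentral_normal (G : Type*) [Group G] [Group.IsSolvable G]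
    (h : Subgroup.center G ≠ ⊤) :
    ∃ N : Subgroup G, N.Normal ∧ ¬ N ≤ Subgroup.center G ∧ ⁅N, N⁆ ≤ Subgroup.center G := by
  classical
  obtain ⟨k, hk⟩ := (Group.isSolvable_def G).mp inferInstance
  have hex : ∃ k, derivedSeries G k ≤ Subgroup.center G := ⟨k, by rw [hk]; exact bot_le⟩
  have hm := Nat.find_spec hex
  have hmin := fun j => Nat.find_min (m := j) hex
  rcases hmm : Nat.find hex with _ | m
  · rw [hmm] at hm
    exact absurd (top_le_iff.mp hm) h
  · rw [hmm] at hm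
    refine ⟨derivedSeries G m, inferInstance, hmin m (by omega), ?_⟩
    rw [derivedSeries_succ] at hm
    exact hm

variable {F : Type*} [Field F] {V : Type*} [AddCommGroup V] [Module F V]

theorem exists_orth [FiniteDimensional F V] (B : V →ₗ[F] V →ₗ[F] F) {k : ℕ}
    (hk : k < Module.finrank F V) (s : Fin k → V) : ∃ e : V, e ≠ 0 ∧ ∀ i, B e (s i) = 0 := by
  let f : V →ₗ[F] (Fin k → F) := LinearMap.pi fun i => B.flip (s i)
  have hf : LinearMap.ker f ≠ ⊥ := by
    apply LinearMap.ker_ne_bot_of_finrank_lt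
    simpa using hk
  obtain ⟨e, he, he0⟩ := Submodule.exists_mem_ne_zero_of_ne_bot hf
  refine ⟨e, he0, fun i => ?_⟩
  have := congrFun (LinearMap.mem_ker.mp he) i
  simpa [f] using this

/-- two commuting conjugates -/
theorem refl_mul_fix (B : V →ₗ[F] V →ₗ[F] F) (h2 : (2 : F) ≠ 0) {u v : V}
    (hu : B u u ≠ 0) (hv : B v v ≠ 0) (huv : refl B u ≠ refl B v) (x : V) :
    (refl B u * refl B v) x = x ↔ B x u = 0 ∧ B x v = 0 := by
  constructor
  · intro h
    have h1 : refl B v x = refl B u x := by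
      have := congrArg (refl B u) h
      rwa [LinearEquiv.mul_apply, refl_refl] at this
    rw [refl_apply, refl_apply, sub_right_inj] at h1
    by_cases hb : B x v = 0
    · rw [hb] at h1
      simp only [mul_zero, zero_smul] at h1
      have hu0 : u ≠ 0 := by rintro rfl; simp at hu
      rcases smul_eq_zero.mp h1.symm with h | h
      · rcases mul_eq_zero.mp h with h | h
        · exact absurd h (div_ne_zero h2 hu)
        · exact ⟨h, hb⟩
      · exact absurd h hu0
    · exfalso
      apply huv
      have hc : 2 / B v v * B x v ≠ 0 := mul_ne_zero (div_ne_zero h2 hv) hb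
      have h3 : v = ((2 / B v v * B x v)⁻¹ * (2 / B u u * B x u)) • u := by
        rw [mul_smul, ← h1, smul_smul, inv_mul_cancel₀ hc, one_smul]
      have h4 : ((2 / B v v * B x v)⁻¹ * (2 / B u u * B x u)) ≠ 0 := by
        intro h0
        rw [h0, zero_smul] at h3
        rw [h3] at hv; simp at hv
      rw [h3, refl_smul B h4]
  · rintro ⟨h1, h3⟩
    rw [LinearEquiv.mul_apply, refl_of_orth B h3, refl_of_orth B h1]

theorem mem_span_pair_of_perp [FiniteDimensional F V] (B : V →ₗ[F] V →ₗ[F] F)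
    (hs : ∀ x y, B x y = B y x) (hnd : ∀ v, (∀ w, B v w = 0) → v = 0) (u v y : V)
    (h : ∀ x, B x u = 0 → B x v = 0 → B x y = 0) : y ∈ Submodule.span F {u, v} := by
  have hN : LinearMap.BilinForm.Nondegenerate B := by
    refine ⟨fun x hx => hnd x hx, fun x hx => hnd x fun w => ?_⟩
    rw [hs]; exact hx w
  have hr : LinearMap.BilinForm.IsRefl B := fun x y h => by rw [hs]; exact h
  rw [← LinearMap.BilinForm.orthogonal_orthogonal hN hr (Submodule.span F {u, v})]
  rw [LinearMap.BilinForm.mem_orthogonal_iff]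
  intro x hx
  rw [LinearMap.BilinForm.mem_orthogonal_iff] at hx
  apply h
  · rw [hs]; exact hx u (Submodule.subset_span (by simp))
  · rw [hs]; exact hx v (Submodule.subset_span (by simp))

end HallOrth
end

section
namespace HallOrth
variable {F : Type*} [Field F] {V : Type*} [AddCommGroup V] [Module F V]

structure RootSys (B : V →ₗ[F] V →ₗ[F] F) (R : Subgroup (V ≃ₗ[F] V)) (Φ : Set V) : Prop where
  symm : ∀ x y, B x y = B y x
  nd : ∀ v, (∀ w, B v w = 0) → v = 0
  two : (2 : F) ≠ 0
  ne : ∀ v ∈ Φ, B v v ≠ 0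
  mem : ∀ v ∈ Φ, refl B v ∈ R
  gen : R ≤ Subgroup.closure (refl B '' Φ)
  inv : ∀ g ∈ R, ∀ v ∈ Φ, g v ∈ Φ
  irr : ∀ X : Submodule F V, X ≠ ⊥ → (∀ v ∈ Φ, v ∈ X ∨ ∀ x ∈ X, B x v = 0) → X = ⊤
  nounip : ∀ u ∈ Φ, ∀ e, B e e = 0 → B u e = 0 → u + e ∈ Φ → e = 0
  nonempty : Φ.Nonempty

namespace RootSys
variable {B : V →ₗ[F] V →ₗ[F] F} {R : Subgroup (V ≃ₗ[F] V)} {Φ : Set V}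

theorem isom (h : RootSys B R Φ) {g : V ≃ₗ[F] V} (hg : g ∈ R) : ∀ x y, B (g x) (g y) = B x y := by
  have := h.gen hg
  induction this using Subgroup.closure_induction with
  | mem x hx =>
    obtain ⟨v, _, rfl⟩ := hx
    exact refl_isom B h.symm v
  | one => intro x y; rfl
  | mul a b ha hb iha ihb => 
    have hR : Subgroup.closure (refl B '' Φ) ≤ R := by
      rw [Subgroup.closure_le]; rintro _ ⟨v, hv, rfl⟩; exact h.mem v hv
    intro x y
    rw [LinearEquiv.mul_apply, LinearEquiv.mul_apply, iha (hR ha), ihb (hR hb)]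
  | inv a ha iha =>
    have hR : Subgroup.closure (refl B '' Φ) ≤ R := by
      rw [Subgroup.closure_le]; rintro _ ⟨v, hv, rfl⟩; exact h.mem v hv
    intro x y
    rw [← iha (hR ha)]
    have h1 : ∀ x, a ((a⁻¹ : V ≃ₗ[F] V) x) = x := fun x => a.apply_symm_apply x
    rw [h1, h1]

theorem conj (h : RootSys B R Φ) {g : V ≃ₗ[F] V} (hg : g ∈ R) (u : V) :
    g * refl B u * g⁻¹ = refl B (g u) :=
  refl_conj B g 1 one_ne_zero (fun x y => by rw [h.isom hg, one_mul]) u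

theorem neg_mem (h : RootSys B R Φ) {v : V} (hv : v ∈ Φ) : -v ∈ Φ := by
  rw [← refl_self B (h.ne v hv)]; exact h.inv _ (h.mem v hv) v hv

theorem central (h : RootSys B R Φ) {z : V ≃ₗ[F] V} (hz : z ∈ R)
    (hc : ∀ v ∈ Φ, z * refl B v = refl B v * z) :
    ∃ ε : F, (ε = 1 ∨ ε = -1) ∧ ∀ x, z x = ε • x := by
  have h1 : ∀ v ∈ Φ, ∃ ε : F, (ε = 1 ∨ ε = -1) ∧ z v = ε • v := by
    intro v hv
    have h3 : refl B (z v) = refl B v := by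
      rw [← h.conj hz, hc v hv, mul_assoc, mul_inv_cancel, mul_one]
    have h4 : B (z v) (z v) = B v v := h.isom hz v v
    obtain ⟨a, ha, hav⟩ := refl_eq_parallel B h.two (by rw [h4]; exact h.ne v hv) h3
    refine ⟨a, ?_, hav⟩
    rw [hav] at h4
    simp only [map_smul, LinearMap.smul_apply, smul_eq_mul] at h4
    have h5 : (a * a - 1) * B v v = 0 := by linear_combination h4
    rcases mul_eq_zero.mp h5 with h6 | h6
    · have : (a - 1) * (a + 1) = 0 := by linear_combination h6
      rcases mul_eq_zero.mp this with h7 | h7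
      · left; linear_combination h7
      · right; linear_combination h7
    · exact absurd h6 (h.ne v hv)
  obtain ⟨v, hv⟩ := h.nonempty
  obtain ⟨ε, hε, hzv⟩ := h1 v hv
  refine ⟨ε, hε, ?_⟩
  let X : Submodule F V := LinearMap.ker ((z : V →ₗ[F] V) - ε • LinearMap.id)
  have hX : ∀ x, x ∈ X ↔ z x = ε • x := by
    intro x
    simp [X, LinearMap.mem_ker, sub_eq_zero]
  have hXt : X = ⊤ := by
    apply h.irr
    · intro hb
      have : v ∈ X := (hX v).mpr hzv
      rw [hb, Submodule.mem_bot] at this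
      apply h.ne v hv; rw [this]; simp
    · intro w hw
      obtain ⟨δ, hδ, hzw⟩ := h1 w hw
      by_cases hed : δ = ε
      · left; rw [hX, hzw, hed]
      · right
        intro x hx
        rw [hX] at hx
        have h4 := h.isom hz x w
        rw [hx, hzw] at h4
        simp only [map_smul, LinearMap.smul_apply, smul_eq_mul] at h4
        have h5 : δ * ε = -1 := by
          rcases hδ with rfl | rfl <;> rcases hε with rfl | rfl <;> simp_all
        have h6 : 2 * B x w = 0 := by linear_combination B x w * h5 - h4
        exact (mul_eq_zero.mp h6).resolve_left h.two
  intro x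
  rw [← hX, hXt]; trivial

theorem inv_top (h : RootSys B R Φ) (X : Submodule F V) (hX : X ≠ ⊥)
    (hi : ∀ v ∈ Φ, ∀ x ∈ X, refl B v x ∈ X) : X = ⊤ := by
  apply h.irr X hX
  intro v hv
  by_contra hcon
  push Not at hcon
  obtain ⟨h1, x, hx, hb⟩ := hcon
  apply h1
  have h3 := X.sub_mem hx (hi v hv x hx)
  rw [refl_apply, sub_sub_cancel] at h3
  exact (X.smul_mem_iff (mul_ne_zero (div_ne_zero h.two (h.ne v hv)) hb)).mp h3

theorem pair_nd (h : RootSys B R Φ) {u v : V} (hu : u ∈ Φ) (hv : v ∈ Φ) (huv : B u u = B v v)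
    (hne : refl B u ≠ refl B v) {e : V} (he : e ∈ Submodule.span F {u, v})
    (h1 : B e u = 0) (h2 : B e v = 0) : e = 0 := by
  obtain ⟨β, α, hab⟩ := Submodule.mem_span_pair.mp he
  have hvn := h.ne v hv
  have hv0 : v ≠ 0 := by rintro rfl; simp at hvn
  by_cases hβ : β = 0
  · rw [hβ, zero_smul, zero_add] at hab
    rw [← hab] at h2
    simp only [map_smul, LinearMap.smul_apply, smul_eq_mul] at h2
    rw [← hab, (mul_eq_zero.mp h2).resolve_right hvn, zero_smul]
  · have hee : B e e = 0 := by
      nth_rewrite 2 [← hab]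
      simp [h1, h2]
    -- u = -(α/β) v + e/β
    have hu1 : u = (-(β⁻¹ * α)) • v + β⁻¹ • e := by
      rw [← hab, smul_add, smul_smul, smul_smul, inv_mul_cancel₀ hβ]; module
    have hve : B v e = 0 := by rw [h.symm]; exact h2
    have huu : B u u = (β⁻¹ * α) * (β⁻¹ * α) * B v v := by
      rw [hu1]
      simp only [map_add, LinearMap.add_apply, map_smul, LinearMap.smul_apply, smul_eq_mul, hve, h2, hee]
      ring
    set a := β⁻¹ * α with ha
    have h5 : (a - 1) * (a + 1) = 0 := by
      have : (a * a - 1) * B v v = 0 := by linear_combination huv - huu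
      have := (mul_eq_zero.mp this).resolve_right hvn
      linear_combination this
    rcases mul_eq_zero.mp h5 with h6 | h6
    · have ha1 : a = 1 := by linear_combination h6
      have h7 : v + (-β⁻¹) • e ∈ Φ := by
        have : v + (-β⁻¹) • e = -u := by rw [hu1, ha1]; module
        rw [this]; exact h.neg_mem hu
      have h8 := h.nounip v hv _ (by simp [hee]) (by simp [hve]) h7
      exact (smul_eq_zero.mp h8).resolve_left (neg_ne_zero.mpr (inv_ne_zero hβ))
    · have ha1 : a = -1 := by linear_combination h6
      have h7 : v + (β⁻¹) • e ∈ Φ := by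
        have : v + (β⁻¹) • e = u := by rw [hu1, ha1]; module
        rw [this]; exact hu
      have h8 := h.nounip v hv _ (by simp [hee]) (by simp [hve]) h7
      exact (smul_eq_zero.mp h8).resolve_left (inv_ne_zero hβ)

end RootSys
end HallOrth
end

section
namespace HallOrth
variable {F : Type*} [Field F] {V : Type*} [AddCommGroup V] [Module F V]
open scoped commutatorElement
namespace RootSys
variable {B : V →ₗ[F] V →ₗ[F] F} {R : Subgroup (V ≃ₗ[F] V)} {Φ : Set V}

theorem comm_all (h : RootSys B R Φ) {x : V ≃ₗ[F] V}
    (hx : ∀ v ∈ Φ, x * refl B v = refl B v * x) : ∀ g ∈ R, x * g = g * x := by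
  intro g hg
  have h1 : R ≤ Subgroup.centralizer {x} := by
    refine h.gen.trans ?_
    rw [Subgroup.closure_le]
    rintro _ ⟨v, hv, rfl⟩
    rw [SetLike.mem_coe, Subgroup.mem_centralizer_singleton_iff]
    exact (hx v hv).symm
  exact (Subgroup.mem_centralizer_singleton_iff.mp (h1 hg)).symm

theorem stepA (h : RootSys B R Φ) [FiniteDimensional F V] [Group.IsSolvable R]
    (hd : 5 ≤ Module.finrank F V) :
    ∃ u ∈ Φ, ∃ v ∈ Φ, B u u = B v v ∧ refl B u ≠ refl B v ∧
      ∀ g ∈ R, Commute (refl B u * refl B v) (g * (refl B u * refl B v) * g⁻¹) := by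
  have hnc : Subgroup.center R ≠ ⊤ := by
    intro hc
    obtain ⟨v, hv⟩ := h.nonempty
    have hvR := h.mem v hv
    have h1 : (⟨refl B v, hvR⟩ : R) ∈ Subgroup.center R := by rw [hc]; trivial
    rw [Subgroup.mem_center_iff] at h1
    obtain ⟨ε, hε, hall⟩ := h.central hvR (fun w hw => by
      have := h1 ⟨refl B w, h.mem w hw⟩
      exact (congrArg Subtype.val this).symm)
    obtain ⟨e, he, heo⟩ := exists_orth B (k := 1) (by omega) (fun _ => v)
    have h3 := hall e
    rw [refl_of_orth B (heo 0)] at h3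
    have h4 := hall v
    rw [refl_self B (h.ne v hv)] at h4
    have hv0 : v ≠ 0 := by rintro rfl; exact h.ne _ hv (by simp)
    have h5 : (1 - ε) • e = 0 := by rw [sub_smul, ← h3, one_smul, sub_self]
    have h6 : (1 + ε) • v = 0 := by rw [add_smul, ← h4, one_smul, add_neg_cancel]
    have h7 := (smul_eq_zero.mp h5).resolve_right he
    have h8 := (smul_eq_zero.mp h6).resolve_right hv0
    exact h.two (by linear_combination h7 + h8)
  obtain ⟨N, hN, hN1, hN2⟩ := exists_noncentral_normal R hnc
  rw [SetLike.not_le_iff_exists] at hN1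
  obtain ⟨x, hxN, hxc⟩ := hN1
  have hv : ∃ v ∈ Φ, (x : V ≃ₗ[F] V) * refl B v ≠ refl B v * x := by
    by_contra hcon
    push Not at hcon
    apply hxc
    rw [Subgroup.mem_center_iff]
    intro g
    exact Subtype.ext (h.comm_all hcon g g.2).symm
  obtain ⟨v, hv, hxv⟩ := hv
  have hcj := h.conj x.2 v
  have hne : refl B ((x : V ≃ₗ[F] V) v) ≠ refl B v := by
    intro hh
    apply hxv
    rw [hh] at hcj
    nth_rewrite 2 [← hcj]; simp
  refine ⟨(x : V ≃ₗ[F] V) v, h.inv _ x.2 v hv, v, hv, h.isom x.2 v v, hne, ?_⟩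
  set u := (x : V ≃ₗ[F] V) v with hu
  set c : V ≃ₗ[F] V := refl B u * refl B v with hc
  have huΦ : u ∈ Φ := h.inv _ x.2 v hv
  have hcR : c ∈ R := R.mul_mem (h.mem u huΦ) (h.mem v hv)
  let cR : R := ⟨c, hcR⟩
  have hcN : cR ∈ N := by
    have h1 : cR = x * (⟨refl B v, h.mem v hv⟩ * x⁻¹ * (⟨refl B v, h.mem v hv⟩ : R)⁻¹) := by
      apply Subtype.ext
      simp only [cR, hc, Subgroup.coe_mul, Subgroup.coe_inv, refl_inv, ← hcj, mul_assoc]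
    rw [h1]
    exact N.mul_mem hxN (hN.conj_mem _ (N.inv_mem hxN) _)
  intro g hg
  let gR : R := ⟨g, hg⟩
  have hgN : gR * cR * gR⁻¹ ∈ N := hN.conj_mem _ hcN gR
  have hcom := hN2 (Subgroup.commutator_mem_commutator hcN hgN)
  rw [Subgroup.mem_center_iff] at hcom
  set d : V ≃ₗ[F] V := g * c * g⁻¹ with hd'
  have hz : ((⁅cR, gR * cR * gR⁻¹⁆ : R) : V ≃ₗ[F] V) = c * d * c⁻¹ * d⁻¹ := rfl
  obtain ⟨ε, hε, hall⟩ := h.central (⁅cR, gR * cR * gR⁻¹⁆ : R).2 (fun w hw => by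
      have := hcom ⟨refl B w, h.mem w hw⟩
      exact (congrArg Subtype.val this).symm)
  rw [hz] at hall
  have hdd : d = refl B (g u) * refl B (g v) := by
    rw [← h.conj hg, ← h.conj hg, hd', hc]; group
  obtain ⟨e, he, heo⟩ := exists_orth B (k := 4) (by omega) ![u, v, g u, g v]
  have e1 : B e u = 0 := heo 0
  have e2 : B e v = 0 := heo 1
  have e3 : B e (g u) = 0 := heo 2
  have e4 : B e (g v) = 0 := heo 3
  have hce : c e = e := by
    rw [hc, LinearEquiv.mul_apply, refl_of_orth B e2, refl_of_orth B e1]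
  have hde : d e = e := by
    rw [hdd, LinearEquiv.mul_apply, refl_of_orth B e4, refl_of_orth B e3]
  have hce' : (c⁻¹ : V ≃ₗ[F] V) e = e := by
    nth_rewrite 1 [← hce]; exact c.symm_apply_apply e
  have hde' : (d⁻¹ : V ≃ₗ[F] V) e = e := by
    nth_rewrite 1 [← hde]; exact d.symm_apply_apply e
  have h9 := hall e
  rw [LinearEquiv.mul_apply, LinearEquiv.mul_apply, LinearEquiv.mul_apply, hde', hce', hde, hce] at h9
  have hε1 : ε = 1 := by
    have : (1 - ε) • e = 0 := by rw [sub_smul, ← h9, one_smul, sub_self]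
    have := (smul_eq_zero.mp this).resolve_right he
    linear_combination -this
  have h10 : c * d * c⁻¹ * d⁻¹ = 1 := by
    ext y; rw [hall y, hε1, one_smul]; rfl
  have h11 : c * d = d * c := by
    have := congrArg (fun t => t * d * c) h10
    simpa [mul_assoc] using this
  exact h11

end RootSys
end HallOrth
end

section
namespace HallOrth
variable {F : Type*} [Field F] {V : Type*} [AddCommGroup V] [Module F V]
namespace RootSys
variable {B : V →ₗ[F] V →ₗ[F] F} {R : Subgroup (V ≃ₗ[F] V)} {Φ : Set V}

theorem conj2 (h : RootSys B R Φ) {g : V ≃ₗ[F] V} (hg : g ∈ R) (u v : V) :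
    g * (refl B u * refl B v) * g⁻¹ = refl B (g u) * refl B (g v) := by
  rw [← h.conj hg, ← h.conj hg]; group

theorem preserve (h : RootSys B R Φ) [FiniteDimensional F V] {u v : V} (hu : u ∈ Φ) (hv : v ∈ Φ)
    (hne : refl B u ≠ refl B v) {d : V ≃ₗ[F] V} (hd : d ∈ R)
    (hc : Commute (refl B u * refl B v) d) {y : V} (hy : y ∈ Submodule.span F {u, v}) :
    d y ∈ Submodule.span F {u, v} := by
  apply mem_span_pair_of_perp B h.symm h.nd
  intro x hx1 hx2
  have h1 := (refl_mul_fix B h.two (h.ne u hu) (h.ne v hv) hne x).mpr ⟨hx1, hx2⟩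
  obtain ⟨x', rfl⟩ := d.surjective x
  rw [h.isom hd]
  rw [← LinearEquiv.mul_apply, hc.eq, LinearEquiv.mul_apply] at h1
  have h3 := d.injective h1
  obtain ⟨h4, h5⟩ := (refl_mul_fix B h.two (h.ne u hu) (h.ne v hv) hne x').mp h3
  obtain ⟨a, b, rfl⟩ := Submodule.mem_span_pair.mp hy
  simp [h4, h5]

theorem refl2_sub_mem (B : V →ₗ[F] V →ₗ[F] F) (u v x : V) :
    (refl B u * refl B v) x - x ∈ Submodule.span F {u, v} := by
  rw [LinearEquiv.mul_apply, Submodule.mem_span_pair, refl_apply B u, refl_apply B v]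
  refine ⟨- (2 / B u u * (B (x - (2 / B v v * B x v) • v) u)), -(2 / B v v * B x v), ?_⟩
  module

theorem sq_one {a : F} {b : F} (hb : b ≠ 0) (h : a * (a * b) = b) : a = 1 ∨ a = -1 := by
  have h5 : (a - 1) * (a + 1) = 0 := by
    have : (a * a - 1) * b = 0 := by linear_combination h
    have := (mul_eq_zero.mp this).resolve_right hb
    linear_combination this
  rcases mul_eq_zero.mp h5 with h6 | h6
  · left; linear_combination h6
  · right; linear_combination h6

theorem stepB (h : RootSys B R Φ) [FiniteDimensional F V] [Group.IsSolvable R]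
    (hd : 5 ≤ Module.finrank F V) :
    ∃ e : V, ∃ c ∈ R, ∃ r ∈ R, B e e ≠ 0 ∧ c e = -e ∧ (r * c * r⁻¹) e = -e ∧
      (∀ x, c x = -x → (r * c * r⁻¹) x = -x → ∃ a : F, x = a • e) ∧
      ∀ g ∈ R, ∃ ε : F, (ε = 1 ∨ ε = -1) ∧ (g * c * g⁻¹) e = ε • e := by
  obtain ⟨u, hu, v, hv, huv, hne, hcomm⟩ := h.stepA hd
  have hun := h.ne u hu
  have hvn := h.ne v hv
  -- a root moving the plane
  have ht : ∃ t ∈ Φ, ∃ y ∈ Submodule.span F {u, v}, refl B t y ∉ Submodule.span F {u, v} := by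
    by_contra hcon
    push Not at hcon
    have h1 := h.inv_top _ (by
      intro hb
      have : u ∈ Submodule.span F {u, v} := Submodule.subset_span (by simp)
      rw [hb, Submodule.mem_bot] at this
      apply hun; rw [this]; simp) hcon
    have h3 : Module.finrank F (Submodule.span F (Set.range ![u, v])) ≤ Fintype.card (Fin 2) :=
      finrank_range_le_card _
    have h4 : Set.range ![u, v] = {u, v} := by simp [Set.pair_comm]
    rw [h4, h1, finrank_top] at h3
    simp at h3
    omega
  obtain ⟨t, ht, y0, hy0, hy0t⟩ := ht
  set U : Submodule F V := Submodule.span F {u, v} with hU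
  have hUu : u ∈ U := Submodule.subset_span (by simp)
  have hUv : v ∈ U := Submodule.subset_span (by simp)
  set r := refl B t with hr
  have hrR : r ∈ R := h.mem t ht
  have htU : t ∉ U := by
    intro htU
    apply hy0t
    rw [hr, refl_apply]
    exact U.sub_mem hy0 (U.smul_mem _ htU)
  set c := refl B u * refl B v with hc
  have hcR : c ∈ R := R.mul_mem (h.mem u hu) (h.mem v hv)
  -- e
  set e : V := B v t • u - B u t • v with he
  have heU : e ∈ U := U.sub_mem (U.smul_mem _ hUu) (U.smul_mem _ hUv)
  have het : B e t = 0 := by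
    simp only [he, map_sub, LinearMap.sub_apply, map_smul, LinearMap.smul_apply, smul_eq_mul]; ring
  have hre : r e = e := refl_of_orth B het
  have hpar : ¬ ∃ a : F, u = a • v := by
    rintro ⟨a, ha⟩
    apply hne
    have ha0 : a ≠ 0 := by
      rintro rfl
      rw [ha] at hun; simp at hun
    rw [ha, refl_smul B ha0]
  have hvt : ¬ (B u t = 0 ∧ B v t = 0) := by
    rintro ⟨h1, h3⟩
    apply hy0t
    obtain ⟨a, b, rfl⟩ := Submodule.mem_span_pair.mp hy0
    rw [hr, refl_of_orth]
    · exact hy0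
    · simp [h1, h3]
  have hv0 : v ≠ 0 := by rintro rfl; simp at hvn
  have hu0 : u ≠ 0 := by rintro rfl; simp at hun
  have he0 : e ≠ 0 := by
    intro h0
    rw [he, sub_eq_zero] at h0
    by_cases hb : B v t = 0
    · rw [hb, zero_smul] at h0
      exact hvt ⟨(smul_eq_zero.mp h0.symm).resolve_right hv0, hb⟩
    · apply hpar
      refine ⟨(B v t)⁻¹ * B u t, ?_⟩
      rw [mul_smul, ← h0, smul_smul, inv_mul_cancel₀ hb, one_smul]
  -- intersection
  have hInter : ∀ w ∈ U, r w ∈ U → ∃ a : F, w = a • e := by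
    intro w hw hrw
    have hwt : B w t = 0 := by
      by_contra hb
      apply htU
      have h3 := U.sub_mem hw hrw
      rw [hr, refl_apply, sub_sub_cancel] at h3
      exact (U.smul_mem_iff (mul_ne_zero (div_ne_zero h.two (h.ne t ht)) hb)).mp h3
    obtain ⟨a, b, rfl⟩ := Submodule.mem_span_pair.mp hw
    simp only [map_add, LinearMap.add_apply, map_smul, LinearMap.smul_apply, smul_eq_mul] at hwt
    by_cases hb : B v t = 0
    · have hb' : B u t ≠ 0 := fun h0 => hvt ⟨h0, hb⟩
      rw [hb, mul_zero, add_zero] at hwt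
      have ha := (mul_eq_zero.mp hwt).resolve_right hb'
      refine ⟨- (B u t)⁻¹ * b, ?_⟩
      rw [he, hb, ha, smul_sub, smul_smul, smul_smul]
      have : -(B u t)⁻¹ * b * B u t = -b := by field_simp
      rw [this]; module
    · refine ⟨(B v t)⁻¹ * a, ?_⟩
      rw [he, smul_sub, smul_smul, smul_smul]
      have h1 : (B v t)⁻¹ * a * B v t = a := by field_simp
      have h3 : (B v t)⁻¹ * a * B u t = -b := by
        field_simp; linear_combination hwt
      rw [h1, h3]; module
  have hrr : ∀ x, r (r x) = x := refl_refl B t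
  have hrinv : r⁻¹ = r := refl_inv B t
  set c' := r * c * r⁻¹ with hc'
  have hc'2 : c' = refl B (r u) * refl B (r v) := h.conj2 hrR u v
  have hruΦ := h.inv r hrR u hu
  have hrvΦ := h.inv r hrR v hv
  have hne' : refl B (r u) ≠ refl B (r v) := by
    rw [← h.conj hrR, ← h.conj hrR]
    intro h0
    exact hne (mul_left_cancel (mul_right_cancel h0))
  have hU' : ∀ x, x ∈ Submodule.span F {r u, r v} ↔ r x ∈ U := by
    intro x
    rw [hU, Submodule.mem_span_pair, Submodule.mem_span_pair]
    constructor
    · rintro ⟨a, b, rfl⟩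
      exact ⟨a, b, by simp [hrr]⟩
    · rintro ⟨a, b, hab⟩
      refine ⟨a, b, ?_⟩
      rw [← hrr x, ← hab]; simp
  -- any conjugate preserves both planes
  have hpres : ∀ g ∈ R, (∀ y ∈ U, (g * c * g⁻¹) y ∈ U) ∧ (∀ y, r y ∈ U → r ((g * c * g⁻¹) y) ∈ U) := by
    intro g hg
    have hdR : g * c * g⁻¹ ∈ R := R.mul_mem (R.mul_mem hg hcR) (R.inv_mem hg)
    refine ⟨fun y hy => h.preserve hu hv hne hdR (hcomm g hg) hy, fun y hy => ?_⟩
    rw [← hU'] at hy ⊢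
    refine h.preserve hruΦ hrvΦ hne' hdR ?_ hy
    rw [← hc'2, hc']
    have h1 := hcomm (r * g) (R.mul_mem hrR hg)
    have h3 : r * (c * (r * g * c * (r * g)⁻¹)) * r⁻¹ = r * ((r * g * c * (r * g)⁻¹) * c) * r⁻¹ := by
      rw [h1.eq]
    rw [hrinv] at h3 ⊢
    have hrr1 : r * r = 1 := refl_mul_self B t
    have h4 : (r * g * c * (r * g)⁻¹) = r * (g * c * g⁻¹) * r := by
      rw [_root_.mul_inv_rev, hrinv]; group
    rw [h4] at h3
    have h5 : r * (c * (r * (g * c * g⁻¹) * r)) * r = (r * c * r) * (g * c * g⁻¹) * (r * r) := by group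
    have h6 : r * (r * (g * c * g⁻¹) * r * c) * r = (r * r) * (g * c * g⁻¹) * (r * c * r) := by group
    rw [h5, h6, hrr1, mul_one, one_mul] at h3
    exact h3
  have hlam : ∀ g ∈ R, ∃ a : F, (g * c * g⁻¹) e = a • e := by
    intro g hg
    obtain ⟨h1, h3⟩ := hpres g hg
    exact hInter _ (h1 e heU) (h3 e (by rw [hre]; exact heU))
  have hndU : ∀ x ∈ U, B x u = 0 → B x v = 0 → x = 0 := fun x hx h1 h3 =>
    h.pair_nd hu hv huv hne hx h1 h3
  have hnfix : ∀ x ∈ U, c x = x → x = 0 := by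
    intro x hx hcx
    obtain ⟨h1, h3⟩ := (refl_mul_fix B h.two hun hvn hne x).mp hcx
    exact hndU x hx h1 h3
  have h1c : (1 : V ≃ₗ[F] V) * c * (1 : V ≃ₗ[F] V)⁻¹ = c := by group
  have hpc := hpres 1 R.one_mem
  rw [h1c] at hpc
  have hlc := hlam 1 R.one_mem
  rw [h1c] at hlc
  -- the fixed vector
  have hee : B e e ≠ 0 := by
    intro hee
    have hdiff : ∀ y, r y ∈ U → ∃ a : F, c y - y = a • e := by
      intro y hy
      refine hInter _ (refl2_sub_mem B u v y) ?_
      rw [map_sub]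
      exact U.sub_mem (hpc.2 y hy) hy
    obtain ⟨α, hα⟩ := hdiff (r u) (by rw [hrr]; exact hUu)
    obtain ⟨β, hβ⟩ := hdiff (r v) (by rw [hrr]; exact hUv)
    have hf : ∀ f, r f ∈ U → c f = f → B e f = 0 := by
      intro f _ hcf
      obtain ⟨h1, h3⟩ := (refl_mul_fix B h.two hun hvn hne f).mp hcf
      obtain ⟨a, b, hab⟩ := Submodule.mem_span_pair.mp heU
      rw [h.symm, ← hab]; simp [h1, h3]
    have hfc : c (β • r u - α • r v) = β • r u - α • r v := by
      rw [map_sub, map_smul, map_smul]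
      rw [sub_eq_iff_eq_add.mp hα, sub_eq_iff_eq_add.mp hβ]; module
    have hrf : r (β • r u - α • r v) = β • u - α • v := by simp [hrr]
    have hf1 := hf _ (by rw [hrf]; exact U.sub_mem (U.smul_mem _ hUu) (U.smul_mem _ hUv)) hfc
    -- move back: e ⊥ β u - α v, e ⊥ e
    have hf2 : B e (β • u - α • v) = 0 := by
      rw [← hrf]; nth_rewrite 1 [← hre]; rw [h.isom hrR]; exact hf1
    have hef : e = B v t • u - B u t • v := he
    by_cases hdet : B v t * α - B u t * β = 0
    · -- e = is proportional to βu - αv, so r e is fixed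
      have hprop : ∃ a : F, a ≠ 0 ∧ a • (β • u - α • v) = 0 • e ∨ (β • u - α • v) = a • e ∧ a ≠ 0 := by
        by_cases hb : B v t = 0
        · have hb' : B u t ≠ 0 := fun h0 => hvt ⟨h0, hb⟩
          have hβ0 : β = 0 := by
            rw [hb, zero_mul, zero_sub, neg_eq_zero] at hdet
            exact (mul_eq_zero.mp hdet).resolve_left hb'
          by_cases hα0 : α = 0
          · exact ⟨1, Or.inl ⟨one_ne_zero, by simp [hα0, hβ0]⟩⟩
          · refine ⟨α / B u t, Or.inr ⟨?_, div_ne_zero hα0 hb'⟩⟩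
            rw [hef, hb, hβ0, zero_smul, zero_sub, zero_sub, smul_neg, smul_smul,
              div_mul_cancel₀ _ hb']
        · by_cases hβ0 : β = 0
          · have hα0 : α = 0 := by
              rw [hβ0, mul_zero, sub_zero] at hdet
              exact (mul_eq_zero.mp hdet).resolve_left hb
            exact ⟨1, Or.inl ⟨one_ne_zero, by simp [hα0, hβ0]⟩⟩
          · refine ⟨β / B v t, Or.inr ⟨?_, div_ne_zero hβ0 hb⟩⟩
            rw [hef, smul_sub, smul_smul, smul_smul, div_mul_cancel₀ _ hb]
            have : β / B v t * B u t = α := by field_simp; linear_combination -hdet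
            rw [this]
      obtain ⟨a, (⟨ha, h0⟩ | ⟨h0, ha⟩)⟩ := hprop
      · rw [zero_smul] at h0
        have h1 := (smul_eq_zero.mp h0).resolve_left ha
        have hβ0 : β = 0 := by
          by_contra hβ0
          apply hpar
          refine ⟨β⁻¹ * α, ?_⟩
          rw [mul_smul, ← sub_eq_zero.mp h1, smul_smul, inv_mul_cancel₀ hβ0, one_smul]
        have hα0 : α = 0 := by
          rw [hβ0, zero_smul, zero_sub, neg_eq_zero] at h1
          exact (smul_eq_zero.mp h1).resolve_right hv0
        apply he0
        apply hnfix e heU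
        have hre' : e = B v t • r u - B u t • r v := by
          rw [← hre, hef]; simp
        rw [hα0, zero_smul, sub_eq_zero] at hα
        rw [hβ0, zero_smul, sub_eq_zero] at hβ
        rw [hre', map_sub, map_smul, map_smul, hα, hβ]
      · apply he0
        apply hnfix e heU
        have h1 : (β • r u - α • r v) = a • e := by
          have h11 : r (a • e) = a • e := by rw [map_smul, hre]
          rw [← h11, ← h0]; simp
        rw [h1, map_smul] at hfc
        exact smul_right_injective V ha hfc
    · -- e ⊥ u, v
      apply he0
      have h1 : B e u * B v t - B e v * B u t = 0 := by
        have : B e (B v t • u - B u t • v) = 0 := by rw [← hef]; exact hee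
        simp only [map_sub, map_smul, smul_eq_mul] at this
        linear_combination this
      have h3 : β * B e u - α * B e v = 0 := by
        simpa only [map_sub, map_smul, smul_eq_mul] using hf2
      apply hndU e heU
      · have : (B v t * α - B u t * β) * B e u = 0 := by linear_combination α * h1 - B u t * h3
        exact (mul_eq_zero.mp this).resolve_left hdet
      · have : (B v t * α - B u t * β) * B e v = 0 := by linear_combination β * h1 - B v t * h3
        exact (mul_eq_zero.mp this).resolve_left hdet
  have hlam' : ∀ g ∈ R, ∃ ε : F, (ε = 1 ∨ ε = -1) ∧ (g * c * g⁻¹) e = ε • e := by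
    intro g hg
    obtain ⟨a, ha⟩ := hlam g hg
    refine ⟨a, ?_, ha⟩
    have hdR : g * c * g⁻¹ ∈ R := R.mul_mem (R.mul_mem hg hcR) (R.inv_mem hg)
    have h1 := h.isom hdR e e
    rw [ha] at h1
    simp only [map_smul, LinearMap.smul_apply, smul_eq_mul] at h1
    exact sq_one hee h1
  have hce : c e = -e := by
    obtain ⟨ε, hε, h1⟩ := hlam' 1 R.one_mem
    rw [h1c] at h1
    rcases hε with rfl | rfl
    · rw [one_smul] at h1
      exact absurd (hnfix e heU h1) he0
    · rw [h1]; module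
  refine ⟨e, c, hcR, r, hrR, hee, hce, ?_, ?_, hlam'⟩
  · rw [hrinv, LinearEquiv.mul_apply, LinearEquiv.mul_apply, hre, hce, map_neg, hre]
  · intro x h1 h3
    have hneg : ∀ x, c x = -x → x ∈ U := by
      intro x hx
      have := refl2_sub_mem B u v x
      rw [← hc, hx] at this
      have h5 : -x - x = (-2 : F) • x := by module
      rw [h5] at this
      exact (U.smul_mem_iff (neg_ne_zero.mpr h.two)).mp this
    apply hInter x (hneg x h1)
    apply hneg
    rw [hrinv, LinearEquiv.mul_apply, LinearEquiv.mul_apply] at h3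
    have := congrArg r h3
    rw [hrr, map_neg] at this
    exact this

end RootSys
end HallOrth
end

section
namespace HallOrth
variable {F : Type*} [Field F] {V : Type*} [AddCommGroup V] [Module F V]
namespace RootSys
variable {B : V →ₗ[F] V →ₗ[F] F} {R : Subgroup (V ≃ₗ[F] V)} {Φ : Set V}

theorem eq_neg_of_sq (h2 : (2 : F) ≠ 0) {a : F} (h : a = -a) : a = 0 := by
  have : 2 * a = 0 := by linear_combination h
  exact (mul_eq_zero.mp this).resolve_left h2

theorem dich (h : RootSys B R Φ) [FiniteDimensional F V] [Group.IsSolvable R]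
    (hd : 5 ≤ Module.finrank F V) :
    ∃ e : V, B e e ≠ 0 ∧ ∀ g ∈ R, ∀ k ∈ R,
      Submodule.span F {g e} = Submodule.span F {k e} ∨ B (g e) (k e) = 0 := by
  obtain ⟨e, c, hc, r, hr, hee, hce, hce', hsp, hpm⟩ := h.stepB hd
  refine ⟨e, hee, ?_⟩
  have hinv : ∀ (g : V ≃ₗ[F] V) x, g ((g⁻¹ : V ≃ₗ[F] V) x) = x := fun g x => g.apply_symm_apply x
  have key : ∀ g ∈ R, (∃ a : F, g e = a • e) ∨ B (g e) e = 0 := by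
    intro g hg
    have hc' : r * c * r⁻¹ ∈ R := R.mul_mem (R.mul_mem hr hc) (R.inv_mem hr)
    have h1 : ∃ ε : F, (ε = 1 ∨ ε = -1) ∧ c (g e) = ε • g e := by
      obtain ⟨ε, hε, h1⟩ := hpm g⁻¹ (R.inv_mem hg)
      refine ⟨ε, hε, ?_⟩
      rw [← map_smul, ← h1, inv_inv, LinearEquiv.mul_apply, LinearEquiv.mul_apply, hinv]
    have h2 : ∃ ε : F, (ε = 1 ∨ ε = -1) ∧ (r * c * r⁻¹) (g e) = ε • g e := by
      obtain ⟨ε, hε, h1⟩ := hpm (g⁻¹ * r) (R.mul_mem (R.inv_mem hg) hr)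
      refine ⟨ε, hε, ?_⟩
      have h3 : g⁻¹ * r * c * (g⁻¹ * r)⁻¹ = g⁻¹ * ((r * c * r⁻¹) * g) := by group
      rw [← map_smul, ← h1, h3, LinearEquiv.mul_apply g⁻¹, hinv]
      rfl
    obtain ⟨ε, hε, h1⟩ := h1
    obtain ⟨δ, hδ, h2⟩ := h2
    rcases hε with rfl | rfl
    · right
      rw [one_smul] at h1
      have h3 := h.isom hc (g e) e
      rw [h1, hce, map_neg] at h3
      exact eq_neg_of_sq h.two h3.symm
    rcases hδ with rfl | rfl
    · right
      rw [one_smul] at h2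
      have h3 := h.isom hc' (g e) e
      rw [h2, hce', map_neg] at h3
      exact eq_neg_of_sq h.two h3.symm
    · left
      exact hsp _ (by rw [h1]; module) (by rw [h2]; module)
  intro g hg k hk
  rcases key (k⁻¹ * g) (R.mul_mem (R.inv_mem hk) hg) with ⟨a, ha⟩ | h0
  · left
    have h1 : g e = a • k e := by
      rw [← map_smul, ← ha, LinearEquiv.mul_apply, hinv]
    have ha0 : a ≠ 0 := by
      rintro rfl
      rw [zero_smul] at h1
      have := h.isom hg e e
      rw [h1] at this
      simp at this
      exact hee this.symm
    rw [h1]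
    exact Submodule.span_singleton_smul_eq (IsUnit.mk0 a ha0) (k e)
  · right
    have h4 := h.isom hk ((k⁻¹ * g) e) e
    rw [LinearEquiv.mul_apply] at h0
    rw [LinearEquiv.mul_apply, hinv] at h4
    rw [h4]; exact h0

open Pointwise in
theorem not_big (h : RootSys B R Φ) [FiniteDimensional F V] [Finite F] [hsol : Group.IsSolvable R]
    (hd : 5 ≤ Module.finrank F V) : False := by
  classical
  obtain ⟨e, hee, hdich⟩ := h.dich hd
  have : Finite V := Module.finite_of_finite F
  have : Finite (Submodule F V) := inferInstance
  let L : V → Submodule F V := fun x => Submodule.span F {x}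
  have hL : ∀ (g : R) x, g • L x = L ((g : V ≃ₗ[F] V) x) := by
    intro g x
    apply Submodule.ext
    intro y
    have hdef : y ∈ g • L x ↔ ∃ z ∈ L x, (g : V ≃ₗ[F] V) z = y := Iff.rfl
    rw [hdef]
    simp only [L, Submodule.mem_span_singleton]
    constructor
    · rintro ⟨_, ⟨a, rfl⟩, rfl⟩
      refine ⟨a, ?_⟩
      exact ((g : V ≃ₗ[F] V).map_smul a x).symm
    · rintro ⟨a, rfl⟩
      exact ⟨a • x, ⟨a, rfl⟩, (g : V ≃ₗ[F] V).map_smul a x⟩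
  let Λ := MulAction.orbit R (L e)
  have : Finite Λ := inferInstance
  have hmem : ∀ g : R, L ((g : V ≃ₗ[F] V) e) ∈ Λ := fun g => ⟨g, hL g e⟩
  have hex : ∀ l : Λ, ∃ g : R, (l : Submodule F V) = L ((g : V ≃ₗ[F] V) e) := by
    rintro ⟨l, g, hg⟩
    exact ⟨g, by rw [← hL]; exact hg.symm⟩
  have hself : ∀ x, x ∈ L x := fun x => Submodule.mem_span_singleton_self x
  let φ := MulAction.toPermHom R Λ
  have hφ : ∀ (g : R) (l : Λ), ((φ g l : Λ) : Submodule F V) = g • (l : Submodule F V) := fun g l => rfl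
  -- swaps
  have hsw : ∀ t (ht : t ∈ Φ), φ ⟨refl B t, h.mem t ht⟩ = 1 ∨ (φ ⟨refl B t, h.mem t ht⟩).IsSwap := by
    intro t ht
    set T : R := ⟨refl B t, h.mem t ht⟩ with hT
    by_cases hall : ∀ g : R, L (refl B t ((g : V ≃ₗ[F] V) e)) = L ((g : V ≃ₗ[F] V) e)
    · left
      ext1 l
      apply Subtype.ext
      obtain ⟨g, hg⟩ := hex l
      rw [hφ, hg, hL, hall, Equiv.Perm.one_apply, hg]
    · right
      push Not at hall
      obtain ⟨g, hg⟩ := hall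
      let x : Λ := ⟨L ((g : V ≃ₗ[F] V) e), hmem g⟩
      let y : Λ := ⟨L (refl B t ((g : V ≃ₗ[F] V) e)), hmem (T * g)⟩
      have hxy : x ≠ y := fun h0 => hg (congrArg Subtype.val h0).symm
      refine ⟨x, y, hxy, ?_⟩
      have hgt : B ((g : V ≃ₗ[F] V) e) t ≠ 0 := by
        intro h0; apply hg; rw [refl_of_orth B h0]
      ext1 l
      rw [Equiv.swap_apply_def]
      split_ifs with h1 h2
      · apply Subtype.ext
        rw [hφ, h1, hL]
      · apply Subtype.ext
        rw [hφ, h2, hL]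
        change L (refl B t (refl B t ((g : V ≃ₗ[F] V) e))) = _
        rw [refl_refl]
      · apply Subtype.ext
        obtain ⟨k, hk⟩ := hex l
        rw [hφ, hk, hL]
        have h3 : B ((k : V ≃ₗ[F] V) e) ((g : V ≃ₗ[F] V) e) = 0 := by
          rcases hdich k k.2 g g.2 with h4 | h4
          · exact absurd (Subtype.ext (hk.trans h4)) h1
          · exact h4
        have h5 : B ((k : V ≃ₗ[F] V) e) (refl B t ((g : V ≃ₗ[F] V) e)) = 0 := by
          rcases hdich k k.2 (T * g : R) (T * g).2 with h4 | h4
          · exact absurd (Subtype.ext (hk.trans h4)) h2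
          · exact h4
        rw [refl_apply, map_sub, h3, map_smul, zero_sub, neg_eq_zero, smul_eq_mul] at h5
        have h6 := (mul_eq_zero.mp h5).resolve_left (mul_ne_zero (div_ne_zero h.two (h.ne t ht)) hgt)
        change L (refl B t ((k : V ≃ₗ[F] V) e)) = _
        rw [refl_of_orth B h6]
  let S : Set (Equiv.Perm Λ) := {σ | σ.IsSwap ∧ σ ∈ φ.range}
  have hrange : φ.range ≤ Subgroup.closure S := by
    rintro _ ⟨⟨g, hgR⟩, rfl⟩
    have hg := h.gen hgR
    have hcl : Subgroup.closure (refl B '' Φ) ≤ R := by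
      rw [Subgroup.closure_le]; rintro _ ⟨v, hv, rfl⟩; exact h.mem v hv
    induction hg using Subgroup.closure_induction with
    | mem x hx =>
      obtain ⟨t, ht, rfl⟩ := hx
      rcases hsw t ht with h1 | h1
      · rw [h1]; exact Subgroup.one_mem _
      · exact Subgroup.subset_closure ⟨h1, ⟨_, rfl⟩⟩
    | one => 
      have : φ ⟨1, hgR⟩ = 1 := map_one φ
      rw [this]; exact Subgroup.one_mem _
    | mul a b ha hb iha ihb =>
      have : φ ⟨a * b, hgR⟩ = φ ⟨a, hcl ha⟩ * φ ⟨b, hcl hb⟩ := map_mul φ ⟨a, hcl ha⟩ ⟨b, hcl hb⟩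
      rw [this]
      exact Subgroup.mul_mem _ (iha _) (ihb _)
    | inv a ha iha =>
      have : φ ⟨a⁻¹, hgR⟩ = (φ ⟨a, hcl ha⟩)⁻¹ := map_inv φ ⟨a, hcl ha⟩
      rw [this]
      exact Subgroup.inv_mem _ (iha _)
  have htr : MulAction.IsPretransitive (Subgroup.closure S) Λ := by
    refine ⟨fun a b => ?_⟩
    obtain ⟨g, hg⟩ := MulAction.exists_smul_eq R a b
    exact ⟨⟨φ g, hrange ⟨g, rfl⟩⟩, hg⟩
  have htop := closure_of_isSwap_of_isPretransitive (S := S) (fun σ hσ => hσ.1)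
  have hsurj : Function.Surjective φ := by
    rw [← MonoidHom.range_eq_top, ← top_le_iff, ← htop, Subgroup.closure_le]
    exact fun σ hσ => hσ.2
  have hsP : Group.IsSolvable (Equiv.Perm Λ) := Group.isSolvable_of_surjective hsurj
  refine Equiv.Perm.not_isSolvable Λ ?_ hsP
  -- cardinality
  have : Fintype Λ := Fintype.ofFinite Λ
  choose γ hγ using hex
  let f : Λ → V := fun l => ((γ l : R) : V ≃ₗ[F] V) e
  have hspan : Submodule.span F (Set.range f) = ⊤ := by
    have hin : ∀ g : R, (g : V ≃ₗ[F] V) e ∈ Submodule.span F (Set.range f) := by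
      intro g
      have h1 := hγ ⟨_, hmem g⟩
      have h2 : (g : V ≃ₗ[F] V) e ∈ L (f ⟨_, hmem g⟩) := by
        change L ((g : V ≃ₗ[F] V) e) = _ at h1
        change _ ∈ L (((γ ⟨_, hmem g⟩ : R) : V ≃ₗ[F] V) e)
        rw [← h1]; exact hself _
      obtain ⟨a, ha⟩ := Submodule.mem_span_singleton.mp h2
      rw [← ha]
      exact Submodule.smul_mem _ _ (Submodule.subset_span ⟨_, rfl⟩)
    apply h.inv_top
    · intro hb
      have h1 := hin 1
      rw [hb, Submodule.mem_bot] at h1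
      apply hee
      have : e = 0 := h1
      rw [this]; simp
    · intro v hv x hx
      induction hx using Submodule.span_induction with
      | mem x hx =>
        obtain ⟨l, rfl⟩ := hx
        exact hin (⟨refl B v, h.mem v hv⟩ * γ l)
      | zero => rw [map_zero]; exact Submodule.zero_mem _
      | add x y _ _ hx hy => rw [map_add]; exact Submodule.add_mem _ hx hy
      | smul a x _ hx => rw [map_smul]; exact Submodule.smul_mem _ _ hx
  have h3 : Module.finrank F (Submodule.span F (Set.range f)) ≤ Fintype.card Λ :=
    finrank_range_le_card f
  rw [hspan, finrank_top] at h3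
  rw [Cardinal.mk_fintype]
  exact_mod_cast hd.trans h3

end RootSys
end HallOrth
end

section
namespace HallOrth
variable {F : Type*} [Field F] {V : Type*} [AddCommGroup V] [Module F V]

def IsRoot (B : V →ₗ[F] V →ₗ[F] F) (H : Subgroup (V ≃ₗ[F] V)) (v : V) : Prop :=
  B v v ≠ 0 ∧ refl B v ∈ H

structure Setup {ι : Type*} (B : V →ₗ[F] V →ₗ[F] F) (H : Subgroup (V ≃ₗ[F] V))
    (b : Module.Basis ι F V) : Prop where
  symm : ∀ x y, B x y = B y x
  nd : ∀ v, (∀ w, B v w = 0) → v = 0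
  two : (2 : F) ≠ 0
  sim : ∀ g ∈ H, ∃ μ : F, μ ≠ 0 ∧ ∀ x y, B (g x) (g y) = μ * B x y
  orth : ∀ i j, i ≠ j → B (b i) (b j) = 0
  root : ∀ i, IsRoot B H (b i)
  nounip : ∀ u e, B e e = 0 → B u e = 0 → IsRoot B H u → IsRoot B H (u + e) → e = 0

/-- the block of vectors supported on the basis vectors with label `i` -/
def blk {ι I : Type*} (B : V →ₗ[F] V →ₗ[F] F) (b : Module.Basis ι F V) (L : ι → I) (i : I) :
    Submodule F V where
  carrier := {v | ∀ j, L j ≠ i → B v (b j) = 0}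
  zero_mem' := by intro j _; simp
  add_mem' := by intro x y hx hy j hj; simp [hx j hj, hy j hj]
  smul_mem' := by intro a x hx j hj; simp [hx j hj]

theorem mem_blk {ι I : Type*} {B : V →ₗ[F] V →ₗ[F] F} {b : Module.Basis ι F V} {L : ι → I} {i : I}
    {v : V} : v ∈ blk B b L i ↔ ∀ j, L j ≠ i → B v (b j) = 0 := Iff.rfl

namespace Setup
variable {ι : Type*} {B : V →ₗ[F] V →ₗ[F] F} {H : Subgroup (V ≃ₗ[F] V)} {b : Module.Basis ι F V}

theorem ext0 (h : Setup B H b) {v : V} (hv : ∀ j, B v (b j) = 0) : v = 0 := by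
  apply h.nd
  intro w
  have : B v = 0 := b.ext fun j => by simpa using hv j
  rw [this]; rfl

theorem bn (h : Setup B H b) (i : ι) : B (b i) (b i) ≠ 0 := (h.root i).1

theorem root_map (h : Setup B H b) {g : V ≃ₗ[F] V} (hg : g ∈ H) {v : V} (hv : IsRoot B H v) :
    IsRoot B H (g v) := by
  obtain ⟨μ, hμ, hgμ⟩ := h.sim g hg
  refine ⟨by rw [hgμ]; exact mul_ne_zero hμ hv.1, ?_⟩
  rw [← refl_conj B g μ hμ hgμ]
  exact H.mul_mem (H.mul_mem hg hv.2) (H.inv_mem hg)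

theorem repr [Fintype ι] (h : Setup B H b) (v : V) :
    v = ∑ j, (B v (b j) / B (b j) (b j)) • b j := by
  classical
  rw [← sub_eq_zero]
  apply h.ext0
  intro i
  rw [map_sub, LinearMap.sub_apply, map_sum, LinearMap.sum_apply, Finset.sum_eq_single i]
  · simp [h.bn i]
  · intro j _ hj
    simp [h.orth j i hj]
  · simp

theorem form_eq [Fintype ι] (h : Setup B H b) (v w : V) :
    B v w = ∑ j, B v (b j) / B (b j) (b j) * B w (b j) := by
  nth_rewrite 1 [h.repr v]
  rw [map_sum, LinearMap.sum_apply]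
  apply Finset.sum_congr rfl
  intro j _
  rw [map_smul, LinearMap.smul_apply, smul_eq_mul, h.symm (b j) w]

theorem b_mem (h : Setup B H b) {I : Type*} (L : ι → I) (j : ι) : b j ∈ blk B b L (L j) := by
  intro i hi
  apply h.orth
  rintro rfl; exact hi rfl

theorem blk_orth [Fintype ι] (h : Setup B H b) {I : Type*} {L : ι → I} {i i' : I} (hi : i ≠ i') {v w : V}
    (hv : v ∈ blk B b L i) (hw : w ∈ blk B b L i') : B v w = 0 := by
  rw [h.form_eq]
  apply Finset.sum_eq_zero
  intro j _
  by_cases hj : L j = i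
  · rw [hw j (by rw [hj]; exact hi), mul_zero]
  · rw [hv j hj]; simp

theorem blk_inter (h : Setup B H b) {I : Type*} {L : ι → I} {i i' : I} {v : V} (hv0 : v ≠ 0)
    (hv : v ∈ blk B b L i) (hw : v ∈ blk B b L i') : i = i' := by
  by_contra hi
  apply hv0
  apply h.ext0
  intro j
  by_cases hj : L j = i
  · exact hw j (by rw [hj]; exact hi)
  · exact hv j hj

/-- linkedness -/
def link (B : V →ₗ[F] V →ₗ[F] F) (H : Subgroup (V ≃ₗ[F] V)) (b : Module.Basis ι F V) (i j : ι) : Prop :=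
  ∃ v, IsRoot B H v ∧ B v (b i) ≠ 0 ∧ B v (b j) ≠ 0

def Cls (B : V →ₗ[F] V →ₗ[F] F) (H : Subgroup (V ≃ₗ[F] V)) (b : Module.Basis ι F V) : Type _ :=
  Quot (link B H b)

def cl (B : V →ₗ[F] V →ₗ[F] F) (H : Subgroup (V ≃ₗ[F] V)) (b : Module.Basis ι F V) (i : ι) : Cls B H b :=
  Quot.mk _ i

theorem root_blk (h : Setup B H b) {v : V} (hv : IsRoot B H v) :
    ∃ κ, v ∈ blk B b (cl B H b) κ := by
  have hv0 : v ≠ 0 := by rintro rfl; exact hv.1 (by simp)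
  have : ∃ j, B v (b j) ≠ 0 := by
    by_contra hcon
    push Not at hcon
    exact hv0 (h.ext0 hcon)
  obtain ⟨j, hj⟩ := this
  refine ⟨cl B H b j, fun i hi => ?_⟩
  by_contra hvi
  exact hi (Quot.sound ⟨v, hv, hvi, hj⟩)

theorem ind_cl {P : ι → Prop} (hP : ∀ i j, link B H b i j → (P i ↔ P j)) {i j : ι}
    (hij : cl B H b i = cl B H b j) (hi : P i) : P j := by
  let Q : Cls B H b → Prop := Quot.lift P fun i j hl => propext (hP i j hl)
  have h1 : Q (cl B H b i) := hi
  rw [hij] at h1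
  exact h1

theorem blk_le [Fintype ι] (h : Setup B H b) {I : Type*} {L : ι → I} {i : I} {X : Submodule F V}
    (hX : ∀ j, L j = i → b j ∈ X) : blk B b L i ≤ X := by
  intro v hv
  rw [h.repr v]
  apply Submodule.sum_mem
  intro j _
  by_cases hj : L j = i
  · exact X.smul_mem _ (hX j hj)
  · rw [hv j hj]; simp

/-- elements of `H` map class blocks to class blocks -/
theorem map_blk [Fintype ι] (h : Setup B H b) {g : V ≃ₗ[F] V} (hg : g ∈ H) (κ : Cls B H b) :
    ∃ κ', ∀ v ∈ blk B b (cl B H b) κ, g v ∈ blk B b (cl B H b) κ' := by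
  obtain ⟨i, rfl⟩ := Quot.exists_rep κ
  obtain ⟨κ', hκ'⟩ := h.root_blk (h.root_map hg (h.root i))
  refine ⟨κ', ?_⟩
  have key : ∀ j, cl B H b i = cl B H b j → g (b j) ∈ blk B b (cl B H b) κ' := by
    intro j hij
    refine ind_cl (P := fun j => g (b j) ∈ blk B b (cl B H b) κ') ?_ hij hκ'
    rintro i j ⟨v, hv, hvi, hvj⟩
    obtain ⟨μ, hμ, hgμ⟩ := h.sim g hg
    obtain ⟨κv, hκv⟩ := h.root_blk (h.root_map hg hv)
    have aux : ∀ i, B v (b i) ≠ 0 → (g (b i) ∈ blk B b (cl B H b) κ' ↔ κv = κ') := by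
      intro i hi
      have hn : B (g v) (g (b i)) ≠ 0 := by rw [hgμ]; exact mul_ne_zero hμ hi
      constructor
      · intro hm
        by_contra hne
        exact hn (h.blk_orth hne hκv hm)
      · rintro rfl
        obtain ⟨κ2, hκ2⟩ := h.root_blk (h.root_map hg (h.root i))
        by_cases hne : κv = κ2
        · rw [hne]; exact hκ2
        · exact absurd (h.blk_orth hne hκv hκ2) hn
    rw [aux i hvi, aux j hvj]
  have : blk B b (cl B H b) (Quot.mk _ i) ≤ (blk B b (cl B H b) κ').comap (g : V →ₗ[F] V) :=
    h.blk_le fun j hj => key j hj.symm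
  exact this

/-- classes have at most four elements -/
theorem card_le [Fintype ι] [Finite F] [hsol : Group.IsSolvable H] (h : Setup B H b) (κ : Cls B H b)
    (s : Finset ι) (hs : ∀ j ∈ s, cl B H b j = κ) : s.card ≤ 4 := by
  by_contra hcard
  push Not at hcard
  obtain ⟨j0, hj0⟩ := Finset.card_pos.mp (by omega : 0 < s.card)
  have : FiniteDimensional F V := Module.Finite.of_basis b
  set W := blk B b (cl B H b) κ with hW
  let BW : W →ₗ[F] W →ₗ[F] F := B.domRestrict₁₂ W W
  have hBW : ∀ x y : W, BW x y = B x y := fun x y => rfl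
  let ΦW : Set W := {w | IsRoot B H (w : V)}
  let RW : Subgroup (W ≃ₗ[F] W) := Subgroup.closure (refl BW '' ΦW)
  have hrefl : ∀ (u x : W), ((refl BW u x : W) : V) = refl B (u : V) (x : V) := by
    intro u x
    rw [refl_apply, refl_apply]; simp [hBW]
  let S : Subgroup (H × (W ≃ₗ[F] W)) :=
    { carrier := {gg | ∀ w : W, ((gg.1 : V ≃ₗ[F] V) (w : V)) = (gg.2 w : W)}
      one_mem' := fun w => rfl
      mul_mem' := by
        intro x y hx hy w
        have h1 := hy w
        have h2 := hx (y.2 w)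
        rw [← h1] at h2
        exact h2
      inv_mem' := by
        intro x hx w
        have h1 := hx ((x.2⁻¹ : W ≃ₗ[F] W) w)
        have h2 : x.2 ((x.2⁻¹ : W ≃ₗ[F] W) w) = w := x.2.apply_symm_apply w
        rw [h2] at h1
        have h3 := congrArg ((x.1⁻¹ : H) : V ≃ₗ[F] V) h1
        have h4 : ((x.1⁻¹ : H) : V ≃ₗ[F] V) ((x.1 : V ≃ₗ[F] V) (((x.2⁻¹ : W ≃ₗ[F] W) w : W) : V)) =
            (((x.2⁻¹ : W ≃ₗ[F] W) w : W) : V) := (x.1 : V ≃ₗ[F] V).symm_apply_apply _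
        rw [h4] at h3
        exact h3.symm }
  have hSsol : Group.IsSolvable S := by
    refine Group.isSolvable_of_isSolvable_injective (f := (MonoidHom.fst H (W ≃ₗ[F] W)).comp S.subtype) ?_
    rintro ⟨x, hx⟩ ⟨y, hy⟩ hxy
    have h1 : x.1 = y.1 := hxy
    apply Subtype.ext
    apply Prod.ext h1
    ext w
    have h2 := hx w
    have h3 := hy w
    rw [← h2, ← h3, h1]
  let ψ : S →* (W ≃ₗ[F] W) := (MonoidHom.snd H (W ≃ₗ[F] W)).comp S.subtype
  have hle : RW ≤ ψ.range := by
    rw [Subgroup.closure_le]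
    rintro _ ⟨v, hv, rfl⟩
    exact ⟨⟨(⟨refl B (v : V), hv.2⟩, refl BW v), fun w => (hrefl v w).symm⟩, rfl⟩
  have hpair : ∀ g' ∈ RW, ∃ g ∈ H, ∀ w : W, g (w : V) = (g' w : W) := by
    intro g' hg'
    obtain ⟨x, hx⟩ := hle hg'
    refine ⟨x.1.1, x.1.1.2, fun w => ?_⟩
    rw [← hx]; exact x.2 w
  have hrs : Group.IsSolvable ψ.range := Group.isSolvable_of_surjective ψ.rangeRestrict_surjective
  have hRW : Group.IsSolvable RW :=
    Group.isSolvable_of_isSolvable_injective (Subgroup.inclusion_injective hle)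
  have hbW : ∀ j, cl B H b j = κ → b j ∈ W := by
    rintro j rfl; exact h.b_mem _ j
  have hRS : RootSys BW RW ΦW := by
    refine ⟨fun x y => h.symm _ _, ?_, h.two, fun v hv => hv.1, fun v hv => Subgroup.subset_closure ⟨v, hv, rfl⟩,
      le_rfl, ?_, ?_, ?_, ?_⟩
    · intro v hv
      apply Subtype.ext
      apply h.ext0
      intro j
      by_cases hj : cl B H b j = κ
      · exact hv ⟨b j, hbW j hj⟩
      · exact v.2 j hj
    · intro g' hg' v hv
      obtain ⟨g, hg, hgg⟩ := hpair g' hg'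
      change IsRoot B H _
      rw [← hgg]
      exact h.root_map hg hv
    · intro X hX hroots
      have hlink : ∀ i j, link B H b i j →
          ((∃ hi : b i ∈ W, (⟨b i, hi⟩ : W) ∈ X) ↔ (∃ hj : b j ∈ W, (⟨b j, hj⟩ : W) ∈ X)) := by
        have aux : ∀ i v, IsRoot B H v → B v (b i) ≠ 0 →
            ((∃ hi : b i ∈ W, (⟨b i, hi⟩ : W) ∈ X) ↔ ∃ hv : v ∈ W, (⟨v, hv⟩ : W) ∈ X) := by
          intro i v hv hvi
          obtain ⟨κv, hκv⟩ := h.root_blk hv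
          have hi' := h.b_mem (cl B H b) i
          have hcl : cl B H b i = κv := by
            by_contra hne
            exact hvi (h.blk_orth (Ne.symm hne) hκv hi')
          constructor
          · rintro ⟨hi, hiX⟩
            have hk : κv = κ := by
              rw [← hcl]
              exact h.blk_inter (b.ne_zero i) hi' hi
            have hvW : v ∈ W := by rw [hW, ← hk]; exact hκv
            refine ⟨hvW, ?_⟩
            rcases hroots ⟨v, hvW⟩ hv with h1 | h1
            · exact h1
            · exact absurd (by rw [h.symm]; exact h1 _ hiX) hvi
          · rintro ⟨hvW, hvX⟩
            have hk : κv = κ := by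
              refine h.blk_inter ?_ hκv hvW
              rintro rfl; exact hv.1 (by simp)
            have hi : b i ∈ W := hbW i (hcl.trans hk)
            refine ⟨hi, ?_⟩
            rcases hroots ⟨b i, hi⟩ (h.root i) with h1 | h1
            · exact h1
            · exact absurd (h1 _ hvX) hvi
        rintro i j ⟨v, hv, hvi, hvj⟩
        rw [aux i v hv hvi, aux j v hv hvj]
      by_cases h0 : ∃ hi : b j0 ∈ W, (⟨b j0, hi⟩ : W) ∈ X
      · have hall : ∀ j, cl B H b j = κ → ∃ hi : b j ∈ W, (⟨b j, hi⟩ : W) ∈ X := fun j hj =>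
          ind_cl (P := fun i => ∃ hi : b i ∈ W, (⟨b i, hi⟩ : W) ∈ X) hlink ((hs j0 hj0).trans hj.symm) h0
        have hle2 : W ≤ X.map W.subtype := by
          apply h.blk_le
          intro j hj
          obtain ⟨hi, hX⟩ := hall j hj
          exact ⟨⟨b j, hi⟩, hX, rfl⟩
        rw [eq_top_iff]
        intro x _
        obtain ⟨y, hy, hyx⟩ := hle2 x.2
        have : y = x := Subtype.ext hyx
        rw [← this]; exact hy
      · exfalso
        apply hX
        rw [eq_bot_iff]
        intro x hx
        rw [Submodule.mem_bot]
        apply Subtype.ext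
        apply h.ext0
        intro j
        by_cases hj : cl B H b j = κ
        · rcases hroots ⟨b j, hbW j hj⟩ (h.root j) with h1 | h1
          · exact absurd (ind_cl (P := fun i => ∃ hi : b i ∈ W, (⟨b i, hi⟩ : W) ∈ X) hlink
              (hj.trans (hs j0 hj0).symm) ⟨_, h1⟩) h0
          · exact h1 x hx
        · exact x.2 j hj
    · intro u hu e h1 h2 h3
      exact Subtype.ext (h.nounip u e h1 h2 hu h3)
    · exact ⟨⟨b j0, hbW j0 (hs j0 hj0)⟩, h.root j0⟩
  refine hRS.not_big (hsol := hRW) ?_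
  have hli : LinearIndependent F (fun j : s => (⟨b j, hbW j (hs j j.2)⟩ : W)) := by
    have h1 : LinearIndependent F (fun j : s => b (j : ι)) :=
      b.linearIndependent.comp _ Subtype.val_injective
    exact LinearIndependent.of_comp W.subtype h1
  have := hli.fintype_card_le_finrank
  simp at this
  omega

end Setup
end HallOrth
end

section
namespace HallOrth
variable {F : Type*} [Field F] {V : Type*} [AddCommGroup V] [Module F V]
namespace Setup
variable {ι : Type} {B : V →ₗ[F] V →ₗ[F] F} {H : Subgroup (V ≃ₗ[F] V)} {b : Module.Basis ι F V}

theorem blk_inj {I J : Type*} (L : ι → I) {e : I → J} (he : Function.Injective e) (i : I) :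
    blk B b (e ∘ L) (e i) = blk B b L i := by
  ext v
  simp only [mem_blk, Function.comp, ne_eq, he.eq_iff]

def sing (κ : Cls B H b) : Prop := ∀ i j, cl B H b i = κ → cl B H b j = κ → i = j

theorem sing_map [Fintype ι] (h : Setup B H b) {g : V ≃ₗ[F] V} (hg : g ∈ H) {κ κ' : Cls B H b}
    (hκ : sing κ) (h2 : ∀ v ∈ blk B b (cl B H b) κ', (g⁻¹ : V ≃ₗ[F] V) v ∈ blk B b (cl B H b) κ) :
    sing κ' := by
  intro i j hi hj
  by_contra hij
  obtain ⟨a, rfl⟩ := Quot.exists_rep κ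
  have hle : blk B b (cl B H b) (Quot.mk _ a) ≤ Submodule.span F {b a} := by
    apply h.blk_le
    intro c hc
    rw [hκ c a hc rfl]
    exact Submodule.mem_span_singleton_self _
  have key : ∀ i, cl B H b i = κ' → ∃ x : F, b i = x • g (b a) := by
    rintro i rfl
    obtain ⟨x, hx⟩ := Submodule.mem_span_singleton.mp (hle (h2 _ (h.b_mem _ i)))
    refine ⟨x, ?_⟩
    rw [← map_smul, hx]
    exact (g.apply_symm_apply (b i)).symm
  obtain ⟨x, hx⟩ := key i hi
  obtain ⟨y, hy⟩ := key j hj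
  have h0 := h.orth i j hij
  obtain ⟨μ, hμ, hgμ⟩ := h.sim g hg
  rw [hx, hy, map_smul, map_smul, LinearMap.smul_apply, smul_eq_mul, smul_eq_mul, hgμ] at h0
  have hx0 : x ≠ 0 := by rintro rfl; exact b.ne_zero i (by rw [hx, zero_smul])
  have hy0 : y ≠ 0 := by rintro rfl; exact b.ne_zero j (by rw [hy, zero_smul])
  have := h.bn a
  simp_all

theorem exists_perm [Fintype ι] (h : Setup B H b) {g : V ≃ₗ[F] V} (hg : g ∈ H) :
    ∃ τ : Equiv.Perm (Cls B H b), (∀ κ, ∀ v ∈ blk B b (cl B H b) κ, g v ∈ blk B b (cl B H b) (τ κ)) ∧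
      (∀ κ, sing κ ↔ sing (τ κ)) := by
  choose f hf using h.map_blk hg
  choose f' hf' using h.map_blk (H.inv_mem hg)
  have h1 : ∀ κ, f' (f κ) = κ := by
    intro κ
    obtain ⟨i, rfl⟩ := Quot.exists_rep κ
    have h2 := hf' _ _ (hf (Quot.mk _ i) (b i) (h.b_mem _ i))
    have h3 : (g⁻¹ : V ≃ₗ[F] V) (g (b i)) = b i := g.symm_apply_apply _
    rw [h3] at h2
    exact h.blk_inter (b.ne_zero i) h2 (h.b_mem _ i)
  have h2 : ∀ κ, f (f' κ) = κ := by
    intro κ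
    obtain ⟨i, rfl⟩ := Quot.exists_rep κ
    have h2 := hf _ _ (hf' (Quot.mk _ i) (b i) (h.b_mem _ i))
    have h3 : g ((g⁻¹ : V ≃ₗ[F] V) (b i)) = b i := g.apply_symm_apply _
    rw [h3] at h2
    exact h.blk_inter (b.ne_zero i) h2 (h.b_mem _ i)
  refine ⟨⟨f, f', h1, h2⟩, hf, fun κ => ⟨fun hs => ?_, fun hs => ?_⟩⟩
  · refine h.sing_map hg hs ?_
    intro v hv
    have := hf' _ v hv
    change _ ∈ blk B b _ (f' (f κ)) at this
    rwa [h1] at this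
  · refine h.sing_map (H.inv_mem hg) hs ?_
    intro v hv
    rw [inv_inv]
    exact hf κ v hv

theorem exists_label0 [Fintype ι] [Finite F] [Group.IsSolvable H] (h : Setup B H b)
    (m : ι → ι) (hfix : ∀ s : Finset ι, (∀ j ∈ s, m j = j) → s.card ≤ 2)
    (hm : ∀ j, IsRoot B H (b j + b (m j))) :
    ∃ (I : Type) (_ : Finite I) (L : ι → Option I),
      (∀ i, ∃ a c, a ≠ c ∧ L a = some i ∧ L c = some i) ∧
      (∀ i, ∀ s : Finset ι, (∀ j ∈ s, L j = some i) → s.card ≤ 4) ∧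
      (∀ s : Finset ι, (∀ j ∈ s, L j = none) → s.card ≤ 2) ∧
      ∀ g ∈ H, ∃ τ : Equiv.Perm I,
        (∀ i, ∀ v ∈ blk B b L (some i), g v ∈ blk B b L (some (τ i))) ∧
        (∀ v ∈ blk B b L none, g v ∈ blk B b L none) := by
  classical
  have hmcl : ∀ j, cl B H b (m j) = cl B H b j := by
    intro j
    by_cases hj : m j = j
    · rw [hj]
    · refine Quot.sound ⟨b j + b (m j), hm j, ?_, ?_⟩
      · rw [map_add, LinearMap.add_apply, h.orth j (m j) (Ne.symm hj), zero_add]; exact h.bn _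
      · rw [map_add, LinearMap.add_apply, h.orth (m j) j hj, add_zero]; exact h.bn _
  let I := {κ : Cls B H b // ¬ sing κ}
  have hfin : Finite (Cls B H b) := by unfold Cls; infer_instance
  let L : ι → Option I := fun j => if hj : sing (cl B H b j) then none else some ⟨cl B H b j, hj⟩
  have hLn : ∀ j, L j = none ↔ sing (cl B H b j) := by
    intro j
    by_cases hj : sing (cl B H b j) <;> simp [L, hj]
  have hLs : ∀ j (i : I), L j = some i ↔ cl B H b j = i := by
    intro j i
    by_cases hj : sing (cl B H b j)
    · simp only [L, hj, dif_pos]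
      constructor
      · intro h; cases h
      · intro h0; exact absurd (h0 ▸ hj) i.2
    · simp only [L, hj, dif_neg, not_false_eq_true, Option.some.injEq]
      exact Subtype.ext_iff
  have hblk : ∀ i : I, blk B b L (some i) = blk B b (cl B H b) i := by
    intro i
    ext v
    simp only [mem_blk, ne_eq, hLs]
  refine ⟨I, inferInstance, L, ?_, ?_, ?_, ?_⟩
  · intro i
    have := i.2
    unfold sing at this
    push Not at this
    obtain ⟨a, c, ha, hc, hac⟩ := this
    exact ⟨a, c, hac, (hLs a i).mpr ha, (hLs c i).mpr hc⟩
  · intro i s hs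
    exact h.card_le i.1 s fun j hj => (hLs j i).mp (hs j hj)
  · intro s hs
    apply hfix
    intro j hj
    exact (hLn j).mp (hs j hj) _ _ (hmcl j) rfl
  · intro g hg
    obtain ⟨τ, hτ, hsing⟩ := h.exists_perm hg
    refine ⟨τ.subtypeEquiv fun κ => not_congr (hsing κ), ?_, ?_⟩
    · intro i v hv
      rw [hblk] at hv ⊢
      exact hτ i v hv
    · have hle : blk B b L none ≤ (blk B b L none).comap (g : V →ₗ[F] V) := by
        apply h.blk_le
        intro j hj
        have h1 := hτ _ _ (h.b_mem (cl B H b) j)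
        rw [hLn, hsing] at hj
        intro a ha
        apply h1
        intro h2
        rw [← h2, ← hLn] at hj
        exact ha hj
      exact hle

theorem exists_label [Fintype ι] [Finite F] [Group.IsSolvable H] (h : Setup B H b)
    (m : ι → ι) (hfix : ∀ s : Finset ι, (∀ j ∈ s, m j = j) → s.card ≤ 2)
    (hm : ∀ j, IsRoot B H (b j + b (m j))) :
    ∃ (k : ℕ) (L : ι → Option (Fin k)),
      (∀ i, ∃ a c, a ≠ c ∧ L a = some i ∧ L c = some i) ∧
      (∀ i, ∀ s : Finset ι, (∀ j ∈ s, L j = some i) → s.card ≤ 4) ∧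
      (∀ a c, L a = none → L c = none → a = c) ∧
      ∀ g ∈ H, ∃ τ : Equiv.Perm (Fin k),
        (∀ i, ∀ v ∈ blk B b L (some i), g v ∈ blk B b L (some (τ i))) ∧
        (∀ v ∈ blk B b L none, g v ∈ blk B b L none) := by
  classical
  obtain ⟨I, hI, L, h1, h2, h3, h4⟩ := h.exists_label0 m hfix hm
  by_cases hn : ∃ a c, a ≠ c ∧ L a = none ∧ L c = none
  · obtain ⟨k, ⟨e⟩⟩ := Finite.exists_equiv_fin (Option I)
    have hinj : Function.Injective (fun o : Option I => some (e o)) := by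
      intro x y hxy
      simpa using hxy
    refine ⟨k, (fun o : Option I => some (e o)) ∘ L, ?_, ?_, ?_, ?_⟩
    · intro i
      obtain ⟨o, rfl⟩ := e.surjective i
      have : ∃ a c, a ≠ c ∧ L a = o ∧ L c = o := by
        rcases o with _ | i
        · exact hn
        · exact h1 i
      obtain ⟨a, c, hac, ha, hc⟩ := this
      exact ⟨a, c, hac, by simp [ha], by simp [hc]⟩
    · intro i s hs
      obtain ⟨o, rfl⟩ := e.surjective i
      rcases o with _ | i
      · have := h3 s fun j hj => by simpa using hs j hj
        omega
      · exact h2 i s fun j hj => by simpa using hs j hj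
    · intro a c ha; simp at ha
    · intro g hg
      obtain ⟨τ, hτ, hτn⟩ := h4 g hg
      refine ⟨(e.symm.trans (Equiv.optionCongr τ)).trans e, ?_, ?_⟩
      · intro i v hv
        obtain ⟨o, rfl⟩ := e.surjective i
        rw [blk_inj L hinj o] at hv
        have : (some (((e.symm.trans (Equiv.optionCongr τ)).trans e) (e o))) = 
          (fun o : Option I => some (e o)) (Equiv.optionCongr τ o) := by simp
        rw [this, blk_inj L hinj]
        rcases o with _ | i
        · exact hτn v hv
        · exact hτ i v hv
      · intro v hv
        have : v = 0 := h.ext0 fun j => hv j (by simp)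
        rw [this, map_zero]; exact Submodule.zero_mem _
  · push Not at hn
    obtain ⟨k, ⟨e⟩⟩ := Finite.exists_equiv_fin I
    have hinj : Function.Injective (Option.map e) := Option.map_injective e.injective
    refine ⟨k, Option.map e ∘ L, ?_, ?_, ?_, ?_⟩
    · intro i
      obtain ⟨o, rfl⟩ := e.surjective i
      obtain ⟨a, c, hac, ha, hc⟩ := h1 o
      exact ⟨a, c, hac, by simp [ha], by simp [hc]⟩
    · intro i s hs
      obtain ⟨o, rfl⟩ := e.surjective i
      exact h2 o s fun j hj => by simpa using hs j hj
    · intro a c ha hc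
      by_contra hac
      exact hn a c hac (by simpa using ha) (by simpa using hc)
    · intro g hg
      obtain ⟨τ, hτ, hτn⟩ := h4 g hg
      refine ⟨(e.symm.trans τ).trans e, ?_, ?_⟩
      · intro i v hv
        obtain ⟨o, rfl⟩ := e.surjective i
        rw [show some (e o) = Option.map e (some o) from rfl, blk_inj L hinj] at hv
        have : (some (((e.symm.trans τ).trans e) (e o))) = Option.map e (some (τ o)) := by simp
        rw [this, blk_inj L hinj]
        exact hτ o v hv
      · intro v hv
        rw [show none = Option.map e none from rfl, blk_inj L hinj] at hv ⊢
        exact hτn v hv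

end Setup
end HallOrth
end

section
namespace HallOrth
set_option linter.unusedSectionVars false
set_option linter.unusedVariables false
variable {F : Type*} [Field F] {V : Type*} [AddCommGroup V] [Module F V]
variable {ι : Type} {B : V →ₗ[F] V →ₗ[F] F} {H : Subgroup (V ≃ₗ[F] V)} {b : Module.Basis ι F V}
variable {I : Type} [Fintype I]

def cU (J : I → ℕ) (u : I → V) (i : I) : V := ∑ i' with J i' = J i, u i'
def cq (B : V →ₗ[F] V →ₗ[F] F) (J : I → ℕ) (u : I → V) (i : I) : F :=
  ∑ i' with J i' = J i, B (u i') (u i')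

theorem cU_congr {J : I → ℕ} {u : I → V} {i i' : I} (h : J i = J i') : cU J u i = cU J u i' := by
  unfold cU; rw [h]
theorem cq_congr {J : I → ℕ} {u : I → V} {i i' : I} (h : J i = J i') : cq B J u i = cq B J u i' := by
  unfold cq; rw [h]

structure Cfg (B : V →ₗ[F] V →ₗ[F] F) (b : Module.Basis ι F V) (L : ι → I) (J : I → ℕ) (u : I → V) : Prop where
  mem : ∀ i, u i ∈ blk B b L i
  nz : ∀ i, u i ≠ 0 → B (u i) (u i) ≠ 0
  q_ne : ∀ i, u i ≠ 0 → cq B J u i ≠ 0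
  star : ∀ i, u i ≠ 0 → ∃ i1, i1 ≠ i ∧ J i1 = J i ∧ u i1 ≠ 0 ∧
    (2 * B (u i) (u i) ≠ cq B J u i ∨ ∃ i2, i2 ≠ i ∧ i2 ≠ i1 ∧ J i2 = J i ∧ u i2 ≠ 0)

noncomputable def xMap (B : V →ₗ[F] V →ₗ[F] F) (J : I → ℕ) (u : I → V) : V →ₗ[F] V :=
  LinearMap.id - ∑ i, ((2 / cq B J u i) • B.flip (u i)).smulRight (cU J u i)

theorem xMap_apply (J : I → ℕ) (u : I → V) (v : V) :
    xMap B J u v = v - ∑ i, (2 / cq B J u i * B v (u i)) • cU J u i := by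
  simp [xMap, LinearMap.sum_apply]

namespace Cfg
variable {L : ι → I} {J : I → ℕ} {u : I → V} [Fintype ι]

/-- pairing of the cluster vector with a block vector -/
theorem cU_pair (h : Setup B H b) (c : Cfg B b L J u) {i i' : I} {w : V} (hw : w ∈ blk B b L i') :
    B (cU J u i) w = if J i' = J i then B (u i') w else 0 := by
  unfold cU
  rw [map_sum, LinearMap.sum_apply]
  split_ifs with hJ
  · rw [Finset.sum_eq_single i']
    · intro i'' _ hne
      exact h.blk_orth hne (c.mem _) hw
    · intro hn; simp [hJ] at hn
  · apply Finset.sum_eq_zero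
    intro i'' hi''
    apply h.blk_orth _ (c.mem _) hw
    rintro rfl
    simp at hi''; exact hJ hi''

theorem x_blk (h : Setup B H b) (c : Cfg B b L J u) {i : I} {v : V} (hv : v ∈ blk B b L i) :
    xMap B J u v = v - (2 / cq B J u i * B v (u i)) • cU J u i := by
  rw [xMap_apply, Finset.sum_eq_single i]
  · intro i' _ hne
    rw [h.blk_orth hne.symm hv (c.mem i')]; simp
  · simp

theorem x_U (h : Setup B H b) (c : Cfg B b L J u) (i : I) (hi : u i ≠ 0) :
    xMap B J u (cU J u i) = - cU J u i := by
  rw [xMap_apply]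
  have h1 : ∑ i', (2 / cq B J u i' * B (cU J u i) (u i')) • cU J u i' =
      (2 / cq B J u i * cq B J u i) • cU J u i := by
    have hq : cq B J u i = ∑ i' with J i' = J i, B (u i') (u i') := rfl
    conv_rhs => rw [show 2 / cq B J u i * cq B J u i = 2 / cq B J u i * ∑ i' with J i' = J i, B (u i') (u i') from rfl]
    rw [Finset.mul_sum, Finset.sum_smul, Finset.sum_filter]
    apply Finset.sum_congr rfl
    intro i' _
    rw [c.cU_pair h (c.mem i')]
    split_ifs with hJ
    · rw [cU_congr hJ, cq_congr hJ]
    · simp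
  rw [h1, div_mul_cancel₀ _ (c.q_ne i hi), two_smul]
  abel

theorem x_x (h : Setup B H b) (c : Cfg B b L J u) (v : V) :
    xMap B J u (xMap B J u v) = v := by
  have h1 : xMap B J u (∑ i, (2 / cq B J u i * B v (u i)) • cU J u i) =
      - ∑ i, (2 / cq B J u i * B v (u i)) • cU J u i := by
    rw [map_sum, ← Finset.sum_neg_distrib]
    apply Finset.sum_congr rfl
    intro i _
    by_cases hi : u i = 0
    · simp [hi]
    · rw [map_smul, c.x_U h i hi, smul_neg]
  nth_rewrite 2 [xMap_apply]
  rw [map_sub, h1, xMap_apply]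
  abel

theorem x_adj (h : Setup B H b) (v w : V) :
    B (xMap B J u v) w = B v (xMap B J u w) := by
  rw [xMap_apply, xMap_apply, map_sub, LinearMap.sub_apply, map_sub]
  congr 1
  rw [map_sum, map_sum, LinearMap.sum_apply]
  simp only [map_smul, LinearMap.smul_apply, smul_eq_mul, cU, map_sum, LinearMap.sum_apply,
    Finset.mul_sum, Finset.sum_filter]
  rw [Finset.sum_comm]
  apply Finset.sum_congr rfl
  intro i _
  apply Finset.sum_congr rfl
  intro i' _
  by_cases hJ : J i = J i'
  · rw [if_pos hJ, if_pos hJ.symm, cq_congr hJ, h.symm (u i) w]; ring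
  · rw [if_neg hJ, if_neg (Ne.symm hJ)]; simp

theorem x_isom (h : Setup B H b) (c : Cfg B b L J u) (v w : V) :
    B (xMap B J u v) (xMap B J u w) = B v w := by
  rw [x_adj h, c.x_x h]

noncomputable def xE (h : Setup B H b) (c : Cfg B b L J u) : V ≃ₗ[F] V :=
  LinearEquiv.ofInvolutive (xMap B J u) (c.x_x h)

theorem xE_apply (h : Setup B H b) (c : Cfg B b L J u) (v : V) : c.xE h v = xMap B J u v := rfl

end Cfg

/-- data of a pair `g, g' = x g x⁻¹` permuting the blocks -/
structure Act (B : V →ₗ[F] V →ₗ[F] F) (b : Module.Basis ι F V) (L : ι → I) (J : I → ℕ) (u : I → V)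
    (g g' : V ≃ₗ[F] V) (τ τ' : Equiv.Perm I) (μ : F) : Prop where
  hμ : μ ≠ 0
  sim : ∀ x y, B (g x) (g y) = μ * B x y
  comm : ∀ v, xMap B J u (g v) = g' (xMap B J u v)
  map : ∀ i, ∀ v ∈ blk B b L i, g v ∈ blk B b L (τ i)
  map' : ∀ i, ∀ v ∈ blk B b L i, g' v ∈ blk B b L (τ' i)
  unz : ∀ i, u i ≠ 0 → u (τ i) ≠ 0
  unz' : ∀ i, u i ≠ 0 → u (τ' i) ≠ 0
  ns : ∀ i, u i ≠ 0 → τ i = τ' i ∨ ∃ v ∈ blk B b L i, v ≠ 0 ∧ B v (u i) = 0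

namespace Act
variable {L : ι → I} {J : I → ℕ} {u : I → V} [Fintype ι] {g g' : V ≃ₗ[F] V} {τ τ' : Equiv.Perm I} {μ : F}

theorem swap (h : Setup B H b) (c : Cfg B b L J u) (a : Act B b L J u g g' τ τ' μ) :
    Act B b L J u g' g τ' τ μ := by
  have h1 : ∀ v, g' v = xMap B J u (g (xMap B J u v)) := by
    intro v
    rw [a.comm, c.x_x h]
  refine ⟨a.hμ, ?_, ?_, a.map', a.map, a.unz', a.unz, fun i hi => (a.ns i hi).imp Eq.symm id⟩
  · intro x y
    rw [h1, h1, c.x_isom h, a.sim, c.x_isom h]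
  · intro v
    rw [h1, c.x_x h]

theorem perp (h : Setup B H b) (c : Cfg B b L J u) (a : Act B b L J u g g' τ τ' μ) {i : I}
    (hi : u i ≠ 0) {v : V} (hv : v ∈ blk B b L i) (hvu : B v (u i) = 0) :
    B (g v) (u (τ i)) = 0 ∧ g v = g' v := by
  have h0 := a.comm v
  rw [c.x_blk h hv, hvu, mul_zero, zero_smul, sub_zero, c.x_blk h (a.map i v hv)] at h0
  have key : B (g v) (u (τ i)) = 0 := by
    by_contra hne
    obtain ⟨i1, h1, hJ1, hu1, hor⟩ := c.star _ (a.unz i hi)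
    have hq := c.q_ne _ (a.unz i hi)
    have hβ : 2 / cq B J u (τ i) * B (g v) (u (τ i)) ≠ 0 :=
      mul_ne_zero (div_ne_zero h.two hq) hne
    have aux : ∀ i1, i1 ≠ τ i → J i1 = J (τ i) → u i1 ≠ 0 → τ' i = i1 := by
      intro i1 h1 hJ1 hu1
      by_contra hcon
      have h2 := congrArg (fun t => B t (u i1)) h0
      simp only [map_sub, LinearMap.sub_apply, map_smul, LinearMap.smul_apply] at h2
      rw [h.blk_orth (Ne.symm h1) (a.map i v hv) (c.mem i1), h.blk_orth hcon (a.map' i v hv) (c.mem i1),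
        c.cU_pair h (c.mem i1), if_pos hJ1, zero_sub, neg_eq_zero, smul_eq_mul] at h2
      exact (mul_ne_zero hβ (c.nz _ hu1)) h2
    have e1 := aux i1 h1 hJ1 hu1
    rcases hor with hs | ⟨i2, h2, h21, hJ2, hu2⟩
    · have h2 := congrArg (fun t => B t (u (τ i))) h0
      simp only [map_sub, LinearMap.sub_apply, map_smul, LinearMap.smul_apply] at h2
      rw [h.blk_orth (i := τ' i) (by rw [e1]; exact h1) (a.map' i v hv) (c.mem (τ i)),
        c.cU_pair h (c.mem (τ i)), if_pos rfl, smul_eq_mul] at h2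
      apply hs
      field_simp at h2
      have h3 : B (g v) (u (τ i)) * (cq B J u (τ i) - 2 * B (u (τ i)) (u (τ i))) = 0 := by
        linear_combination h2
      rcases mul_eq_zero.mp h3 with h4 | h4
      · exact absurd h4 hne
      · linear_combination -h4
    · exact h21 ((aux i2 h2 hJ2 hu2).symm.trans e1)
  refine ⟨key, ?_⟩
  rw [key, mul_zero, zero_smul, sub_zero] at h0
  exact h0

theorem tau_eq (h : Setup B H b) (c : Cfg B b L J u) (a : Act B b L J u g g' τ τ' μ) {i : I}
    (hi : u i ≠ 0) : τ i = τ' i := by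
  rcases a.ns i hi with h1 | ⟨v, hv, hv0, hvu⟩
  · exact h1
  · have h2 := (a.perp h c hi hv hvu).2
    refine h.blk_inter (v := g v) ?_ (a.map i v hv) (by rw [h2]; exact a.map' i v hv)
    rwa [ne_eq, LinearEquiv.map_eq_zero_iff]

theorem exists_scal (h : Setup B H b) (c : Cfg B b L J u) (a : Act B b L J u g g' τ τ' μ) {i : I}
    (hi : u i ≠ 0) : ∃ α : F, α ≠ 0 ∧ g (u i) = α • u (τ i) := by
  set cc := B (g (u i)) (u (τ i)) / B (u i) (u i) with hcc
  have hQ := c.nz i hi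
  have hlin : ∀ v ∈ blk B b L i, B (g v) (u (τ i)) = cc * B v (u i) := by
    intro v hv
    have hm : v - (B v (u i) / B (u i) (u i)) • u i ∈ blk B b L i :=
      Submodule.sub_mem _ hv (Submodule.smul_mem _ _ (c.mem i))
    have h1 := (a.perp h c hi hm (by simp [hQ])).1
    rw [map_sub, map_smul, map_sub, LinearMap.sub_apply, map_smul, LinearMap.smul_apply, smul_eq_mul] at h1
    rw [hcc]
    linear_combination h1
  have he : u (τ i) - (cc / μ) • g (u i) = 0 := by
    apply h.nd
    intro w
    obtain ⟨w', rfl⟩ := g.surjective w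
    have h2 : B (u (τ i) - (cc / μ) • g (u i)) ∘ₗ (g : V →ₗ[F] V) = 0 := by
      apply b.ext
      intro j
      have hj := h.b_mem L j
      simp only [LinearMap.comp_apply, LinearEquiv.coe_coe, LinearMap.zero_apply]
      rw [map_sub, map_smul, LinearMap.sub_apply, LinearMap.smul_apply, smul_eq_mul, a.sim]
      by_cases hji : L j = i
      · rw [hji] at hj
        have := hlin _ hj
        have hμ := a.hμ
        rw [h.symm (u (τ i)), this, h.symm (u i)]
        field_simp
        ring
      · rw [h.blk_orth (fun hc => hji (τ.injective hc).symm) (c.mem (τ i)) (a.map _ _ hj),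
          h.blk_orth (Ne.symm hji) (c.mem i) hj]
        simp
    exact LinearMap.congr_fun h2 w'
  have hu := a.unz i hi
  have hc0 : cc / μ ≠ 0 := by
    intro h0
    rw [h0, zero_smul, sub_zero] at he
    exact hu he
  refine ⟨(cc / μ)⁻¹, inv_ne_zero hc0, ?_⟩
  rw [sub_eq_zero] at he
  rw [he, smul_smul, inv_mul_cancel₀ hc0, one_smul]

theorem scal_sq (c : Cfg B b L J u) (a : Act B b L J u g g' τ τ' μ) {i : I} {α : F}
    (hα : g (u i) = α • u (τ i)) :
    μ * B (u i) (u i) = α ^ 2 * B (u (τ i)) (u (τ i)) := by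
  rw [← a.sim, hα, map_smul, map_smul, LinearMap.smul_apply, smul_eq_mul, smul_eq_mul]
  ring

/-- main identity -/
theorem cross (h : Setup B H b) (c : Cfg B b L J u) (a : Act B b L J u g g' τ τ' μ) {i i' : I}
    (hi : u i ≠ 0) (hi' : u i' ≠ 0) (hne : i' ≠ i) (hJ : J i' = J i) {α α' : F}
    (hα : g (u i) = α • u (τ i)) (hα0 : α ≠ 0) (hα' : g' (u i') = α' • u (τ i')) (hα'0 : α' ≠ 0) :
    J (τ i') = J (τ i) ∧ α * α' * cq B J u (τ i) = μ * cq B J u i := by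
  have h0 := a.comm (u i)
  rw [hα, map_smul, c.x_blk h (c.mem i), c.x_blk h (c.mem (τ i))] at h0
  have h2 := congrArg (fun t => B t (u (τ i'))) h0
  have hτne : τ i ≠ τ i' := fun hc => hne (τ.injective hc).symm
  have hq := c.q_ne _ hi
  have hq' := c.q_ne _ (a.unz i hi)
  have hQ := c.nz _ hi
  have hQ2 := c.nz _ (a.unz i hi)
  have hQ' := c.nz _ (a.unz i' hi')
  have hsum : B (g' (cU J u i)) (u (τ i')) = α' * B (u (τ i')) (u (τ i')) := by
    rw [cU, map_sum, map_sum, LinearMap.sum_apply, Finset.sum_eq_single i']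
    · rw [hα']; simp
    · intro j hj hji
      by_cases hj0 : u j = 0
      · simp [hj0]
      · apply h.blk_orth _ (a.map' _ _ (c.mem j)) (c.mem _)
        rw [a.tau_eq h c hi']
        exact fun hc => hji (τ'.injective hc)
    · intro hn; simp [hJ] at hn
  simp only [map_sub, LinearMap.sub_apply, map_smul, LinearMap.smul_apply, smul_eq_mul] at h2
  have hz : B (g' (u i)) (u (τ i')) = 0 := by
    apply h.blk_orth _ (a.map' _ _ (c.mem i)) (c.mem _)
    rw [a.tau_eq h c hi']
    exact fun hc => hne (τ'.injective hc).symm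
  rw [hsum, hz, h.blk_orth hτne (c.mem _) (c.mem _), c.cU_pair h (c.mem _)] at h2
  have hJJ : J (τ i') = J (τ i) := by
    by_contra hJJ
    rw [if_neg hJJ] at h2
    have : 2 / cq B J u i * B (u i) (u i) * (α' * B (u (τ i')) (u (τ i'))) = 0 := by
      linear_combination h2
    exact mul_ne_zero (mul_ne_zero (div_ne_zero h.two hq) hQ) (mul_ne_zero hα'0 hQ') this
  refine ⟨hJJ, ?_⟩
  rw [if_pos hJJ] at h2
  have hsq := a.scal_sq c hα
  have h2' := h.two
  field_simp at h2
  have h3 : B (u (τ i')) (u (τ i')) * 2 * (α * B (u (τ i)) (u (τ i)) * cq B J u i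
      - α' * B (u i) (u i) * cq B J u (τ i)) = 0 := by
    linear_combination -h2
  have h4 : α * B (u (τ i)) (u (τ i)) * cq B J u i = α' * B (u i) (u i) * cq B J u (τ i) := by
    rcases mul_eq_zero.mp h3 with h5 | h5
    · exact absurd h5 (mul_ne_zero hQ' h2')
    · linear_combination h5
  apply mul_left_cancel₀ hQ
  linear_combination (-α) * h4 - cq B J u i * hsq

theorem J_tau (h : Setup B H b) (c : Cfg B b L J u) (a : Act B b L J u g g' τ τ' μ) {i i' : I}
    (hi : u i ≠ 0) (hi' : u i' ≠ 0) (hJ : J i' = J i) : J (τ i') = J (τ i) := by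
  by_cases hne : i' = i
  · rw [hne]
  obtain ⟨α, hα0, hα⟩ := a.exists_scal h c hi
  obtain ⟨α', hα'0, hα'⟩ := (a.swap h c).exists_scal h c hi'
  rw [← a.tau_eq h c hi'] at hα'
  exact (a.cross h c hi hi' hne hJ hα hα0 hα' hα'0).1

theorem scal_three (h : Setup B H b) (c : Cfg B b L J u) (a : Act B b L J u g g' τ τ' μ) {i i' i'' : I}
    (hi : u i ≠ 0) (hi' : u i' ≠ 0) (hi'' : u i'' ≠ 0) (h1 : i'' ≠ i) (h2 : i'' ≠ i')
    (hJ : J i'' = J i) (hJ' : J i'' = J i') {α α' : F}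
    (hα : g (u i) = α • u (τ i)) (hα0 : α ≠ 0) (hα' : g (u i') = α' • u (τ i')) (hα'0 : α' ≠ 0) :
    α = α' := by
  obtain ⟨β, hβ0, hβ⟩ := (a.swap h c).exists_scal h c hi''
  rw [← a.tau_eq h c hi''] at hβ
  have e1 := (a.cross h c hi hi'' h1 hJ hα hα0 hβ hβ0).2
  have e2 := (a.cross h c hi' hi'' h2 hJ' hα' hα'0 hβ hβ0).2
  have e3 : J i = J i' := hJ.symm.trans hJ'
  rw [cq_congr e3, cq_congr (a.J_tau h c hi' hi e3)] at e1
  have hq := c.q_ne _ (a.unz i' hi')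
  have : (α - α') * (β * cq B J u (τ i')) = 0 := by linear_combination e1 - e2
  rcases mul_eq_zero.mp this with h5 | h5
  · linear_combination h5
  · exact absurd h5 (mul_ne_zero hβ0 hq)

/-- if the permutation is trivial, then the scalars in a cluster coincide -/
theorem scal_id (h : Setup B H b) (c : Cfg B b L J u) (a : Act B b L J u g g' τ τ' μ) {i i' : I}
    (hi : u i ≠ 0) (hi' : u i' ≠ 0) (hJ : J i' = J i) (ht : τ i = i) (ht' : τ i' = i') {α α' : F}
    (hα : g (u i) = α • u i) (hα0 : α ≠ 0) (hα' : g (u i') = α' • u i') (hα'0 : α' ≠ 0) :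
    α = α' := by
  by_cases hne : i' = i
  · subst hne
    rw [hα'] at hα
    exact (smul_left_injective F hi hα).symm
  obtain ⟨i1, h1, hJ1, hu1, hor⟩ := c.star _ hi
  have hαt : g (u i) = α • u (τ i) := by rw [ht]; exact hα
  have hαt' : g (u i') = α' • u (τ i') := by rw [ht']; exact hα'
  by_cases h3 : ∃ i2, i2 ≠ i ∧ i2 ≠ i' ∧ J i2 = J i ∧ u i2 ≠ 0
  · obtain ⟨i2, h2, h21, hJ2, hu2⟩ := h3
    exact a.scal_three h c hi hi' hu2 h2 h21 hJ2 (hJ2.trans hJ.symm) hαt hα0 hαt' hα'0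
  have hs : 2 * B (u i) (u i) ≠ cq B J u i := by
    rcases hor with hs | ⟨i2, h2, h21, hJ2, hu2⟩
    · exact hs
    · exfalso
      by_cases h4 : i1 = i'
      · subst h4; exact h3 ⟨i2, h2, h21, hJ2, hu2⟩
      · exact h3 ⟨i1, h1, h4, hJ1, hu1⟩
  have s := a.swap h c
  obtain ⟨β, hβ0, hβ⟩ := s.exists_scal h c hi
  obtain ⟨β', hβ'0, hβ'⟩ := s.exists_scal h c hi'
  rw [← a.tau_eq h c hi] at hβ
  rw [← a.tau_eq h c hi'] at hβ'
  have hq := c.q_ne _ hi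
  have hQ := c.nz _ hi
  have e1 := (a.cross h c hi hi' hne hJ hαt hα0 hβ' hβ'0).2
  have e2 := (a.cross h c hi' hi (Ne.symm hne) hJ.symm hαt' hα'0 hβ hβ0).2
  rw [ht] at e1 hβ
  rw [ht', cq_congr hJ] at e2
  have e3 := a.scal_sq c hαt
  have e4 := a.scal_sq c hαt'
  rw [ht] at e3
  rw [ht'] at e4
  have m1 : μ = α ^ 2 := mul_right_cancel₀ hQ e3
  have m2 : α * β' = μ := mul_right_cancel₀ hq e1
  have m3 : α' * β = μ := mul_right_cancel₀ hq e2
  have m4 : μ = α' ^ 2 := mul_right_cancel₀ (c.nz _ hi') e4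
  have b1 : β = α' := mul_left_cancel₀ hα'0 (by rw [m3, m4, sq])
  -- the diagonal component
  have h0 := a.comm (u i)
  rw [hα, map_smul, c.x_blk h (c.mem i)] at h0
  have h2 := congrArg (fun t => B t (u i)) h0
  have hsum : B (g' (cU J u i)) (u i) = β * B (u i) (u i) := by
    rw [cU, map_sum, map_sum, LinearMap.sum_apply, Finset.sum_eq_single i]
    · rw [hβ]; simp
    · intro j hj hji
      apply h.blk_orth _ (a.map' _ _ (c.mem j)) (c.mem _)
      rw [← ht, a.tau_eq h c hi]
      exact fun hc => hji (τ'.injective hc)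
    · intro hn; simp at hn
  simp only [map_sub, LinearMap.sub_apply, map_smul, LinearMap.smul_apply, smul_eq_mul] at h2
  rw [hsum, hβ, c.cU_pair h (c.mem _), if_pos rfl, b1] at h2
  simp only [map_smul, LinearMap.smul_apply, smul_eq_mul] at h2
  field_simp at h2
  have h5 : B (u i) (u i) * (cq B J u i - 2 * B (u i) (u i)) * (α - α') = 0 := by
    linear_combination (B (u i) (u i)) * h2
  rcases mul_eq_zero.mp h5 with h6 | h6
  · rcases mul_eq_zero.mp h6 with h7 | h7
    · exact absurd h7 hQ
    · exact absurd (by linear_combination -h7) hs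
  · linear_combination h6
end Act
end HallOrth
end

section
namespace HallOrth
set_option linter.unusedSectionVars false
set_option linter.unusedVariables false
variable {F : Type*} [Field F] {V : Type*} [AddCommGroup V] [Module F V]

theorem conic0 [Fintype F] (h2 : (2 : F) ≠ 0) {α β N : F} (hα : α ≠ 0) (hβ : β ≠ 0) :
    ∃ X Y : F, α * X ^ 2 + β * Y ^ 2 = N := by
  have hodd : Fintype.card F % 2 = 1 := by
    rw [FiniteField.odd_card_of_char_ne_two]
    intro h
    apply h2
    have := ringChar.spec F 2
    rw [h] at this
    exact_mod_cast this.mpr dvd_rfl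
  obtain ⟨a, c, hac⟩ := FiniteField.exists_root_sum_quadratic
    (f := Polynomial.C α * Polynomial.X ^ 2 + Polynomial.C 0 * Polynomial.X + Polynomial.C (-N))
    (g := Polynomial.C β * Polynomial.X ^ 2 + Polynomial.C 0 * Polynomial.X + Polynomial.C 0)
    (Polynomial.degree_quadratic hα) (Polynomial.degree_quadratic hβ) hodd
  refine ⟨a, c, ?_⟩
  simp at hac
  linear_combination hac

theorem conic1 (h2 : (2 : F) ≠ 0) (h3 : (3 : F) ≠ 0) {α β N X0 : F} (hα : α ≠ 0) (hβ : β ≠ 0)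
    (hN : N ≠ 0) (hX : α * X0 ^ 2 = N) : ∃ X Y : F, α * X ^ 2 + β * Y ^ 2 = N ∧ Y ≠ 0 := by
  have hX0 : X0 ≠ 0 := by rintro rfl; apply hN; rw [← hX]; ring
  have key : ∀ m : F, m ≠ 0 → α * m ^ 2 + β ≠ 0 → ∃ X Y : F, α * X ^ 2 + β * Y ^ 2 = N ∧ Y ≠ 0 := by
    intro m hm hd
    refine ⟨X0 + m * (- (2 * α * X0 * m) / (α * m ^ 2 + β)), - (2 * α * X0 * m) / (α * m ^ 2 + β), ?_, ?_⟩
    · field_simp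
      rw [← hX]
      ring
    · exact div_ne_zero (neg_ne_zero.mpr (mul_ne_zero (mul_ne_zero (mul_ne_zero h2 hα) hX0) hm)) hd
  by_cases h : α + β = 0
  · apply key 2 h2
    intro h'
    have : α * 3 = 0 := by linear_combination h' - h
    exact (mul_ne_zero hα h3) this
  · apply key 1 one_ne_zero
    rwa [one_pow, mul_one]

/-- a conic has a point off a given line through the origin -/
theorem conic [Fintype F] (h2 : (2 : F) ≠ 0) (h3 : (3 : F) ≠ 0) {α β N : F} (hα : α ≠ 0) (hβ : β ≠ 0)
    (hN : N ≠ 0) {s t : F} (hst : s ≠ 0 ∨ t ≠ 0) :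
    ∃ X Y : F, α * X ^ 2 + β * Y ^ 2 = N ∧ s * X + t * Y ≠ 0 := by
  obtain ⟨X, Y, h⟩ := conic0 h2 (N := N) hα hβ
  by_cases h0 : s * X + t * Y ≠ 0
  · exact ⟨X, Y, h, h0⟩
  push Not at h0
  by_cases hX : X = 0
  · subst hX
    have hY : Y ≠ 0 := by rintro rfl; apply hN; rw [← h]; ring
    have ht : t = 0 := by
      have : t * Y = 0 := by linear_combination h0
      exact (mul_eq_zero.mp this).resolve_right hY
    obtain ⟨Y', X', h', hX'⟩ := conic1 h2 h3 (N := N) (X0 := Y) hβ hα hN (by linear_combination h)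
    refine ⟨X', Y', by linear_combination h', ?_⟩
    rw [ht, zero_mul, add_zero]
    exact mul_ne_zero (hst.resolve_right (not_not.mpr ht)) hX'
  by_cases hY : Y = 0
  · subst hY
    have hs : s = 0 := by
      have : s * X = 0 := by linear_combination h0
      exact (mul_eq_zero.mp this).resolve_right hX
    obtain ⟨X', Y', h', hY'⟩ := conic1 h2 h3 (N := N) (X0 := X) hα hβ hN (by linear_combination h)
    refine ⟨X', Y', h', ?_⟩
    rw [hs, zero_mul, zero_add]
    exact mul_ne_zero (hst.resolve_left (not_not.mpr hs)) hY'
  refine ⟨X, -Y, by linear_combination h, ?_⟩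
  intro h1
  have e1 : 2 * (s * X) = 0 := by linear_combination h0 + h1
  have e2 : 2 * (t * Y) = 0 := by linear_combination h0 - h1
  rcases hst with hs | ht
  · exact mul_ne_zero h2 (mul_ne_zero hs hX) e1
  · exact mul_ne_zero h2 (mul_ne_zero ht hY) e2

theorem cramer {T : Submodule F V} {e f : V} {a c a' c' : F} (hd : a * c' - a' * c ≠ 0)
    (h1 : a • e + c • f ∈ T) (h2 : a' • e + c' • f ∈ T) : e ∈ T ∧ f ∈ T := by
  constructor
  · have : e = (c' / (a * c' - a' * c)) • (a • e + c • f) - (c / (a * c' - a' * c)) • (a' • e + c' • f) := by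
      match_scalars
      · field_simp
        rw [mul_comm c' a, div_self hd]
      · field_simp; ring
    rw [this]
    exact T.sub_mem (T.smul_mem _ h1) (T.smul_mem _ h2)
  · have : f = (a / (a * c' - a' * c)) • (a' • e + c' • f) - (a' / (a * c' - a' * c)) • (a • e + c • f) := by
      match_scalars
      · field_simp
      · field_simp; ring
    rw [this]
    exact T.sub_mem (T.smul_mem _ h2) (T.smul_mem _ h1)

theorem local_two [Fintype F] (h2 : (2 : F) ≠ 0) (h3 : (3 : F) ≠ 0) (B : V →ₗ[F] V →ₗ[F] F)
    (hs : ∀ x y, B x y = B y x) {e f : V} (hef : B e f = 0) (he : B e e ≠ 0) (hf : B f f ≠ 0)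
    {x y z ν : F} (hx : x ≠ 0) (hy : y ≠ 0) (hz : z ≠ 0) (hν : ∀ c, c ^ 2 ≠ ν)
    (hor : x = ν * z ∨ y = ν * z) :
    ∃ w u v : V, (∀ T : Submodule F V, e ∈ T → f ∈ T → w ∈ T ∧ u ∈ T ∧ v ∈ T) ∧
      B w w = z ∧ B u u = x ∧ B v v = y ∧ B u w ≠ 0 ∧ B v w ≠ 0 ∧
      ∀ T : Submodule F V, w ∈ T → u ∈ T → v ∈ T → e ∈ T ∧ f ∈ T := by
  obtain ⟨a, c, hac⟩ := conic0 h2 (N := z) he hf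
  have hfe : B f e = 0 := by rw [hs]; exact hef
  have hB : ∀ X Y X' Y' : F, B (X • e + Y • f) (X' • e + Y' • f) = B e e * (X * X') + B f f * (Y * Y') := by
    intro X Y X' Y'
    simp [hef, hfe]; ring
  have hne : B e e * a ≠ 0 ∨ B f f * c ≠ 0 := by
    by_contra hcon
    push Not at hcon
    apply hz
    linear_combination -hac + a * hcon.1 + c * hcon.2
  obtain ⟨a1, c1, hq1, hn1⟩ := conic h2 h3 he hf hx hne
  obtain ⟨a2, c2, hq2, hn2⟩ := conic h2 h3 he hf hy hne
  have hdet : ∀ a1 c1, B e e * a1 ^ 2 + B f f * c1 ^ 2 = ν * z → a * c1 - a1 * c ≠ 0 := by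
    intro a1 c1 hq hd
    have key : ∀ k, a1 = k * a → c1 = k * c → False := by
      rintro k rfl rfl
      apply hν k
      apply mul_right_cancel₀ hz
      rw [← hq, ← hac]; ring
    by_cases ha : a = 0
    · have hc : c ≠ 0 := by
        rintro rfl; apply hz; rw [← hac, ha]; ring
      apply key (c1 / c)
      · rw [ha, mul_zero]
        have : a1 * c = 0 := by rw [ha] at hd; linear_combination -hd
        exact (mul_eq_zero.mp this).resolve_right hc
      · field_simp
    · apply key (a1 / a)
      · field_simp
      · field_simp; linear_combination hd
  refine ⟨a • e + c • f, a1 • e + c1 • f, a2 • e + c2 • f, ?_, ?_, ?_, ?_, ?_, ?_, ?_⟩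
  · intro T h1 h2
    exact ⟨T.add_mem (T.smul_mem _ h1) (T.smul_mem _ h2), T.add_mem (T.smul_mem _ h1) (T.smul_mem _ h2),
      T.add_mem (T.smul_mem _ h1) (T.smul_mem _ h2)⟩
  · rw [hB]; linear_combination hac
  · rw [hB]; linear_combination hq1
  · rw [hB]; linear_combination hq2
  · rw [hB]; intro h; apply hn1; linear_combination h
  · rw [hB]; intro h; apply hn2; linear_combination h
  · intro T hw hu hv
    rcases hor with h | h
    · exact cramer (hdet a1 c1 (hq1.trans h)) hw hu
    · exact cramer (hdet a2 c2 (hq2.trans h)) hw hv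

theorem exists_s (h2 : (2 : F) ≠ 0) (h3 : (3 : F) ≠ 0) {z x : F} (hz : z ≠ 0) :
    ∃ s : F, s ≠ 0 ∧ x - s ^ 2 * z ≠ 0 := by
  by_cases h : x - z = 0
  · refine ⟨2, h2, ?_⟩
    intro h'
    have : z * 3 = 0 := by linear_combination h - h'
    exact mul_ne_zero hz h3 this
  · exact ⟨1, one_ne_zero, by rwa [one_pow, one_mul]⟩

theorem local_three [Fintype F] (h2 : (2 : F) ≠ 0) (h3 : (3 : F) ≠ 0) (B : V →ₗ[F] V →ₗ[F] F)
    (hs : ∀ x y, B x y = B y x) {e f k : V} (hef : B e f = 0) (hek : B e k = 0) (hfk : B f k = 0)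
    (he : B e e ≠ 0) (hf : B f f ≠ 0) (hk : B k k ≠ 0)
    {x y z : F} (hx : x ≠ 0) (hy : y ≠ 0) (hz : z ≠ 0) (bit : Prop) :
    ∃ w u v : V, (∀ T : Submodule F V, e ∈ T → f ∈ T → k ∈ T → w ∈ T ∧ u ∈ T ∧ v ∈ T) ∧
      B w w = z ∧ B u u = x ∧ B v v = y ∧ (bit → B u w = 0) ∧ (¬ bit → B u w ≠ 0) ∧ B v w ≠ 0 ∧
      ∀ T : Submodule F V, w ∈ T → u ∈ T → v ∈ T → e ∈ T ∧ f ∈ T ∧ k ∈ T := by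
  classical
  obtain ⟨a, c, hac⟩ := conic0 h2 (N := z) he hf
  have hfe : B f e = 0 := by rw [hs]; exact hef
  have hke : B k e = 0 := by rw [hs]; exact hek
  have hkf : B k f = 0 := by rw [hs]; exact hfk
  set w := a • e + c • f with hw
  set e2 := (-(B f f * c)) • e + (B e e * a) • f with he2
  have hww : B w w = z := by rw [hw]; simp [hef, hfe]; linear_combination hac
  have hwe2 : B w e2 = 0 := by rw [hw, he2]; simp [hef, hfe]; ring
  have he2w : B e2 w = 0 := by rw [hs]; exact hwe2
  have hwk : B w k = 0 := by rw [hw]; simp [hek, hfk]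
  have hkw : B k w = 0 := by rw [hs]; exact hwk
  have he2k : B e2 k = 0 := by rw [he2]; simp [hek, hfk]
  have hke2 : B k e2 = 0 := by rw [hs]; exact he2k
  have hee : B e2 e2 ≠ 0 := by
    have : B e2 e2 = B e e * B f f * z := by
      rw [he2]; simp [hef, hfe]; linear_combination B e e * B f f * hac
    rw [this]; exact mul_ne_zero (mul_ne_zero he hf) hz
  obtain ⟨s, hs1, hs2, hsx⟩ : ∃ s : F, (bit → s = 0) ∧ (¬ bit → s ≠ 0) ∧ x - s ^ 2 * z ≠ 0 := by
    by_cases hb : bit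
    · exact ⟨0, fun _ => rfl, fun h => absurd hb h, by simpa using hx⟩
    · obtain ⟨s, h1, h4⟩ := exists_s h2 h3 (x := x) hz
      exact ⟨s, fun h => absurd h hb, fun _ => h1, h4⟩
  obtain ⟨t, ht0, hty⟩ := exists_s h2 h3 (x := y) hz
  obtain ⟨X, Y, hXY⟩ := conic0 h2 (N := x - s ^ 2 * z) hee hk
  have hne : -Y ≠ 0 ∨ X ≠ 0 := by
    by_contra hcon
    push Not at hcon
    apply hsx
    rw [← hXY, hcon.2, neg_eq_zero.mp hcon.1]; ring
  obtain ⟨X', Y', hXY', hd⟩ := conic h2 h3 hee hk hty hne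
  refine ⟨w, s • w + (X • e2 + Y • k), t • w + (X' • e2 + Y' • k), ?_, hww, ?_, ?_, ?_, ?_, ?_, ?_⟩
  · intro T h1 h2 h3
    have hwT : w ∈ T := T.add_mem (T.smul_mem _ h1) (T.smul_mem _ h2)
    have he2T : e2 ∈ T := T.add_mem (T.smul_mem _ h1) (T.smul_mem _ h2)
    exact ⟨hwT, T.add_mem (T.smul_mem _ hwT) (T.add_mem (T.smul_mem _ he2T) (T.smul_mem _ h3)),
      T.add_mem (T.smul_mem _ hwT) (T.add_mem (T.smul_mem _ he2T) (T.smul_mem _ h3))⟩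
  · simp only [map_add, map_smul, LinearMap.add_apply, LinearMap.smul_apply, smul_eq_mul, hww, hwe2, he2w, hwk,
      hkw, he2k, hke2]
    linear_combination hXY
  · simp only [map_add, map_smul, LinearMap.add_apply, LinearMap.smul_apply, smul_eq_mul, hww, hwe2, he2w, hwk,
      hkw, he2k, hke2]
    linear_combination hXY'
  · intro hb; simp [hww, he2w, hkw, hs1 hb]
  · intro hb; simp [hww, he2w, hkw, hs2 hb, hz]
  · simp [hww, he2w, hkw, ht0, hz]
  · intro T hwT hu hv
    have hu' := T.sub_mem hu (T.smul_mem s hwT)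
    have hv' := T.sub_mem hv (T.smul_mem t hwT)
    rw [add_sub_cancel_left] at hu' hv'
    obtain ⟨h4, h5⟩ := cramer (a := X) (c := Y) (a' := X') (c' := Y') (by intro h; apply hd; linear_combination h) hu' hv'
    have hdet : a * (B e e * a) - -(B f f * c) * c ≠ 0 := by
      intro h; apply hz; linear_combination h - hac
    obtain ⟨h6, h7⟩ := cramer hdet hwT h4
    exact ⟨h6, h7, h5⟩
end HallOrth
end

section
namespace HallOrth
set_option linter.unusedSectionVars false
set_option linter.unusedVariables false
variable {F : Type*} [Field F] {V : Type*} [AddCommGroup V] [Module F V]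
variable {ι : Type} {B : V →ₗ[F] V →ₗ[F] F} {H : Subgroup (V ≃ₗ[F] V)} {b : Module.Basis ι F V}

def Rigid (H : Subgroup (V ≃ₗ[F] V)) (C : Submodule F V) (w u v : V) : Prop :=
  ∀ g ∈ H, ∀ l : F, l ≠ 0 → (∀ t ∈ C, g t ∈ C) → g w = l • w → g u = l • u → g v = l • v →
    ∀ t ∈ C, g t = l • t

def eqSub (g : V ≃ₗ[F] V) (r : V →ₗ[F] V) : Submodule F V := LinearMap.ker ((g : V →ₗ[F] V) - r)

theorem mem_eqSub {g : V ≃ₗ[F] V} {r : V →ₗ[F] V} {t : V} : t ∈ eqSub g r ↔ g t = r t := by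
  simp [eqSub, sub_eq_zero]

theorem isRoot_of_smul {l : F} (hl : l ≠ 0) {v : V} (h : IsRoot B H (l • v)) : IsRoot B H v := by
  refine ⟨?_, ?_⟩
  · have := h.1
    simp at this
    exact this.2
  · have := h.2
    rwa [refl_smul B hl] at this

theorem Setup.local_four [Fintype ι] [Fintype F] (h : Setup B H b) (h3 : (3 : F) ≠ 0) {I : Type} {L : ι → I} {i : I}
    {j1 j2 j3 j4 : ι} (h12 : j1 ≠ j2) (h13 : j1 ≠ j3) (h14 : j1 ≠ j4) (h23 : j2 ≠ j3) (h24 : j2 ≠ j4)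
    (h34 : j3 ≠ j4) (hL : ∀ j, L j = i ↔ j = j1 ∨ j = j2 ∨ j = j3 ∨ j = j4)
    {x y z : F} (hx : x ≠ 0) (hy : y ≠ 0) (hz : z ≠ 0) (bit : Prop) :
    ∃ w u v : V, (w ∈ blk B b L i ∧ u ∈ blk B b L i ∧ v ∈ blk B b L i) ∧
      B w w = z ∧ B u u = x ∧ B v v = y ∧ (bit → B u w = 0) ∧ (¬ bit → B u w ≠ 0) ∧ B v w ≠ 0 ∧
      Rigid H (blk B b L i) w u v := by
  have h2 := h.two
  have hmem : ∀ j, (j = j1 ∨ j = j2 ∨ j = j3 ∨ j = j4) → b j ∈ blk B b L i := by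
    intro j hj
    have := h.b_mem L j
    rwa [(hL j).mpr hj] at this
  have m1 := hmem j1 (by simp)
  have m2 := hmem j2 (by simp)
  have m3 := hmem j3 (by simp)
  have m4 := hmem j4 (by simp)
  set C := blk B b L i with hC
  obtain ⟨X, Y, hXY⟩ := conic0 h2 (N := - B (b j4) (b j4)) (h.bn j2) (h.bn j3)
  set s := X • b j2 + Y • b j3 + b j4 with hsdef
  have hsC : s ∈ C := C.add_mem (C.add_mem (C.smul_mem _ m2) (C.smul_mem _ m3)) m4
  have o23 := h.orth _ _ h23
  have o32 := h.orth _ _ h23.symm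
  have o24 := h.orth _ _ h24
  have o42 := h.orth _ _ h24.symm
  have o34 := h.orth _ _ h34
  have o43 := h.orth _ _ h34.symm
  have hss : B s s = 0 := by
    rw [hsdef]
    simp [o23, o32, o24, o42, o34, o43]
    linear_combination hXY
  have hs0 : s ≠ 0 := by
    intro h0
    have : B s (b j4) = B (b j4) (b j4) := by rw [hsdef]; simp [o24, o34]
    rw [h0] at this
    exact h.bn j4 (by rw [← this]; simp)
  have h1s : B (b j1) s = 0 := by
    rw [hsdef]; simp [h.orth _ _ h12, h.orth _ _ h13, h.orth _ _ h14]
  have hs1 : B s (b j1) = 0 := by rw [h.symm]; exact h1s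
  set c := (2 : F) • b j1 + s with hc
  set d := (4 : F) • b j1 + s with hd
  have hcC : c ∈ C := C.add_mem (C.smul_mem _ m1) hsC
  have hdC : d ∈ C := C.add_mem (C.smul_mem _ m1) hsC
  have hcc : B c c = 4 * B (b j1) (b j1) := by
    rw [hc]; simp [hss, h1s, hs1]; ring
  have h4 : (4 : F) ≠ 0 := by
    have : (4 : F) = 2 * 2 := by norm_num
    rw [this]; exact mul_ne_zero h2 h2
  have hcc0 : B c c ≠ 0 := by rw [hcc]; exact mul_ne_zero h4 (h.bn j1)
  have hdd : B d d = 16 * B (b j1) (b j1) := by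
    rw [hd]; simp [hss, h1s, hs1]; ring
  have h1n := h.bn j1
  have h16 : (16 : F) ≠ 0 := by
    have : (16 : F) = 4 * 4 := by norm_num
    rw [this]; exact mul_ne_zero h4 h4
  set ρ := refl B d with hρ
  have hρC : ∀ t ∈ C, ρ t ∈ C := by
    intro t ht
    rw [hρ, refl_apply]
    exact C.sub_mem ht (C.smul_mem _ hdC)
  have hρρ : ∀ t, ρ (ρ t) = t := fun t => refl_refl B d t
  have hρi : ∀ t t', B (ρ t) (ρ t') = B t t' := fun t t' => refl_isom B h.symm d t t'
  have hρ1 : ρ ((2 : F) • b j1) = - c := by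
    rw [hρ, refl_apply, hdd]
    have : B ((2 : F) • b j1) d = 8 * B (b j1) (b j1) := by rw [hd]; simp [h1s]; ring
    rw [this]
    have : 2 / (16 * B (b j1) (b j1)) * (8 * B (b j1) (b j1)) = 1 := by field_simp; norm_num
    rw [this, hc, hd]
    module
  have hEc : ∀ j, j1 ≠ j → B (ρ (b j)) c = 0 := by
    intro j hj
    have : c = - ρ ((2 : F) • b j1) := by rw [hρ1, neg_neg]
    rw [this, map_neg, hρi, map_smul, h.orth _ _ hj.symm]; simp
  have hspan : ∀ T : Submodule F V, c ∈ T → ρ (b j2) ∈ T → ρ (b j3) ∈ T → ρ (b j4) ∈ T → C ≤ T := by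
    intro T hcT t2 t3 t4
    have hle : C ≤ T.comap (ρ : V →ₗ[F] V) := by
      apply h.blk_le
      intro j hj
      rcases (hL j).mp hj with rfl | rfl | rfl | rfl
      · have e : ρ (b j) ∈ T := by
          have : ρ (b j) = (2 : F)⁻¹ • (- c) := by
            rw [← hρ1, map_smul, smul_smul, inv_mul_cancel₀ h2, one_smul]
          rw [this]
          exact T.smul_mem _ (T.neg_mem hcT)
        exact e
      · exact t2
      · exact t3
      · exact t4
    intro t ht
    have := hle (hρC t ht)
    rw [Submodule.mem_comap] at this
    have e : ((ρ : V →ₗ[F] V) (ρ t)) = t := hρρ t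
    rwa [e] at this
  obtain ⟨w, u, v, hT, hw, hu, hv, hb1, hb2, hvw, hS⟩ := local_three h2 h3 B h.symm
    (e := ρ (b j2)) (f := ρ (b j3)) (k := ρ (b j4)) (by rw [hρi]; exact o23) (by rw [hρi]; exact o24)
    (by rw [hρi]; exact o34) (by rw [hρi]; exact h.bn j2) (by rw [hρi]; exact h.bn j3)
    (by rw [hρi]; exact h.bn j4) hx hy hz bit
  refine ⟨w, u, v, hT C (hρC _ m2) (hρC _ m3) (hρC _ m4), hw, hu, hv, hb1, hb2, hvw, ?_⟩
  intro g hg l hl hgC gw gu gv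
  obtain ⟨t2, t3, t4⟩ := hS (eqSub g (l • LinearMap.id)) (mem_eqSub.mpr gw) (mem_eqSub.mpr gu) (mem_eqSub.mpr gv)
  obtain ⟨μ, hμ, hgμ⟩ := h.sim g hg
  have g2 : g (ρ (b j2)) = l • ρ (b j2) := mem_eqSub.mp t2
  have g3 : g (ρ (b j3)) = l • ρ (b j3) := mem_eqSub.mp t3
  have g4 : g (ρ (b j4)) = l • ρ (b j4) := mem_eqSub.mp t4
  have hμl : l ^ 2 = μ := by
    have e := hgμ (ρ (b j2)) (ρ (b j2))
    rw [g2, hρi] at e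
    simp only [map_smul, LinearMap.smul_apply, smul_eq_mul, hρi] at e
    apply mul_right_cancel₀ (h.bn j2)
    linear_combination e
  have hgc : ∃ κ : F, g c = κ • c := by
    refine ⟨B (g c) c / B c c, ?_⟩
    rw [← sub_eq_zero]
    set e := g c - (B (g c) c / B c c) • c with he
    have heC : e ∈ C := C.sub_mem (hgC c hcC) (C.smul_mem _ hcC)
    have aux : ∀ j, j1 ≠ j → g (ρ (b j)) = l • ρ (b j) → B e (ρ (b j)) = 0 := by
      intro j hj hgj
      have e1 := hgμ c (ρ (b j))
      have e2 : B c (ρ (b j)) = 0 := by rw [h.symm]; exact hEc j hj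
      rw [hgj, map_smul, e2, smul_eq_mul, mul_zero] at e1
      have e3 := (mul_eq_zero.mp e1).resolve_left hl
      rw [he]; simp [e3, e2]
    have hle : C ≤ LinearMap.ker (B e) := by
      apply hspan
      · rw [LinearMap.mem_ker, he]; simp [hcc0]
      · exact aux _ h12 g2
      · exact aux _ h13 g3
      · exact aux _ h14 g4
    apply h.ext0
    intro j
    by_cases hj : L j = i
    · exact hle (hmem j ((hL j).mp hj))
    · exact heC j hj
  obtain ⟨κ, hκ⟩ := hgc
  have hκμ : κ ^ 2 = μ := by
    have e := hgμ c c
    rw [hκ] at e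
    simp only [map_smul, LinearMap.smul_apply, smul_eq_mul] at e
    apply mul_right_cancel₀ hcc0
    linear_combination e
  have hfac : (κ - l) * (κ + l) = 0 := by linear_combination hκμ - hμl
  rcases mul_eq_zero.mp hfac with hk | hk
  · have hk' : κ = l := by linear_combination hk
    have hle : C ≤ eqSub g (l • LinearMap.id) :=
      hspan _ (mem_eqSub.mpr (by rw [hκ, hk']; rfl)) t2 t3 t4
    intro t ht
    exact mem_eqSub.mp (hle ht)
  · exfalso
    have hk' : κ = -l := by linear_combination hk
    have hor : ∀ j, j1 ≠ j → g (ρ (b j)) = l • ρ (b j) →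
        ρ (b j) ∈ eqSub g (l • (refl B c : V →ₗ[F] V)) := by
      intro j hj hgj
      rw [mem_eqSub, hgj, LinearMap.smul_apply, LinearEquiv.coe_coe, refl_of_orth B (hEc j hj)]
    have hle : C ≤ eqSub g (l • (refl B c : V →ₗ[F] V)) := by
      apply hspan
      · rw [mem_eqSub, hκ, LinearMap.smul_apply, LinearEquiv.coe_coe, refl_self B hcc0, hk']
        module
      · exact hor _ h12 g2
      · exact hor _ h13 g3
      · exact hor _ h14 g4
    have h5 := mem_eqSub.mp (hle m1)
    rw [LinearMap.smul_apply, LinearEquiv.coe_coe, refl_apply, hcc] at h5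
    have e1 : B (b j1) c = 2 * B (b j1) (b j1) := by rw [hc]; simp [h1s]
    have e2 : 2 / (4 * B (b j1) (b j1)) * (2 * B (b j1) (b j1)) = 1 := by field_simp; norm_num
    rw [e1, e2] at h5
    have h6 : g (b j1) = (-l) • (b j1 + s) := by rw [h5, hc]; module
    have h7 := h.root_map hg (h.root j1)
    rw [h6] at h7
    exact hs0 (h.nounip _ _ hss h1s (h.root j1) (isRoot_of_smul (neg_ne_zero.mpr hl) h7))

theorem Setup.local_block [Fintype ι] [Fintype F] (h : Setup B H b) (h3 : (3 : F) ≠ 0) {I : Type} {L : ι → I} {i : I}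
    (hge : ∃ a c, a ≠ c ∧ L a = i ∧ L c = i) (hle : ∀ s : Finset ι, (∀ j ∈ s, L j = i) → s.card ≤ 4)
    {x y z ν : F} (hx : x ≠ 0) (hy : y ≠ 0) (hz : z ≠ 0) (hν : ∀ c, c ^ 2 ≠ ν)
    (hor : x = ν * z ∨ y = ν * z) (bit : Prop)
    (hbit : bit → ∃ s : Finset ι, (∀ j ∈ s, L j = i) ∧ 3 ≤ s.card) :
    ∃ w u v : V, (w ∈ blk B b L i ∧ u ∈ blk B b L i ∧ v ∈ blk B b L i) ∧
      B w w = z ∧ B u u = x ∧ B v v = y ∧ (bit → B u w = 0) ∧ (¬ bit → B u w ≠ 0) ∧ B v w ≠ 0 ∧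
      Rigid H (blk B b L i) w u v := by
  classical
  set s : Finset ι := Finset.univ.filter (fun j => L j = i) with hs
  have hsle := hle s (by simp [hs])
  obtain ⟨a, c, hac, ha, hc⟩ := hge
  have hsge : 2 ≤ s.card := by
    have : ({a, c} : Finset ι) ⊆ s := by
      intro j hj; simp at hj; rcases hj with rfl | rfl <;> simp [hs, ha, hc]
    have := Finset.card_le_card this
    rwa [Finset.card_pair hac] at this
  have hmem : ∀ j, L j = i → b j ∈ blk B b L i := by
    rintro j rfl; exact h.b_mem L j
  have hLs : ∀ j, L j = i ↔ j ∈ s := by simp [hs]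
  have rig : ∀ w u v : V, (∀ T : Submodule F V, w ∈ T → u ∈ T → v ∈ T → ∀ j ∈ s, b j ∈ T) →
      Rigid H (blk B b L i) w u v := by
    intro w u v hT g hg l hl hgC gw gu gv t ht
    have hle : blk B b L i ≤ eqSub g (l • LinearMap.id) := by
      apply h.blk_le
      intro j hj
      exact hT _ (mem_eqSub.mpr gw) (mem_eqSub.mpr gu) (mem_eqSub.mpr gv) j ((hLs j).mp hj)
    exact mem_eqSub.mp (hle ht)
  have hcases : s.card = 2 ∨ s.card = 3 ∨ s.card = 4 := by omega
  rcases hcases with h0 | h0 | h0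
  · have hnb : ¬ bit := by
      intro hb
      obtain ⟨s', hs', hc'⟩ := hbit hb
      have : s' ⊆ s := fun j hj => (hLs j).mp (hs' j hj)
      have := Finset.card_le_card this
      omega
    obtain ⟨j1, j2, h12, hs2⟩ := Finset.card_eq_two.mp h0
    have m1 := hmem j1 ((hLs j1).mpr (by simp [hs2]))
    have m2 := hmem j2 ((hLs j2).mpr (by simp [hs2]))
    obtain ⟨w, u, v, hT, hw, hu, hv, huw, hvw, hS⟩ := local_two h.two h3 B h.symm
      (h.orth _ _ h12) (h.bn j1) (h.bn j2) hx hy hz hν hor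
    refine ⟨w, u, v, hT _ m1 m2, hw, hu, hv, fun hb => absurd hb hnb, fun _ => huw, hvw, rig _ _ _ ?_⟩
    intro T hw hu hv j hj
    rw [hs2] at hj
    simp at hj
    obtain ⟨k1, k2⟩ := hS T hw hu hv
    rcases hj with rfl | rfl
    · exact k1
    · exact k2
  · obtain ⟨j1, j2, j3, h12, h13, h23, hs2⟩ := Finset.card_eq_three.mp h0
    have m1 := hmem j1 ((hLs j1).mpr (by simp [hs2]))
    have m2 := hmem j2 ((hLs j2).mpr (by simp [hs2]))
    have m3 := hmem j3 ((hLs j3).mpr (by simp [hs2]))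
    obtain ⟨w, u, v, hT, hw, hu, hv, hb1, hb2, hvw, hS⟩ := local_three h.two h3 B h.symm
      (h.orth _ _ h12) (h.orth _ _ h13) (h.orth _ _ h23) (h.bn j1) (h.bn j2) (h.bn j3) hx hy hz bit
    refine ⟨w, u, v, hT _ m1 m2 m3, hw, hu, hv, hb1, hb2, hvw, rig _ _ _ ?_⟩
    intro T hw hu hv j hj
    rw [hs2] at hj
    simp at hj
    obtain ⟨k1, k2, k3⟩ := hS T hw hu hv
    rcases hj with rfl | rfl | rfl
    · exact k1
    · exact k2
    · exact k3
  · obtain ⟨j1, j2, j3, j4, h12, h13, h14, h23, h24, h34, hs2⟩ := Finset.card_eq_four.mp h0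
    refine h.local_four h3 h12 h13 h14 h23 h24 h34 (fun j => ?_) hx hy hz bit
    rw [hLs, hs2]; simp

end HallOrth
end

section
namespace HallOrth
set_option linter.unusedSectionVars false
set_option linter.unusedVariables false

theorem exists_avoid {F : Type*} [Fintype F] (s : Finset F) (h : s.card < Fintype.card F) :
    ∃ a : F, a ∉ s := by
  classical
  by_contra hcon
  push Not at hcon
  have : s = Finset.univ := Finset.eq_univ_iff_forall.mpr hcon
  rw [this, Finset.card_univ] at h
  omega

theorem vals {F : Type*} [Field F] [Fintype F] (hF : 5 ≤ Fintype.card F) {k : ℕ} (J : Fin k → ℕ)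
    (fr : Fin k → Prop) (hfr : ∀ i, ∃ f, J f = J i ∧ fr f) (hun : ∀ f f', fr f → fr f' → J f = J f' → f = f')
    (h2 : ∀ i, ∃ i1, i1 ≠ i ∧ J i1 = J i) (c : Fin k → F) (hc : ∀ i, c i ≠ 0) :
    ∃ X : Fin k → F, (∀ i, X i ≠ 0) ∧ (∀ i, ¬ fr i → X i = c i) ∧
      (∀ i, ∑ i' with J i' = J i, X i' ≠ 0) ∧
      (∀ i, ∃ i1, i1 ≠ i ∧ J i1 = J i ∧ (2 * X i ≠ ∑ i' with J i' = J i, X i' ∨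
        ∃ i2, i2 ≠ i ∧ i2 ≠ i1 ∧ J i2 = J i)) := by
  classical
  let t : Fin k → F := fun f => ∑ i' ∈ (Finset.univ.filter fun i' => J i' = J f).erase f, c i'
  have hex : ∀ f, ∃ a : F, a ≠ 0 ∧ a ≠ t f ∧ a ≠ - t f := by
    intro f
    obtain ⟨a, ha⟩ := exists_avoid ({0, t f, - t f} : Finset F) (lt_of_le_of_lt Finset.card_le_three (by omega))
    simp at ha
    exact ⟨a, ha.1, ha.2.1, ha.2.2⟩
  choose a ha0 ha1 ha2 using hex
  let X : Fin k → F := fun i => if fr i then a i else c i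
  have hXf : ∀ i, fr i → X i = a i := fun i hi => by simp [X, hi]
  have hXn : ∀ i, ¬ fr i → X i = c i := fun i hi => by simp [X, hi]
  have hX0 : ∀ i, X i ≠ 0 := by
    intro i
    by_cases hi : fr i
    · rw [hXf i hi]; exact ha0 i
    · rw [hXn i hi]; exact hc i
  have hsum : ∀ f, fr f → ∑ i' with J i' = J f, X i' = a f + t f := by
    intro f hf
    rw [← Finset.add_sum_erase _ _ (a := f) (by simp), hXf f hf]
    congr 1
    apply Finset.sum_congr rfl
    intro i' hi'
    simp at hi'
    apply hXn
    intro h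
    exact hi'.1 (hun _ _ h hf hi'.2)
  refine ⟨X, hX0, hXn, ?_, ?_⟩
  · intro i
    obtain ⟨f, hJ, hf⟩ := hfr i
    rw [← hJ, hsum f hf]
    intro h
    exact ha2 f (by linear_combination h)
  · intro i
    obtain ⟨i1, h1, hJ1⟩ := h2 i
    refine ⟨i1, h1, hJ1, ?_⟩
    by_cases h3 : ∃ i2, i2 ≠ i ∧ i2 ≠ i1 ∧ J i2 = J i
    · exact Or.inr h3
    left
    have hcl : ∀ j, J j = J i → j = i ∨ j = i1 := by
      intro j hj
      by_contra hcon
      push Not at hcon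
      exact h3 ⟨j, hcon.1, hcon.2, hj⟩
    obtain ⟨f, hJ, hf⟩ := hfr i
    rw [← hJ, hsum f hf]
    rcases hcl f hJ with rfl | rfl
    · rw [hXf f hf]
      intro h
      exact ha1 f (by linear_combination h)
    · -- `i` is the only other member
      have ht : t f = c i := by
        have : (Finset.univ.filter fun i' => J i' = J f).erase f = {i} := by
          ext j
          simp only [Finset.mem_erase, Finset.mem_filter, Finset.mem_univ, true_and, Finset.mem_singleton]
          constructor
          · rintro ⟨h4, h5⟩
            exact (hcl j (h5.trans hJ)).resolve_right h4
          · rintro rfl; exact ⟨Ne.symm h1, hJ.symm⟩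
        simp only [t, this, Finset.sum_singleton]
      have hni : ¬ fr i := fun hi => h1 (hun _ _ hf hi hJ)
      rw [hXn i hni, ht]
      intro h
      exact ha1 f (by rw [ht]; linear_combination -h)

def Jx (k : ℕ) (i : Fin k) : ℕ := min (i.val / 2) (k / 2 - 1)
def Jy (k : ℕ) (i : Fin k) : ℕ := max (min ((i.val + 1) / 2) ((k - 1) / 2)) 1

theorem perm_id {k : ℕ} (hk : 2 ≤ k) (τ : Equiv.Perm (Fin k)) (h0 : τ ⟨0, by omega⟩ = ⟨0, by omega⟩)
    (h1 : τ ⟨k - 1, by omega⟩ = ⟨k - 1, by omega⟩)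
    (hx : ∀ i i' : Fin k, Jx k i' = Jx k i → Jx k (τ i') = Jx k (τ i))
    (hy : ∀ i i' : Fin k, Jy k i' = Jy k i → Jy k (τ i') = Jy k (τ i)) : τ = 1 := by
  have key : ∀ i (hi : i < k), τ ⟨i, hi⟩ = ⟨i, hi⟩ := by
    intro i
    induction i using Nat.strong_induction_on with
    | _ i ih =>
      intro hi
      by_cases hi0 : i = 0
      · subst hi0; exact h0
      by_cases hik : i = k - 1
      · subst hik; exact h1
      have hge : i ≤ (τ ⟨i, hi⟩ : Fin k) := by
        by_contra hlt
        push Not at hlt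
        have h3 := ih _ hlt (τ ⟨i, hi⟩).2
        have h4 := congrArg Fin.val (τ.injective h3)
        simp at h4
        omega
      have hne : (τ ⟨i, hi⟩ : Fin k).val ≠ k - 1 := by
        intro h3
        have h4 : τ ⟨i, hi⟩ = τ ⟨k - 1, by omega⟩ := by rw [h1]; exact Fin.ext h3
        have h5 := congrArg Fin.val (τ.injective h4)
        simp at h5
        omega
      have hlt := (τ ⟨i, hi⟩).2
      have hp := ih (i - 1) (by omega) (by omega)
      have ex := hx ⟨i - 1, by omega⟩ ⟨i, hi⟩
      have ey := hy ⟨i - 1, by omega⟩ ⟨i, hi⟩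
      rw [hp] at ex ey
      apply Fin.ext
      generalize (τ ⟨i, hi⟩ : Fin k) = T at *
      simp only [Jx, Jy] at ex ey
      simp only
      rcases Nat.even_or_odd' i with ⟨r, hr | hr⟩
      · have := ey (by omega)
        omega
      · have := ex (by omega)
        omega
  ext i
  rw [key i.1 i.2]; rfl

theorem vals_x {F : Type*} [Field F] [Fintype F] (hF : 5 ≤ Fintype.card F) {k : ℕ} (hk : 2 ≤ k)
    (c : Fin k → F) (hc : ∀ i, c i ≠ 0) :
    ∃ X : Fin k → F, (∀ i, X i ≠ 0) ∧ (∀ i : Fin k, i.val % 2 = 1 → X i = c i) ∧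
      (∀ i : Fin k, ∑ i' with Jx k i' = Jx k i, X i' ≠ 0) ∧
      (∀ i : Fin k, ∃ i1 : Fin k, i1 ≠ i ∧ Jx k i1 = Jx k i ∧ (2 * X i ≠ ∑ i' with Jx k i' = Jx k i, X i' ∨
        ∃ i2 : Fin k, i2 ≠ i ∧ i2 ≠ i1 ∧ Jx k i2 = Jx k i)) := by
  have hA : ∀ i : Fin k, ∃ f : Fin k, Jx k f = Jx k i ∧ f.val = 2 * Jx k f := by
    intro i
    have := i.2
    refine ⟨⟨2 * Jx k i, ?_⟩, ?_, ?_⟩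
    · simp only [Jx]; omega
    · simp only [Jx]; omega
    · simp only [Jx]; omega
  have hB : ∀ f f' : Fin k, f.val = 2 * Jx k f → f'.val = 2 * Jx k f' → Jx k f = Jx k f' → f = f' := by
    intro f f' hf hf' hJ
    apply Fin.ext
    omega
  have hC : ∀ i : Fin k, ∃ i1 : Fin k, i1 ≠ i ∧ Jx k i1 = Jx k i := by
    intro i
    have := i.2
    by_cases hi : i.val = 2 * Jx k i
    · refine ⟨⟨2 * Jx k i + 1, ?_⟩, ?_, ?_⟩
      · simp only [Jx]; omega
      · intro h; have := congrArg Fin.val h; simp at this; omega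
      · simp only [Jx]; omega
    · refine ⟨⟨2 * Jx k i, ?_⟩, ?_, ?_⟩
      · simp only [Jx]; omega
      · intro h; have := congrArg Fin.val h; simp at this; omega
      · simp only [Jx]; omega
  obtain ⟨X, h1, h2, h3, h4⟩ := vals hF (fun i : Fin k => Jx k i) (fun i => i.val = 2 * Jx k i) hA hB hC c hc
  refine ⟨X, h1, fun i hi => h2 i ?_, h3, h4⟩
  omega

theorem vals_y {F : Type*} [Field F] [Fintype F] (hF : 5 ≤ Fintype.card F) {k : ℕ} (hk : 2 ≤ k)
    (c : Fin k → F) (hc : ∀ i, c i ≠ 0) :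
    ∃ X : Fin k → F, (∀ i, X i ≠ 0) ∧ (∀ i : Fin k, i.val % 2 = 0 → X i = c i) ∧
      (∀ i : Fin k, ∑ i' with Jy k i' = Jy k i, X i' ≠ 0) ∧
      (∀ i : Fin k, ∃ i1 : Fin k, i1 ≠ i ∧ Jy k i1 = Jy k i ∧ (2 * X i ≠ ∑ i' with Jy k i' = Jy k i, X i' ∨
        ∃ i2 : Fin k, i2 ≠ i ∧ i2 ≠ i1 ∧ Jy k i2 = Jy k i)) := by
  have hA : ∀ i : Fin k, ∃ f : Fin k, Jy k f = Jy k i ∧ f.val + 1 = 2 * Jy k f := by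
    intro i
    have := i.2
    refine ⟨⟨2 * Jy k i - 1, ?_⟩, ?_, ?_⟩
    · simp only [Jy]; omega
    · simp only [Jy]; omega
    · simp only [Jy]; omega
  have hB : ∀ f f' : Fin k, f.val + 1 = 2 * Jy k f → f'.val + 1 = 2 * Jy k f' → Jy k f = Jy k f' → f = f' := by
    intro f f' hf hf' hJ
    apply Fin.ext
    omega
  have hC : ∀ i : Fin k, ∃ i1 : Fin k, i1 ≠ i ∧ Jy k i1 = Jy k i := by
    intro i
    have := i.2
    by_cases hi : i.val + 1 = 2 * Jy k i
    · by_cases h1 : Jy k i = 1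
      · refine ⟨⟨0, by omega⟩, ?_, ?_⟩
        · intro h; have := congrArg Fin.val h; simp at this; omega
        · simp only [Jy] at *; omega
      · refine ⟨⟨2 * Jy k i, ?_⟩, ?_, ?_⟩
        · simp only [Jy] at *; omega
        · intro h; have := congrArg Fin.val h; simp at this; omega
        · simp only [Jy] at *; omega
    · refine ⟨⟨2 * Jy k i - 1, ?_⟩, ?_, ?_⟩
      · simp only [Jy]; omega
      · intro h; have := congrArg Fin.val h; simp at this; simp only [Jy] at *; omega
      · simp only [Jy]; omega
  obtain ⟨X, h1, h2, h3, h4⟩ := vals hF (fun i : Fin k => Jy k i) (fun i => i.val + 1 = 2 * Jy k i) hA hB hC c hc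
  refine ⟨X, h1, fun i hi => h2 i ?_, h3, h4⟩
  omega

theorem vals_z {F : Type*} [Field F] [Fintype F] (hF : 5 ≤ Fintype.card F) {k : ℕ} (hk : 2 ≤ k) (s : F) :
    ∃ Z : Fin k → F, (∀ i, Z i ≠ 0) ∧ s + ∑ i, Z i ≠ 0 ∧
      (∀ i, Z i = Z ⟨0, by omega⟩ → i = ⟨0, by omega⟩) ∧
      (∀ i, Z i = Z ⟨k - 1, by omega⟩ → i = ⟨k - 1, by omega⟩) := by
  classical
  have hne : (⟨0, by omega⟩ : Fin k) ≠ ⟨k - 1, by omega⟩ := by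
    intro h; have := congrArg Fin.val h; simp at this; omega
  obtain ⟨a, ha⟩ := exists_avoid ({0, 1} : Finset F) (lt_of_le_of_lt Finset.card_le_two (by omega))
  simp at ha
  let P : Fin k → F := fun i => if i = ⟨0, by omega⟩ then a else 1
  obtain ⟨c, hc⟩ := exists_avoid
    ({0, 1, a, -(s + ∑ i ∈ Finset.univ.erase (⟨k - 1, by omega⟩ : Fin k), P i)} : Finset F)
    (lt_of_le_of_lt Finset.card_le_four (by omega))
  simp only [Finset.mem_insert, Finset.mem_singleton, not_or] at hc
  obtain ⟨c0, c1, c2, c3⟩ := hc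
  let Z : Fin k → F := Function.update P ⟨k - 1, by omega⟩ c
  have hZl : Z ⟨k - 1, by omega⟩ = c := Function.update_self ..
  have hZo : ∀ i, i ≠ ⟨k - 1, by omega⟩ → Z i = P i := fun i hi => Function.update_of_ne hi ..
  have hZ0 : Z ⟨0, by omega⟩ = a := by rw [hZo _ hne]; simp [P]
  have hZ1 : ∀ i, i ≠ ⟨0, by omega⟩ → i ≠ ⟨k - 1, by omega⟩ → Z i = 1 := by
    intro i h1 h2
    rw [hZo i h2]; simp [P, h1]
  refine ⟨Z, ?_, ?_, ?_, ?_⟩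
  · intro i
    by_cases h1 : i = ⟨0, by omega⟩
    · rw [h1, hZ0]; exact ha.1
    by_cases h2 : i = ⟨k - 1, by omega⟩
    · rw [h2, hZl]; exact c0
    · rw [hZ1 i h1 h2]; exact one_ne_zero
  · rw [← Finset.add_sum_erase _ _ (Finset.mem_univ (⟨k - 1, by omega⟩ : Fin k)), hZl]
    have : ∑ i ∈ Finset.univ.erase (⟨k - 1, by omega⟩ : Fin k), Z i =
        ∑ i ∈ Finset.univ.erase (⟨k - 1, by omega⟩ : Fin k), P i := by
      apply Finset.sum_congr rfl
      intro i hi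
      exact hZo i (Finset.ne_of_mem_erase hi)
    rw [this]
    intro h
    exact c3 (by linear_combination h)
  · intro i hi
    by_contra h1
    rw [hZ0] at hi
    by_cases h2 : i = ⟨k - 1, by omega⟩
    · rw [h2, hZl] at hi; exact c2 hi
    · rw [hZ1 i h1 h2] at hi; exact ha.2 hi.symm
  · intro i hi
    by_contra h2
    rw [hZl] at hi
    by_cases h1 : i = ⟨0, by omega⟩
    · rw [h1, hZ0] at hi; exact c2 hi.symm
    · rw [hZ1 i h1 h2] at hi; exact c1 hi.symm
end HallOrth
end

section
namespace HallOrth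
set_option linter.unusedSectionVars false
set_option linter.unusedVariables false
variable {F : Type*} [Field F] {V : Type*} [AddCommGroup V] [Module F V]
variable {ι : Type} {B : V →ₗ[F] V →ₗ[F] F} {H : Subgroup (V ≃ₗ[F] V)} {b : Module.Basis ι F V}
variable {k : ℕ} [Fintype ι]

def oJ (J : Fin k → ℕ) (o : Option (Fin k)) : ℕ := o.elim 0 J
def oU (t : V) (u : Fin k → V) (o : Option (Fin k)) : V := o.elim t u

@[simp] theorem oJ_some (J : Fin k → ℕ) (i : Fin k) : oJ J (some i) = J i := rfl
@[simp] theorem oU_some (t : V) (u : Fin k → V) (i : Fin k) : oU t u (some i) = u i := rfl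
@[simp] theorem oU_none (t : V) (u : Fin k → V) : oU t u none = t := rfl

theorem cq_oU (J : Fin k → ℕ) (u : Fin k → V) (i : Fin k) :
    cq B (oJ J) (oU 0 u) (some i) = ∑ i' with J i' = J i, B (u i') (u i') := by
  unfold cq
  rw [Finset.sum_filter, Fintype.sum_option, Finset.sum_filter]
  simp only [oU_none, oU_some, oJ_some, map_zero, ite_self, zero_add]
  exact Finset.sum_congr rfl fun i' _ => by congr

theorem cfg_xy {L : ι → Option (Fin k)} {J : Fin k → ℕ} {u : Fin k → V}
    (hu : ∀ i, u i ∈ blk B b L (some i)) {X : Fin k → F} (hX : ∀ i, B (u i) (u i) = X i)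
    (h0 : ∀ i, X i ≠ 0) (hs : ∀ i, ∑ i' with J i' = J i, X i' ≠ 0)
    (hst : ∀ i, ∃ i1, i1 ≠ i ∧ J i1 = J i ∧ (2 * X i ≠ ∑ i' with J i' = J i, X i' ∨
        ∃ i2, i2 ≠ i ∧ i2 ≠ i1 ∧ J i2 = J i)) : Cfg B b L (oJ J) (oU 0 u) := by
  have hcq : ∀ i, cq B (oJ J) (oU 0 u) (some i) = ∑ i' with J i' = J i, X i' := by
    intro i
    rw [cq_oU]
    exact Finset.sum_congr rfl fun i' _ => hX i'
  have hu0 : ∀ i, u i ≠ 0 := by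
    intro i hi
    apply h0 i
    rw [← hX i, hi]; simp
  refine ⟨?_, ?_, ?_, ?_⟩
  · rintro (_ | i)
    · exact Submodule.zero_mem _
    · exact hu i
  · rintro (_ | i) hi
    · simp at hi
    · rw [oU_some, hX]; exact h0 i
  · rintro (_ | i) hi
    · simp at hi
    · rw [hcq]; exact hs i
  · rintro (_ | i) hi
    · simp at hi
    · obtain ⟨i1, h1, h2, h3⟩ := hst i
      refine ⟨some i1, by simpa using h1, by simpa using h2, hu0 i1, ?_⟩
      rcases h3 with h3 | ⟨i2, h4, h5, h6⟩
      · left; rw [hcq, oU_some, hX]; exact h3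
      · right; exact ⟨some i2, by simpa using h4, by simpa using h5, by simpa using h6, hu0 i2⟩

theorem big_third {t : V} {w : Fin k → V} (hw : ∀ i, w i ≠ 0) (hk : 2 ≤ k) (hb : t ≠ 0 ∨ 3 ≤ k)
    (o o' : Option (Fin k)) : ∃ o'', o'' ≠ o ∧ o'' ≠ o' ∧ oU t w o'' ≠ 0 := by
  classical
  let S : Finset (Option (Fin k)) := Finset.univ.filter fun o => oU t w o ≠ 0
  have hsub : Finset.univ.map Function.Embedding.some ⊆ S := by
    intro x hx
    simp at hx
    obtain ⟨i, rfl⟩ := hx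
    simp [S, hw i]
  have hS : 3 ≤ S.card := by
    have h1 := Finset.card_le_card hsub
    rw [Finset.card_map, Finset.card_univ, Fintype.card_fin] at h1
    rcases hb with hb | hb
    · have h2 : Finset.univ.map Function.Embedding.some ⊂ S := by
        refine ⟨hsub, fun hh => ?_⟩
        have : none ∈ S := by simp [S, hb]
        simpa using hh this
      have h3 := Finset.card_lt_card h2
      rw [Finset.card_map, Finset.card_univ, Fintype.card_fin] at h3
      omega
    · omega
  obtain ⟨o'', h1, h2⟩ := Finset.exists_mem_notMem_of_card_lt_card
    (s := {o, o'}) (t := S) (lt_of_le_of_lt Finset.card_le_two (by omega))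
  simp at h2
  refine ⟨o'', h2.1, h2.2, ?_⟩
  simpa [S] using h1

theorem cfg_z {L : ι → Option (Fin k)} (h2F : (2 : F) ≠ 0) (hk : 2 ≤ k) {t : V} {w : Fin k → V} (ht : t ∈ blk B b L none)
    (ht0 : t ≠ 0 → B t t ≠ 0)
    (hu : ∀ i, w i ∈ blk B b L (some i)) {X : Fin k → F} (hX : ∀ i, B (w i) (w i) = X i)
    (h0 : ∀ i, X i ≠ 0) (hs : B t t + ∑ i, X i ≠ 0)
    (hinj : ∀ i, X i = X ⟨0, by omega⟩ → i = ⟨0, by omega⟩) :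
    Cfg B b L (fun _ => 0) (oU t w) := by
  have hcq : ∀ i, cq B (fun _ => 0) (oU t w) i = B t t + ∑ i, X i := by
    intro i
    unfold cq
    rw [Finset.sum_filter, Fintype.sum_option]
    simp [hX]
  have hu0 : ∀ i, w i ≠ 0 := by
    intro i hi
    apply h0 i
    rw [← hX i, hi]; simp
  refine ⟨?_, ?_, ?_, ?_⟩
  · rintro (_ | i)
    · exact ht
    · exact hu i
  · rintro (_ | i) hi
    · exact ht0 hi
    · rw [oU_some, hX]; exact h0 i
  · intro o _
    rw [hcq]; exact hs
  · intro o ho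
    by_cases hb : t ≠ 0 ∨ 3 ≤ k
    · obtain ⟨o1, h1, _, h3⟩ := big_third hu0 hk hb o o
      obtain ⟨o2, h4, h5, h6⟩ := big_third hu0 hk hb o o1
      exact ⟨o1, h1, rfl, h3, Or.inr ⟨o2, h4, h5, rfl, h6⟩⟩
    · push Not at hb
      obtain ⟨rfl, hk3⟩ := hb
      obtain rfl : k = 2 := by omega
      have hne : X 0 ≠ X 1 := fun h => by simpa using hinj 1 h.symm
      rcases o with _ | i
      · simp at ho
      · refine ⟨some (1 - i), ?_, rfl, hu0 _, Or.inl ?_⟩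
        · fin_cases i <;> simp
        · rw [hcq, oU_some, hX]
          simp only [map_zero, zero_add, Fin.sum_univ_two]
          fin_cases i
          · intro hh; apply hne; simp at hh; linear_combination hh
          · intro hh; apply hne; simp at hh; linear_combination -hh

theorem mk_act (h : Setup B H b) {L : ι → Option (Fin k)}
    (hge : ∀ i, ∃ a c, a ≠ c ∧ L a = some i ∧ L c = some i)
    (hperm : ∀ g ∈ H, ∃ τ : Equiv.Perm (Fin k),
        (∀ i, ∀ v ∈ blk B b L (some i), g v ∈ blk B b L (some (τ i))) ∧
        (∀ v ∈ blk B b L none, g v ∈ blk B b L none))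
    {J : Option (Fin k) → ℕ} {t : V} {u : Fin k → V} (hu : ∀ i, u i ≠ 0) (c : Cfg B b L J (oU t u))
    {g : V ≃ₗ[F] V} (hg' : c.xE h * g * (c.xE h)⁻¹ ∈ H) {μ : F} (hμ : μ ≠ 0)
    (hsim : ∀ x y, B (g x) (g y) = μ * B x y) {τ : Equiv.Perm (Fin k)}
    (hτ : ∀ i, ∀ v ∈ blk B b L (some i), g v ∈ blk B b L (some (τ i)))
    (hτn : ∀ v ∈ blk B b L none, g v ∈ blk B b L none) :
    ∃ τ', Act B b L J (oU t u) g (c.xE h * g * (c.xE h)⁻¹) (Equiv.optionCongr τ) τ' μ := by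
  obtain ⟨τ', h1, h2⟩ := hperm _ hg'
  refine ⟨Equiv.optionCongr τ', hμ, hsim, ?_, ?_, ?_, ?_, ?_, ?_⟩
  · intro v
    rw [LinearEquiv.mul_apply, LinearEquiv.mul_apply, ← c.xE_apply h, ← c.xE_apply h]
    congr 2
    exact ((c.xE h).symm_apply_apply v).symm
  · rintro (_ | i) v hv
    · exact hτn v hv
    · exact hτ i v hv
  · rintro (_ | i) v hv
    · exact h2 v hv
    · exact h1 i v hv
  · rintro (_ | i) hi
    · exact hi
    · exact hu _
  · rintro (_ | i) hi
    · exact hi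
    · exact hu _
  · rintro (_ | i) hi
    · left; rfl
    · right
      obtain ⟨a, d, had, ha, hd⟩ := hge i
      have hma : b a ∈ blk B b L (some i) := ha ▸ h.b_mem L a
      have hmd : b d ∈ blk B b L (some i) := hd ▸ h.b_mem L d
      by_cases h0 : B (b d) (u i) = 0
      · exact ⟨b d, hmd, b.ne_zero d, h0⟩
      · refine ⟨B (b d) (u i) • b a - B (b a) (u i) • b d, ?_, ?_, ?_⟩
        · exact Submodule.sub_mem _ (Submodule.smul_mem _ _ hma) (Submodule.smul_mem _ _ hmd)
        · intro hh
          have := congrArg (fun v => B v (b a)) hh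
          simp [h.orth d a (Ne.symm had), h0, h.bn a] at this
        · simp; ring

end HallOrth
end

section
namespace HallOrth
set_option linter.unusedSectionVars false
set_option linter.unusedVariables false
variable {F : Type*} [Field F] {V : Type*} [AddCommGroup V] [Module F V]
variable {ι : Type} {B : V →ₗ[F] V →ₗ[F] F} {H : Subgroup (V ≃ₗ[F] V)} {b : Module.Basis ι F V}
variable {k : ℕ} [Fintype ι]

/-- in the presence of three nonzero components, the similitude factor is the square of the
common scalar -/
theorem big_case (h : Setup B H b) {L : ι → Option (Fin k)} (hk : 2 ≤ k) {t : V} {w : Fin k → V}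
    (hw0 : ∀ i, w i ≠ 0) (cz : Cfg B b L (fun _ => 0) (oU t w)) (hb : t ≠ 0 ∨ 3 ≤ k)
    {g g' : V ≃ₗ[F] V} {τ : Equiv.Perm (Fin k)} {τ' : Equiv.Perm (Option (Fin k))} {μ : F}
    (a : Act B b L (fun _ => 0) (oU t w) g g' (Equiv.optionCongr τ) τ' μ) (i : Fin k) :
    B (w (τ i)) (w (τ i)) = B (w i) (w i) := by
  have h00 : oU t w (some ⟨0, by omega⟩) ≠ 0 := hw0 _
  obtain ⟨l, hl0, hl⟩ := a.exists_scal h cz h00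
  have hall : ∀ o, g (oU t w o) = l • oU t w (Equiv.optionCongr τ o) := by
    intro o
    by_cases ho : oU t w o = 0
    · rcases o with _ | i
      · have : Equiv.optionCongr τ none = none := rfl
        rw [this, ho]; simp
      · exact absurd ho (hw0 i)
    · obtain ⟨α, hα0, hα⟩ := a.exists_scal h cz ho
      obtain ⟨o'', h1, h2, h3⟩ := big_third hw0 hk hb o (some ⟨0, by omega⟩)
      have := a.scal_three h cz ho h00 h3 h1 h2 rfl rfl hα hα0 hl hl0
      rw [hα, this]
  have hsq : ∀ o, μ * B (oU t w o) (oU t w o) =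
      l ^ 2 * B (oU t w (Equiv.optionCongr τ o)) (oU t w (Equiv.optionCongr τ o)) :=
    fun o => a.scal_sq cz (hall o)
  have hq := cz.q_ne _ h00
  unfold cq at hq
  rw [Finset.filter_true_of_mem (fun _ _ => rfl)] at hq
  have hs : μ * ∑ o, B (oU t w o) (oU t w o) = l ^ 2 * ∑ o, B (oU t w o) (oU t w o) := by
    rw [← Equiv.sum_comp (Equiv.optionCongr τ) (fun o => B (oU t w o) (oU t w o)), Finset.mul_sum,
      Equiv.sum_comp (Equiv.optionCongr τ) (fun o => B (oU t w o) (oU t w o)), Finset.mul_sum]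
    rw [← Finset.mul_sum, ← Finset.mul_sum] 
    rw [← Equiv.sum_comp (Equiv.optionCongr τ) (fun o => B (oU t w o) (oU t w o)), Finset.mul_sum]
    rw [Equiv.sum_comp (Equiv.optionCongr τ) (fun o => μ * B (oU t w o) (oU t w o)), Finset.mul_sum]
    exact Finset.sum_congr rfl fun o _ => hsq o
  have hμ : μ = l ^ 2 := mul_right_cancel₀ hq hs
  have := hsq (some i)
  rw [hμ] at this
  exact (mul_left_cancel₀ (pow_ne_zero 2 hl0) this).symm

theorem core_aux (h : Setup B H b) {L : ι → Option (Fin k)} (hk : 2 ≤ k)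
    (hge : ∀ i, ∃ a c, a ≠ c ∧ L a = some i ∧ L c = some i)
    (hperm : ∀ g ∈ H, ∃ τ : Equiv.Perm (Fin k),
        (∀ i, ∀ v ∈ blk B b L (some i), g v ∈ blk B b L (some (τ i))) ∧
        (∀ v ∈ blk B b L none, g v ∈ blk B b L none))
    {t : V} {w u v : Fin k → V}
    (ht : ∀ j, L j = none → t = b j)
    (hw0 : ∀ i, w i ≠ 0) (hu0 : ∀ i, u i ≠ 0) (hv0 : ∀ i, v i ≠ 0)
    (cx : Cfg B b L (oJ (Jx k)) (oU 0 u)) (cy : Cfg B b L (oJ (Jy k)) (oU 0 v))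
    (cz : Cfg B b L (fun _ => 0) (oU t w))
    (hZ0 : ∀ i, B (w i) (w i) = B (w ⟨0, by omega⟩) (w ⟨0, by omega⟩) → i = ⟨0, by omega⟩)
    (hZ1 : ∀ i, B (w i) (w i) = B (w ⟨k - 1, by omega⟩) (w ⟨k - 1, by omega⟩) → i = ⟨k - 1, by omega⟩)
    (hb : (t ≠ 0 ∨ 3 ≤ k) ∨ (k = 2 ∧ B (u ⟨0, by omega⟩) (w ⟨0, by omega⟩) = 0 ∧
      B (u ⟨k - 1, by omega⟩) (w ⟨k - 1, by omega⟩) ≠ 0))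
    (huw : ∀ i, ∃ i', Jx k i' = Jx k i ∧ B (u i') (w i') ≠ 0)
    (hvw : ∀ i, B (v i) (w i) ≠ 0)
    (hrig : ∀ i, Rigid H (blk B b L (some i)) (w i) (u i) (v i))
    {g : V ≃ₗ[F] V} (hg : g ∈ H) (hgx : cx.xE h * g * (cx.xE h)⁻¹ ∈ H)
    (hgy : cy.xE h * g * (cy.xE h)⁻¹ ∈ H) (hgz : cz.xE h * g * (cz.xE h)⁻¹ ∈ H) :
    ∃ c : F, ∀ v, g v = c • v := by
  obtain ⟨μ, hμ, hsim⟩ := h.sim g hg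
  obtain ⟨τ, hτ, hτn⟩ := hperm g hg
  obtain ⟨τx, ax⟩ := mk_act h hge hperm hu0 cx hgx hμ hsim hτ hτn
  obtain ⟨τy, ay⟩ := mk_act h hge hperm hv0 cy hgy hμ hsim hτ hτn
  obtain ⟨τz, az⟩ := mk_act h hge hperm hw0 cz hgz hμ hsim hτ hτn
  have h01 : τ ⟨0, by omega⟩ = ⟨0, by omega⟩ ∧ τ ⟨k - 1, by omega⟩ = ⟨k - 1, by omega⟩ := by
    rcases hb with hb | ⟨hk2, hb0, hb1⟩
    · exact ⟨hZ0 _ (big_case h hk hw0 cz hb az _), hZ1 _ (big_case h hk hw0 cz hb az _)⟩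
    · have h0 : τ ⟨0, by omega⟩ = ⟨0, by omega⟩ := by
        by_contra hne
        have he : τ ⟨0, by omega⟩ = ⟨k - 1, by omega⟩ := by
          apply Fin.ext
          have h1 := (τ ⟨0, by omega⟩).2
          have h2 : (τ ⟨0, by omega⟩).val ≠ 0 := fun hh => hne (Fin.ext hh)
          simp only
          omega
        obtain ⟨α, hα0, hα⟩ := ax.exists_scal h cx (i := some ⟨0, by omega⟩) (hu0 _)
        obtain ⟨β, hβ0, hβ⟩ := az.exists_scal h cz (i := some ⟨0, by omega⟩) (hw0 _)
        have e : ∀ {t : V} {u : Fin k → V}, oU t u (Equiv.optionCongr τ (some ⟨0, by omega⟩)) = u ⟨k - 1, by omega⟩ := by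
          intro t u
          rw [Equiv.optionCongr_apply, Option.map_some, oU_some, he]
        rw [e, oU_some] at hα hβ
        have h3 := hsim (u ⟨0, by omega⟩) (w ⟨0, by omega⟩)
        rw [hα, hβ, hb0] at h3
        simp [hα0, hβ0] at h3
        exact hb1 h3
      refine ⟨h0, ?_⟩
      apply Fin.ext
      have h1 := (τ ⟨k - 1, by omega⟩).2
      have h2 : (τ ⟨k - 1, by omega⟩).val ≠ 0 := by
        intro hh
        have h3 : τ ⟨k - 1, by omega⟩ = τ ⟨0, by omega⟩ := by rw [h0]; exact Fin.ext hh
        have h4 := congrArg Fin.val (τ.injective h3)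
        simp at h4; omega
      simp only
      omega
  have hτ1 : τ = 1 := by
    apply perm_id hk τ h01.1 h01.2
    · intro i i' hJ
      exact ax.J_tau h cx (i := some i) (i' := some i') (hu0 i) (hu0 i') hJ
    · intro i i' hJ
      exact ay.J_tau h cy (i := some i) (i' := some i') (hv0 i) (hv0 i') hJ
  subst hτ1
  have hid : ∀ o : Option (Fin k), Equiv.optionCongr (1 : Equiv.Perm (Fin k)) o = o := by
    rintro (_ | i) <;> rfl
  have h00 : oU t w (some ⟨0, by omega⟩) ≠ 0 := hw0 _
  obtain ⟨l, hl0, hl⟩ := az.exists_scal h cz h00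
  rw [hid] at hl
  have hall : ∀ o, g (oU t w o) = l • oU t w o := by
    intro o
    by_cases ho : oU t w o = 0
    · rw [ho]; simp
    · obtain ⟨α, hα0, hα⟩ := az.exists_scal h cz ho
      rw [hid] at hα
      have := az.scal_id h cz ho h00 rfl (hid _) (hid _) hα hα0 hl hl0
      rw [hα, this]
  have hμl : μ = l ^ 2 := by
    have h1 := az.scal_sq cz (i := some ⟨0, by omega⟩) (by rw [hid]; exact hl)
    rw [hid] at h1
    exact mul_right_cancel₀ (cz.nz _ h00) h1
  -- a vector which is an eigenvector and not orthogonal to `w i` has eigenvalue `l`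
  have hgen : ∀ i : Fin k, ∀ x : V, ∀ α : F, B x (w i) ≠ 0 → g x = α • x → α = l := by
    intro i x α hx hgx'
    have h1 := hsim x (w i)
    have h2 : g (w i) = l • w i := hall (some i)
    rw [hgx', h2, hμl] at h1
    simp only [map_smul, LinearMap.smul_apply, smul_eq_mul] at h1
    have h3 : (α - l) * (l * B x (w i)) = 0 := by linear_combination h1
    rcases mul_eq_zero.mp h3 with h4 | h4
    · linear_combination h4
    · exact absurd h4 (mul_ne_zero hl0 hx)
  have hu : ∀ i, g (u i) = l • u i := by
    intro i
    obtain ⟨i', hJ, hi'⟩ := huw i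
    obtain ⟨α, hα0, hα⟩ := ax.exists_scal h cx (i := some i) (hu0 i)
    obtain ⟨α', hα0', hα'⟩ := ax.exists_scal h cx (i := some i') (hu0 i')
    rw [hid] at hα hα'
    have h1 : α' = l := hgen i' (u i') α' hi' hα'
    have h2 : α = α' := ax.scal_id h cx (i := some i) (i' := some i') (hu0 i) (hu0 i') hJ (hid _) (hid _)
      hα hα0 hα' hα0'
    rw [← h1, ← h2]; exact hα
  have hv : ∀ i, g (v i) = l • v i := by
    intro i
    obtain ⟨α, hα0, hα⟩ := ay.exists_scal h cy (i := some i) (hv0 i)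
    rw [hid] at hα
    rw [← hgen i (v i) α (hvw i) hα]; exact hα
  refine ⟨l, ?_⟩
  have hlin : (g : V →ₗ[F] V) = l • LinearMap.id := by
    apply b.ext
    intro j
    change g (b j) = l • b j
    rcases hLj : L j with _ | i
    · rw [← ht j hLj]; exact hall none
    · exact hrig i g hg l hl0 (hτ i) (hall (some i)) (hu i) (hv i) (b j) (hLj ▸ h.b_mem L j)
  intro x
  exact LinearMap.congr_fun hlin x

end HallOrth
end

section
namespace HallOrth
set_option linter.unusedSectionVars false
set_option linter.unusedVariables false
variable {F : Type*} [Field F] {V : Type*} [AddCommGroup V] [Module F V]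
variable {ι : Type} {B : V →ₗ[F] V →ₗ[F] F} {H : Subgroup (V ≃ₗ[F] V)} {b : Module.Basis ι F V}

theorem core [Fintype ι] [Fintype F] [Group.IsSolvable H] (h : Setup B H b)
    (h3 : (3 : F) ≠ 0) (hF : 5 ≤ Fintype.card F) (hn : 7 ≤ Fintype.card ι)
    (m : ι → ι) (hfix : ∀ s : Finset ι, (∀ j ∈ s, m j = j) → s.card ≤ 2)
    (hm : ∀ j, IsRoot B H (b j + b (m j))) :
    ∃ x y z : V ≃ₗ[F] V, (∀ v w, B (x v) (x w) = B v w) ∧ (∀ v w, B (y v) (y w) = B v w) ∧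
      (∀ v w, B (z v) (z w) = B v w) ∧
      (x * x = 1 ∧ y * y = 1 ∧ z * z = 1) ∧
      ∀ g ∈ H, x * g * x⁻¹ ∈ H → y * g * y⁻¹ ∈ H → z * g * z⁻¹ ∈ H → ∃ c : F, ∀ v, g v = c • v := by
  classical
  obtain ⟨k, L, hge, hle, hnone, hperm⟩ := h.exists_label m hfix hm
  let fib : Option (Fin k) → Finset ι := fun o => Finset.univ.filter fun j => L j = o
  have hcount : Fintype.card ι = (fib none).card + ∑ i, (fib (some i)).card := by
    rw [← Fintype.sum_option (fun o => (fib o).card), ← Finset.card_univ]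
    exact Finset.card_eq_sum_card_fiberwise (fun _ _ => Finset.mem_univ _)
  have hf0 : (fib none).card ≤ 1 := by
    rw [Finset.card_le_one]
    intro a ha c hc
    exact hnone a c (by simpa [fib] using ha) (by simpa [fib] using hc)
  have hf1 : ∀ i, (fib (some i)).card ≤ 4 := fun i => hle i _ (by simp [fib])
  have hk : 2 ≤ k := by
    have : ∑ i, (fib (some i)).card ≤ ∑ i : Fin k, 4 := Finset.sum_le_sum fun i _ => hf1 i
    simp at this
    omega
  have hchar : ringChar F ≠ 2 := by
    intro hc
    apply h.two
    have := ringChar.Nat.cast_ringChar (R := F)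
    rw [hc] at this
    exact_mod_cast this
  obtain ⟨ν, hν'⟩ := FiniteField.exists_nonsquare hchar
  have hν : ∀ c, c ^ 2 ≠ ν := fun c hc => hν' ⟨c, by rw [← hc]; ring⟩
  have hν0 : ν ≠ 0 := fun hc => hν 0 (by rw [hc]; ring)
  -- the exceptional vector
  obtain ⟨t, ht, htm, ht0, htn⟩ : ∃ t : V, (∀ j, L j = none → t = b j) ∧ t ∈ blk B b L none ∧
      (t ≠ 0 → B t t ≠ 0) ∧ (t = 0 → ∀ j, L j ≠ none) := by
    by_cases hj : ∃ j, L j = none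
    · obtain ⟨j, hj⟩ := hj
      refine ⟨b j, fun j' hj' => by rw [hnone _ _ hj hj'], hj ▸ h.b_mem L j, fun _ => h.bn j, ?_⟩
      intro h0
      exact absurd h0 (b.ne_zero j)
    · push Not at hj
      exact ⟨0, fun j hj' => absurd hj' (hj j), Submodule.zero_mem _, fun h0 => absurd rfl h0, fun _ => hj⟩
  obtain ⟨Z, hZ, hZs, hZ0, hZ1⟩ := vals_z hF hk (B t t)
  obtain ⟨X, hX, hXc, hXs, hXst⟩ := vals_x hF hk (fun i => ν * Z i) (fun i => mul_ne_zero hν0 (hZ i))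
  obtain ⟨Y, hY, hYc, hYs, hYst⟩ := vals_y hF hk (fun i => ν * Z i) (fun i => mul_ne_zero hν0 (hZ i))
  let bit : Fin k → Prop := fun i => k = 2 ∧ t = 0 ∧ i.val = 0
  have hbit : ∀ i, bit i → ∃ s : Finset ι, (∀ j ∈ s, L j = some i) ∧ 3 ≤ s.card := by
    rintro i ⟨hk2, h0, hi⟩
    subst hk2
    refine ⟨fib (some i), by simp [fib], ?_⟩
    have hi0 : i = 0 := Fin.ext hi
    subst hi0
    have : (fib none).card = 0 := by
      rw [Finset.card_eq_zero]
      ext j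
      simpa [fib] using htn h0 j
    rw [this, Fin.sum_univ_two] at hcount
    have := hf1 1
    omega
  have hloc : ∀ i, ∃ w u v : V, (w ∈ blk B b L (some i) ∧ u ∈ blk B b L (some i) ∧ v ∈ blk B b L (some i)) ∧
      B w w = Z i ∧ B u u = X i ∧ B v v = Y i ∧ (bit i → B u w = 0) ∧ (¬ bit i → B u w ≠ 0) ∧ B v w ≠ 0 ∧
      Rigid H (blk B b L (some i)) w u v := by
    intro i
    refine h.local_block h3 (hge i) (hle i) (hX i) (hY i) (hZ i) hν ?_ (bit i) (hbit i)
    rcases Nat.mod_two_eq_zero_or_one i.val with hi | hi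
    · right; exact hYc i hi
    · left; exact hXc i hi
  choose w u v hmem hw hu hv hb1 hb2 hvw hrig using hloc
  have nz : ∀ {x : V} {a : F}, B x x = a → a ≠ 0 → x ≠ 0 := by
    rintro x a hxa ha rfl
    exact ha (by rw [← hxa]; simp)
  have cx : Cfg B b L (oJ (Jx k)) (oU 0 u) := cfg_xy (fun i => (hmem i).2.1) hu hX hXs hXst
  have cy : Cfg B b L (oJ (Jy k)) (oU 0 v) := cfg_xy (fun i => (hmem i).2.2) hv hY hYs hYst
  have cz : Cfg B b L (fun _ => 0) (oU t w) := cfg_z h.two hk htm ht0 (fun i => (hmem i).1) hw hZ hZs hZ0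
  refine ⟨cx.xE h, cy.xE h, cz.xE h, cx.x_isom h, cy.x_isom h, cz.x_isom h,
    ⟨LinearEquiv.ext (cx.x_x h), LinearEquiv.ext (cy.x_x h), LinearEquiv.ext (cz.x_x h)⟩, ?_⟩
  intro g hg hgx hgy hgz
  refine core_aux h hk hge hperm ht (fun i => nz (hw i) (hZ i)) (fun i => nz (hu i) (hX i))
    (fun i => nz (hv i) (hY i)) cx cy cz ?_ ?_ ?_ ?_ hvw hrig hg hgx hgy hgz
  · intro i hi
    rw [hw, hw] at hi
    exact hZ0 i hi
  · intro i hi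
    rw [hw, hw] at hi
    exact hZ1 i hi
  · by_cases hbig : t ≠ 0 ∨ 3 ≤ k
    · exact Or.inl hbig
    · right
      push Not at hbig
      have hk2 : k = 2 := by omega
      refine ⟨hk2, hb1 _ ⟨hk2, hbig.1, rfl⟩, hb2 _ ?_⟩
      rintro ⟨_, _, h5⟩
      simp at h5; omega
  · intro i
    by_cases hbi : bit i
    · obtain ⟨hk2, h0, hi⟩ := hbi
      refine ⟨⟨k - 1, by omega⟩, ?_, hb2 _ ?_⟩
      · simp only [Jx]; omega
      · rintro ⟨_, _, h5⟩
        simp at h5; omega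
    · exact ⟨i, rfl, hb2 i hbi⟩

end HallOrth
end

section
namespace HallOrth
set_option linter.unusedSectionVars false
set_option linter.unusedVariables false

theorem exists_pairing_fin (r : ℕ) : ∃ m : Fin r → Fin r, (∀ i, m (m i) = i) ∧
    ∀ a c, m a = a → m c = c → a = c := by
  let f : ℕ → ℕ := fun i => if i % 2 = 0 then (if i + 1 < r then i + 1 else i) else i - 1
  have hf : ∀ i, f i = if i % 2 = 0 then (if i + 1 < r then i + 1 else i) else i - 1 := fun _ => rfl
  have hlt : ∀ i, i < r → f i < r := by
    intro i hi; rw [hf]; split_ifs <;> omega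
  have hff : ∀ i, i < r → f (f i) = i := by
    intro i hi
    rw [hf i]
    split_ifs <;> rw [hf] <;> split_ifs <;> omega
  have hfix : ∀ i, i < r → f i = i → i + 1 = r := by
    intro i hi
    rw [hf]; split_ifs <;> omega
  refine ⟨fun i => ⟨f i, hlt i i.2⟩, fun i => Fin.ext (hff i i.2), ?_⟩
  intro a c ha hc
  have h1 := hfix a a.2 (congrArg Fin.val ha)
  have h2 := hfix c c.2 (congrArg Fin.val hc)
  apply Fin.ext
  omega

theorem exists_pairing (α : Type*) [Finite α] : ∃ m : α → α, (∀ i, m (m i) = i) ∧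
    ∀ a c, m a = a → m c = c → a = c := by
  obtain ⟨r, ⟨e⟩⟩ := Finite.exists_equiv_fin α
  obtain ⟨m, h1, h2⟩ := exists_pairing_fin r
  refine ⟨fun a => e.symm (m (e a)), fun i => by simp [h1], ?_⟩
  intro a c ha hc
  apply e.injective
  apply h2
  · rw [Equiv.symm_apply_eq] at ha; exact ha
  · rw [Equiv.symm_apply_eq] at hc; exact hc

theorem exists_pairing_col {ι : Type*} [Finite ι] (col : ι → Bool) : ∃ m : ι → ι, (∀ i, m (m i) = i) ∧
    (∀ i, col (m i) = col i) ∧ ∀ s : Finset ι, (∀ j ∈ s, m j = j) → s.card ≤ 2 := by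
  classical
  choose M h1 h2 using fun c : Bool => exists_pairing {j // col j = c}
  let m : ι → ι := fun j => (M (col j) ⟨j, rfl⟩).1
  have hm : ∀ c (x : {j // col j = c}), m x.1 = (M c x).1 := by
    rintro c ⟨j, rfl⟩; rfl
  refine ⟨m, ?_, ?_, ?_⟩
  · intro i
    have e : m i = (M (col i) ⟨i, rfl⟩).1 := rfl
    rw [e, hm, h1]
  · intro i
    exact (M (col i) ⟨i, rfl⟩).2
  · intro s hs
    have hinj : Set.InjOn col (s : Set ι) := by
      intro a ha c hc hac
      have ha' := hs a ha
      have hc' := hs c hc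
      have := h2 (col a) ⟨a, rfl⟩ ⟨c, hac.symm⟩ (Subtype.ext (by rw [← hm]; exact ha'))
        (Subtype.ext (by rw [← hm]; exact hc'))
      exact congrArg Subtype.val this
    have := Finset.card_le_card_of_injOn (t := Finset.univ) col (fun _ _ => Finset.mem_univ _) hinj
    simpa using this

theorem conj_into {G : Type*} [Group G] {A H K : Subgroup G} (hHA : H ≤ A) (hKA : K ≤ A)
    (hK : IsPGroup 2 K) (hodd : ¬ 2 ∣ H.relIndex A) : ∃ a ∈ A, ∀ x ∈ K, a⁻¹ * x * a ∈ H := by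
  have hK' : IsPGroup 2 (K.subgroupOf A) := by
    rintro ⟨⟨g, hgA⟩, hg⟩
    obtain ⟨r, hr⟩ := hK ⟨g, hg⟩
    refine ⟨r, ?_⟩
    have := congrArg Subtype.val hr
    apply Subtype.ext
    apply Subtype.ext
    simpa using this
  have hcard : ¬ 2 ∣ Nat.card (A ⧸ H.subgroupOf A) := hodd
  have : Fact (Nat.Prime 2) := ⟨Nat.prime_two⟩
  obtain ⟨x, hx⟩ := hK'.nonempty_fixed_point_of_prime_not_dvd_card (A ⧸ H.subgroupOf A) hcard
  obtain ⟨a, rfl⟩ := QuotientGroup.mk_surjective x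
  refine ⟨a.1, a.2, ?_⟩
  intro y hy
  have h1 := hx ⟨⟨y⁻¹, A.inv_mem (hKA hy)⟩, K.inv_mem hy⟩
  have h2 : ((⟨y⁻¹, A.inv_mem (hKA hy)⟩ * a : A) : A ⧸ H.subgroupOf A) = (a : A ⧸ H.subgroupOf A) := h1
  rw [QuotientGroup.eq] at h2
  have h3 : ((⟨y⁻¹, A.inv_mem (hKA hy)⟩ * a : A)⁻¹ * a : A).1 ∈ H := h2
  simpa [mul_assoc] using h3

variable {F : Type*} [Field F] {V : Type*} [AddCommGroup V] [Module F V]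

/-- the similitude group -/
def simG (B : V →ₗ[F] V →ₗ[F] F) : Subgroup (V ≃ₗ[F] V) where
  carrier := {g | ∃ μ : F, μ ≠ 0 ∧ ∀ x y, B (g x) (g y) = μ * B x y}
  one_mem' := ⟨1, one_ne_zero, fun x y => by simp⟩
  mul_mem' := by
    rintro g h ⟨μ, hμ, hg⟩ ⟨ν, hν, hh⟩
    refine ⟨μ * ν, mul_ne_zero hμ hν, fun x y => ?_⟩
    rw [LinearEquiv.mul_apply, LinearEquiv.mul_apply, hg, hh, mul_assoc]
  inv_mem' := by
    rintro g ⟨μ, hμ, hg⟩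
    refine ⟨μ⁻¹, inv_ne_zero hμ, fun x y => ?_⟩
    have h1 : ∀ x, g (g⁻¹ x) = x := fun x => g.apply_symm_apply x
    have := hg (g⁻¹ x) (g⁻¹ y)
    rw [h1, h1] at this
    rw [this, inv_mul_cancel_left₀ hμ]

theorem mem_simG {B : V →ₗ[F] V →ₗ[F] F} {g : V ≃ₗ[F] V} :
    g ∈ simG B ↔ ∃ μ : F, μ ≠ 0 ∧ ∀ x y, B (g x) (g y) = μ * B x y := Iff.rfl

theorem exists_good_basis [Fintype F] [FiniteDimensional F V] (B : V →ₗ[F] V →ₗ[F] F)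
    (hs : ∀ x y, B x y = B y x) (hnd : ∀ v, (∀ w, B v w = 0) → v = 0) (h2 : (2 : F) ≠ 0) :
    ∃ (b : Module.Basis (Fin (Module.finrank F V)) F V) (m : Fin (Module.finrank F V) → Fin (Module.finrank F V)),
      (∀ i j, i ≠ j → B (b i) (b j) = 0) ∧ (∀ i, B (b i) (b i) ≠ 0) ∧ (∀ i, m (m i) = i) ∧
      (∀ i, B (b (m i)) (b (m i)) = B (b i) (b i)) ∧
      ∀ s : Finset (Fin (Module.finrank F V)), (∀ j ∈ s, m j = j) → s.card ≤ 2 := by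
  classical
  have : Invertible (2 : F) := invertibleOfNonzero h2
  obtain ⟨e, he⟩ := LinearMap.BilinForm.exists_orthogonal_basis (B := B) ⟨hs⟩
  have ho : ∀ i j, i ≠ j → B (e i) (e j) = 0 := fun i j hij => he hij
  have hn : ∀ i, B (e i) (e i) ≠ 0 := by
    intro i hi
    apply e.ne_zero i
    apply hnd
    intro w
    have : B (e i) = 0 := e.ext fun j => by
      by_cases hij : i = j
      · subst hij; exact hi
      · exact ho i j hij
    rw [this]; rfl
  have hchar : ringChar F ≠ 2 := by
    intro hc
    apply h2
    have := ringChar.Nat.cast_ringChar (R := F)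
    rw [hc] at this
    exact_mod_cast this
  obtain ⟨ν, hν⟩ := FiniteField.exists_nonsquare hchar
  have hsc : ∀ i, ∃ a : Fˣ, (a : F) ^ 2 * B (e i) (e i) = if IsSquare (B (e i) (e i)) then 1 else ν := by
    intro i
    split_ifs with hsq
    · obtain ⟨r, hr⟩ := hsq
      have hr0 : r ≠ 0 := by rintro rfl; exact hn i (by rw [hr]; ring)
      refine ⟨(Units.mk0 r hr0)⁻¹, ?_⟩
      rw [hr]
      simp only [Units.val_inv_eq_inv_val, Units.val_mk0]
      field_simp
    · have hν0 : ν ≠ 0 := by rintro rfl; exact hν (IsSquare.zero)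
      have hprod : IsSquare (B (e i) (e i) * ν) := by
        rw [← quadraticChar_one_iff_isSquare (mul_ne_zero (hn i) hν0), map_mul,
          quadraticChar_neg_one_iff_not_isSquare.mpr hsq, quadraticChar_neg_one_iff_not_isSquare.mpr hν]
        norm_num
      obtain ⟨r, hr⟩ := hprod
      have hr0 : r ≠ 0 := by rintro rfl; exact mul_ne_zero (hn i) hν0 (by rw [hr]; ring)
      refine ⟨Units.mk0 (ν / r) (div_ne_zero hν0 hr0), ?_⟩
      simp only [Units.val_mk0]
      field_simp
      linear_combination hr
  choose a ha using hsc
  let b := e.unitsSMul a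
  have hb : ∀ i, b i = (a i : F) • e i := fun i => Module.Basis.unitsSMul_apply i
  have hbn : ∀ i, B (b i) (b i) = if IsSquare (B (e i) (e i)) then 1 else ν := by
    intro i
    rw [← ha i, hb, map_smul, map_smul, LinearMap.smul_apply, smul_eq_mul, smul_eq_mul]
    ring
  obtain ⟨m, h1, h2', h3⟩ := exists_pairing_col (fun i => decide (IsSquare (B (e i) (e i))))
  refine ⟨b, m, ?_, ?_, h1, ?_, h3⟩
  · intro i j hij
    rw [hb, hb]; simp [ho i j hij]
  · intro i
    rw [hb]; simp [hn i]
  · intro i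
    rw [hbn, hbn]
    have := h2' i
    rw [decide_eq_decide] at this
    simp only [this]

end HallOrth
end

section
namespace HallOrth
set_option linter.unusedSectionVars false
set_option linter.unusedVariables false
variable {F : Type*} [Field F] {V : Type*} [AddCommGroup V] [Module F V]
variable {ι : Type*}

/-- signed permutations compatible with the pairing `m` -/
def IsSP (b : Module.Basis ι F V) (m : ι → ι) (g : V ≃ₗ[F] V) : Prop :=
  ∀ j, ∃ s : F, (s = 1 ∨ s = -1) ∧ (g (b j) = s • b j ∨ g (b j) = s • b (m j))

theorem IsSP.mul {b : Module.Basis ι F V} {m : ι → ι} (hm : ∀ i, m (m i) = i) {g g' : V ≃ₗ[F] V}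
    (hg : IsSP b m g) (hg' : IsSP b m g') : IsSP b m (g * g') := by
  intro j
  obtain ⟨s, hs, h⟩ := hg' j
  have hmul : ∀ {s s' : F}, (s = 1 ∨ s = -1) → (s' = 1 ∨ s' = -1) → (s * s' = 1 ∨ s * s' = -1) := by
    rintro s s' (rfl | rfl) (rfl | rfl) <;> simp
  rcases h with h | h
  · obtain ⟨s', hs', h'⟩ := hg j
    refine ⟨s * s', hmul hs hs', ?_⟩
    rw [LinearEquiv.mul_apply, h, map_smul]
    rcases h' with h' | h'
    · left; rw [h', smul_smul]
    · right; rw [h', smul_smul]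
  · obtain ⟨s', hs', h'⟩ := hg (m j)
    refine ⟨s * s', hmul hs hs', ?_⟩
    rw [LinearEquiv.mul_apply, h, map_smul]
    rcases h' with h' | h'
    · right; rw [h', smul_smul]
    · left; rw [h', smul_smul, hm]

theorem IsSP.pow_four {b : Module.Basis ι F V} {m : ι → ι} (hm : ∀ i, m (m i) = i) {g : V ≃ₗ[F] V}
    (hg : IsSP b m g) : g ^ 4 = 1 := by
  have hsq : ∀ {s : F}, (s = 1 ∨ s = -1) → s * s = 1 := by
    rintro s (rfl | rfl) <;> simp
  have key : ∀ j, g (g (g (g (b j)))) = b j := by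
    intro j
    obtain ⟨s, hs, h⟩ := hg j
    rcases h with h | h
    · simp only [h, map_smul, smul_smul]
      rw [show s * s * s * s = 1 by rw [hsq hs, one_mul, hsq hs], one_smul]
    · obtain ⟨s', hs', h'⟩ := hg (m j)
      rcases h' with h' | h'
      · -- impossible unless `m j = j`
        have h1 : g (b j) = g ((s * s') • b (m j)) := by
          rw [h, map_smul, h', smul_smul, mul_assoc, hsq hs', mul_one]
        have h3 := g.injective h1
        have h4 : m j = j := by
          by_contra hne
          have h5 := congrArg (fun v => b.repr v j) h3
          simp [hne] at h5
        rw [h4] at h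
        simp only [h, map_smul, smul_smul]
        rw [show s * s * s * s = 1 by rw [hsq hs, one_mul, hsq hs], one_smul]
      · rw [hm] at h'
        simp only [h, h', map_smul, smul_smul]
        rw [show s * s' * s * s' = 1 by
          rw [show s * s' * s * s' = (s * s) * (s' * s') by ring, hsq hs, hsq hs', mul_one], one_smul]
  have hlin : ((g ^ 4 : V ≃ₗ[F] V) : V →ₗ[F] V) = LinearMap.id := by
    apply b.ext
    intro j
    exact key j
  ext x
  exact LinearMap.congr_fun hlin x

def spG (B : V →ₗ[F] V →ₗ[F] F) (b : Module.Basis ι F V) (m : ι → ι) (hm : ∀ i, m (m i) = i) :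
    Subgroup (V ≃ₗ[F] V) where
  carrier := {g | (∀ x y, B (g x) (g y) = B x y) ∧ IsSP b m g}
  one_mem' := ⟨fun _ _ => rfl, fun j => ⟨1, Or.inl rfl, Or.inl (by simp)⟩⟩
  mul_mem' := by
    rintro g g' ⟨h1, h2⟩ ⟨h1', h2'⟩
    refine ⟨fun x y => ?_, h2.mul hm h2'⟩
    rw [LinearEquiv.mul_apply, LinearEquiv.mul_apply, h1, h1']
  inv_mem' := by
    rintro g ⟨h1, h2⟩
    have h3 : g⁻¹ = g * (g * g) := by
      have := h2.pow_four hm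
      rw [inv_eq_iff_mul_eq_one, ← this]; simp only [pow_succ, pow_zero, one_mul, mul_assoc]
    rw [h3]
    refine ⟨fun x y => ?_, h2.mul hm (h2.mul hm h2)⟩
    simp only [LinearEquiv.mul_apply, h1]

theorem spG_isPGroup (B : V →ₗ[F] V →ₗ[F] F) (b : Module.Basis ι F V) (m : ι → ι) (hm : ∀ i, m (m i) = i) :
    IsPGroup 2 (spG B b m hm) := by
  rintro ⟨g, h1, h2⟩
  refine ⟨2, Subtype.ext ?_⟩
  simpa using h2.pow_four hm

theorem refl_mem_spG {B : V →ₗ[F] V →ₗ[F] F} (hs : ∀ x y, B x y = B y x) {b : Module.Basis ι F V} {m : ι → ι}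
    (hm : ∀ i, m (m i) = i) (ho : ∀ i j, i ≠ j → B (b i) (b j) = 0) (hn : ∀ i, B (b i) (b i) ≠ 0) (j : ι) :
    refl B (b j) ∈ spG B b m hm := by
  refine ⟨refl_isom B hs _, fun i => ?_⟩
  by_cases hij : i = j
  · subst hij
    exact ⟨-1, Or.inr rfl, Or.inl (by rw [refl_self B (hn i)]; simp)⟩
  · exact ⟨1, Or.inl rfl, Or.inl (by rw [refl_of_orth B (ho i j hij)]; simp)⟩

theorem refl_mem_spG' {B : V →ₗ[F] V →ₗ[F] F} (hs : ∀ x y, B x y = B y x) (h2 : (2 : F) ≠ 0) {b : Module.Basis ι F V} {m : ι → ι}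
    (hm : ∀ i, m (m i) = i) (ho : ∀ i j, i ≠ j → B (b i) (b j) = 0) (hn : ∀ i, B (b i) (b i) ≠ 0)
    (hc : ∀ i, B (b (m i)) (b (m i)) = B (b i) (b i)) (j : ι) :
    B (b j + b (m j)) (b j + b (m j)) ≠ 0 ∧ refl B (b j + b (m j)) ∈ spG B b m hm := by
  by_cases hj : m j = j
  · rw [hj, ← two_smul F, refl_smul B h2]
    refine ⟨?_, refl_mem_spG hs hm ho hn j⟩
    simp [h2, hn j]
  · have h3 := ho j (m j) (Ne.symm hj)
    have h4 := ho (m j) j hj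
    have hnorm : B (b j + b (m j)) (b j + b (m j)) = 2 * B (b j) (b j) := by
      simp only [map_add, LinearMap.add_apply, h3, h4, hc]; ring
    refine ⟨by rw [hnorm]; exact mul_ne_zero h2 (hn j), refl_isom B hs _, fun i => ?_⟩
    have hnj := hn j
    by_cases hij : i = j
    · subst hij
      refine ⟨-1, Or.inr rfl, Or.inr ?_⟩
      rw [refl_apply, hnorm, map_add, h3, add_zero,
        show 2 / (2 * B (b i) (b i)) * B (b i) (b i) = 1 by field_simp]
      module
    by_cases hij' : i = m j
    · subst hij'
      refine ⟨-1, Or.inr rfl, Or.inr ?_⟩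
      rw [refl_apply, hnorm, map_add, h4, zero_add, hc, hm,
        show 2 / (2 * B (b j) (b j)) * B (b j) (b j) = 1 by field_simp]
      module
    · refine ⟨1, Or.inl rfl, Or.inl ?_⟩
      rw [refl_of_orth, one_smul]
      rw [map_add, ho i j hij, ho i (m j) hij', add_zero]

theorem exists_setup_basis [Fintype F] [FiniteDimensional F V] (B : V →ₗ[F] V →ₗ[F] F)
    (hs : ∀ x y, B x y = B y x) (hnd : ∀ v, (∀ w, B v w = 0) → v = 0) (h2 : (2 : F) ≠ 0)
    (H : Subgroup (V ≃ₗ[F] V)) (hH : H ≤ simG B) (hodd : ¬ 2 ∣ H.relIndex (simG B)) :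
    ∃ (b : Module.Basis (Fin (Module.finrank F V)) F V) (m : Fin (Module.finrank F V) → Fin (Module.finrank F V)),
      (∀ i j, i ≠ j → B (b i) (b j) = 0) ∧ (∀ i, IsRoot B H (b i)) ∧
      (∀ i, IsRoot B H (b i + b (m i))) ∧
      ∀ s : Finset (Fin (Module.finrank F V)), (∀ j ∈ s, m j = j) → s.card ≤ 2 := by
  obtain ⟨b, m, ho, hn, hm, hc, hfix⟩ := exists_good_basis B hs hnd h2
  have hKA : spG B b m hm ≤ simG B := by
    rintro g ⟨h1, _⟩
    exact ⟨1, one_ne_zero, fun x y => by rw [h1, one_mul]⟩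
  obtain ⟨a, ha, haK⟩ := conj_into hH hKA (spG_isPGroup B b m hm) hodd
  obtain ⟨μ, hμ, hsim⟩ := (simG B).inv_mem ha
  have hroot : ∀ u, B u u ≠ 0 → refl B u ∈ spG B b m hm → IsRoot B H (a⁻¹ u) := by
    intro u hu hr
    refine ⟨by rw [hsim]; exact mul_ne_zero hμ hu, ?_⟩
    rw [← refl_conj B a⁻¹ μ hμ hsim, inv_inv]
    exact haK _ hr
  refine ⟨b.map a⁻¹, m, ?_, ?_, ?_, hfix⟩
  · intro i j hij
    rw [Module.Basis.map_apply, Module.Basis.map_apply, hsim, ho i j hij, mul_zero]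
  · intro i
    rw [Module.Basis.map_apply]
    exact hroot _ (hn i) (refl_mem_spG hs hm ho hn i)
  · intro i
    rw [Module.Basis.map_apply, Module.Basis.map_apply, ← map_add]
    have := refl_mem_spG' hs h2 hm ho hn hc i
    exact hroot _ this.1 this.2

end HallOrth
end

section
open Matrix Pointwise
namespace HallOrth
set_option linter.unusedSectionVars false
set_option linter.unusedVariables false
variable {F : Type} [Field F] {n : ℕ}

/-- the (left) action on row vectors -/
noncomputable def rowHom (n : ℕ) (F : Type) [Field F] : GL (Fin n) F →* ((Fin n → F) ≃ₗ[F] (Fin n → F)) where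
  toFun M :=
    { toFun := fun v => Matrix.vecMul v ((M⁻¹ : GL (Fin n) F) : Matrix (Fin n) (Fin n) F)
      invFun := fun v => Matrix.vecMul v (M : Matrix (Fin n) (Fin n) F)
      map_add' := fun v w => Matrix.add_vecMul _ _ _
      map_smul' := fun c v => Matrix.smul_vecMul _ _ _
      left_inv := fun v => by
        simp only [Matrix.vecMul_vecMul]
        rw [M.inv_mul, Matrix.vecMul_one]
      right_inv := fun v => by
        simp only [Matrix.vecMul_vecMul]
        rw [M.mul_inv, Matrix.vecMul_one] }
  map_one' := by ext1 v; change Matrix.vecMul v (((1 : GL (Fin n) F)⁻¹ : GL (Fin n) F) : Matrix (Fin n) (Fin n) F) = v; simp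
  map_mul' M N := by
    ext1 v
    change Matrix.vecMul v (((M * N)⁻¹ : GL (Fin n) F) : Matrix (Fin n) (Fin n) F) =
      Matrix.vecMul (Matrix.vecMul v ((N⁻¹ : GL (Fin n) F) : Matrix (Fin n) (Fin n) F))
        ((M⁻¹ : GL (Fin n) F) : Matrix (Fin n) (Fin n) F)
    rw [Matrix.vecMul_vecMul, _root_.mul_inv_rev]
    rfl

theorem rowHom_apply (M : GL (Fin n) F) (v : Fin n → F) :
    rowHom n F M v = Matrix.vecMul v ((M⁻¹ : GL (Fin n) F) : Matrix (Fin n) (Fin n) F) := rfl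

theorem rowHom_inv_apply (M : GL (Fin n) F) (v : Fin n → F) :
    rowHom n F M⁻¹ v = Matrix.vecMul v (M : Matrix (Fin n) (Fin n) F) := by
  rw [rowHom_apply, inv_inv]

theorem mat_eq_of_vecMul {A C : Matrix (Fin n) (Fin n) F} (h : ∀ v, Matrix.vecMul v A = Matrix.vecMul v C) :
    A = C := by
  ext i j
  have := congrFun (h (Pi.single i 1)) j
  simpa using this

theorem rowHom_injective : Function.Injective (rowHom n F) := by
  intro M N h
  rw [← _root_.inv_inj]
  apply Units.ext
  apply mat_eq_of_vecMul
  intro v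
  exact LinearEquiv.congr_fun h v

theorem toMatrix_eq (M : GL (Fin n) F) :
    ((M⁻¹ : GL (Fin n) F) : Matrix (Fin n) (Fin n) F) =
      (LinearMap.toMatrix' (rowHom n F M : (Fin n → F) →ₗ[F] (Fin n → F)))ᵀ := by
  apply mat_eq_of_vecMul
  intro v
  rw [Matrix.vecMul_transpose, LinearMap.toMatrix'_mulVec]
  rfl

theorem rowHom_surjective : Function.Surjective (rowHom n F) := by
  intro g
  have h1 : (LinearMap.toMatrix' (g : (Fin n → F) →ₗ[F] (Fin n → F))) *
      (LinearMap.toMatrix' (g.symm : (Fin n → F) →ₗ[F] (Fin n → F))) = 1 := by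
    rw [← LinearMap.toMatrix'_comp]; simp
  have h2 : (LinearMap.toMatrix' (g.symm : (Fin n → F) →ₗ[F] (Fin n → F))) *
      (LinearMap.toMatrix' (g : (Fin n → F) →ₗ[F] (Fin n → F))) = 1 := by
    rw [← LinearMap.toMatrix'_comp]; simp
  refine ⟨⟨(LinearMap.toMatrix' (g.symm : (Fin n → F) →ₗ[F] (Fin n → F)))ᵀ,
    (LinearMap.toMatrix' (g : (Fin n → F) →ₗ[F] (Fin n → F)))ᵀ, ?_, ?_⟩, ?_⟩
  · rw [← Matrix.transpose_mul, h1, Matrix.transpose_one]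
  · rw [← Matrix.transpose_mul, h2, Matrix.transpose_one]
  · ext1 v
    change Matrix.vecMul v (LinearMap.toMatrix' (g : (Fin n → F) →ₗ[F] (Fin n → F)))ᵀ = g v
    rw [Matrix.vecMul_transpose, LinearMap.toMatrix'_mulVec]
    rfl

theorem det_refl {V : Type*} [AddCommGroup V] [Module F V] [FiniteDimensional F V] (B : V →ₗ[F] V →ₗ[F] F) {u : V} (hu : B u u ≠ 0) :
    LinearMap.det (refl B u : V →ₗ[F] V) = -1 := by
  have h1 : (refl B u : V →ₗ[F] V) = LinearMap.transvection (-((2 / B u u) • B.flip u)) u := by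
    ext v
    change refl B u v = _
    rw [refl_apply, LinearMap.transvection.apply]
    simp [sub_eq_add_neg]
  rw [h1, LinearMap.transvection.det]
  simp [hu]
  norm_num

/-- the polar form -/
noncomputable def pB (Q : QuadraticForm F (Fin n → F)) : (Fin n → F) →ₗ[F] (Fin n → F) →ₗ[F] F := Q.polarBilin

theorem pB_apply (Q : QuadraticForm F (Fin n → F)) (v w : Fin n → F) : pB Q v w = QuadraticMap.polar Q v w := rfl

theorem sim_of_mem {Q : QuadraticForm F (Fin n → F)} {M : GL (Fin n) F}
    (h : M ∈ qSimilitudeGroup (⇑Q : (Fin n → F) → F)) : rowHom n F M ∈ simG (pB Q) := by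
  obtain ⟨c, hc⟩ := (qSimilitudeGroup (⇑Q : (Fin n → F) → F)).inv_mem h
  refine ⟨c, c.ne_zero, fun x y => ?_⟩
  have hc' : ∀ v, Q (rowHom n F M v) = (c : F) * Q v := hc
  simp only [pB_apply, QuadraticMap.polar, ← map_add, hc']
  ring

theorem mem_of_sim (h2 : (2 : F) ≠ 0) {Q : QuadraticForm F (Fin n → F)} {M : GL (Fin n) F}
    (h : rowHom n F M ∈ simG (pB Q)) : M ∈ qSimilitudeGroup (⇑Q : (Fin n → F) → F) := by
  rw [← inv_mem_iff]
  obtain ⟨c, hc0, hc⟩ := h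
  refine ⟨Units.mk0 c hc0, fun v => ?_⟩
  have h1 := hc v v
  simp only [pB_apply, QuadraticMap.polar_self, nsmul_eq_mul, Nat.cast_ofNat] at h1
  change Q (rowHom n F M v) = c * Q v
  apply mul_left_cancel₀ h2
  linear_combination h1

theorem map_sim (h2 : (2 : F) ≠ 0) (Q : QuadraticForm F (Fin n → F)) :
    (qSimilitudeGroup (⇑Q : (Fin n → F) → F)).map (rowHom n F) = simG (pB Q) := by
  ext g
  constructor
  · rintro ⟨M, hM, rfl⟩
    exact sim_of_mem hM
  · intro hg
    obtain ⟨M, rfl⟩ := rowHom_surjective g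
    exact ⟨M, mem_of_sim h2 hg, rfl⟩

theorem mem_conjBy {G : Type*} [Group G] {H : Subgroup G} {x g : G} (h : g ∈ conjBy H x) : x * g * x⁻¹ ∈ H := by
  obtain ⟨a, ha, rfl⟩ := h
  simpa [mul_assoc] using ha

theorem mem_prod {H A : Subgroup (GL (Fin n) F)} {R x : GL (Fin n) F} (hR : R ∈ H) (hRA : R ∈ A)
    (hRdet : Matrix.det (R : Matrix (Fin n) (Fin n) F) = -1) (hRR : R * R = 1) (hx : x ∈ A) (hxx : x * x = 1) :
    x ∈ (H : Set (GL (Fin n) F)) * ((A ⊓ SLsub n F : Subgroup (GL (Fin n) F)) : Set (GL (Fin n) F)) := by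
  have h1 : Matrix.det (x : Matrix (Fin n) (Fin n) F) * Matrix.det (x : Matrix (Fin n) (Fin n) F) = 1 := by
    rw [← Matrix.det_mul, ← Units.val_mul, hxx]; simp
  rcases mul_self_eq_one_iff.mp h1 with h2 | h2
  · exact ⟨1, H.one_mem, x, ⟨hx, h2⟩, one_mul x⟩
  · refine ⟨R, hR, R * x, ⟨A.mul_mem hRA hx, ?_⟩, ?_⟩
    · change Matrix.det ((R * x : GL (Fin n) F) : Matrix (Fin n) (Fin n) F) = 1
      rw [Units.val_mul, Matrix.det_mul, hRdet, h2]; norm_num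
    · change R * (R * x) = x
      rw [← mul_assoc, hRR, one_mul]

theorem main (p f : ℕ) (hp : p.Prime) (hpodd : p ≠ 2) (hf : 1 ≤ f)
    [Fintype F] (hcard : Fintype.card F = p ^ f) (hn : 7 ≤ n)
    (Q : QuadraticForm F (Fin n → F))
    (hnd : ∀ v : Fin n → F, (∀ w : Fin n → F, QuadraticMap.polar (⇑Q) v w = 0) → v = 0)
    (π : Set ℕ) (h2pi : 2 ∈ π) (h3pi : 3 ∈ π) (hppi : p ∉ π)
    (H : Subgroup (GL (Fin n) F))
    (hH : IsHallSubgroupIn π (qSimilitudeGroup (⇑Q : (Fin n → F) → F)) H)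
    (hsolv : Group.IsSolvable ↥H) :
    ∃ x y z : GL (Fin n) F,
      x ∈ (H : Set (GL (Fin n) F)) * ((qSimilitudeGroup (⇑Q : (Fin n → F) → F) ⊓ SLsub n F : Subgroup (GL (Fin n) F)) : Set (GL (Fin n) F)) ∧
      y ∈ (H : Set (GL (Fin n) F)) * ((qSimilitudeGroup (⇑Q : (Fin n → F) → F) ⊓ SLsub n F : Subgroup (GL (Fin n) F)) : Set (GL (Fin n) F)) ∧
      z ∈ (H : Set (GL (Fin n) F)) * ((qSimilitudeGroup (⇑Q : (Fin n → F) → F) ⊓ SLsub n F : Subgroup (GL (Fin n) F)) : Set (GL (Fin n) F)) ∧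
    ∀ g ∈ H ⊓ conjBy H x ⊓ conjBy H y ⊓ conjBy H z,
      ∃ c : F, (g : Matrix (Fin n) (Fin n) F) = c • (1 : Matrix (Fin n) (Fin n) F) := by
  classical
  have hpf : Fact p.Prime := ⟨hp⟩
  have hchar : CharP F p := charP_of_card_eq_prime_pow hcard
  have hp3 : p ≠ 3 := by rintro rfl; exact hppi h3pi
  have h2 : (2 : F) ≠ 0 := by
    intro h
    have : ((2 : ℕ) : F) = 0 := by exact_mod_cast h
    rw [CharP.cast_eq_zero_iff F p] at this
    exact hpodd ((Nat.prime_dvd_prime_iff_eq hp Nat.prime_two).mp this)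
  have h3 : (3 : F) ≠ 0 := by
    intro h
    have : ((3 : ℕ) : F) = 0 := by exact_mod_cast h
    rw [CharP.cast_eq_zero_iff F p] at this
    exact hp3 ((Nat.prime_dvd_prime_iff_eq hp Nat.prime_three).mp this)
  have hp5 : 5 ≤ p := by
    have := hp.two_le
    have : p ≠ 4 := by rintro rfl; exact absurd hp (by norm_num)
    omega
  have hF : 5 ≤ Fintype.card F := by
    rw [hcard]
    exact hp5.trans (Nat.le_self_pow (by omega) p)
  obtain ⟨hHle, hHpi, hHidx⟩ := hH
  let H' := H.map (rowHom n F)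
  have hsolv' : Group.IsSolvable H' :=
    Group.isSolvable_of_surjective ((rowHom n F).subgroupMap_surjective H)
  have hs : ∀ x y, pB Q x y = pB Q y x := fun x y => QuadraticMap.polar_comm _ _ _
  have hnd' : ∀ v, (∀ w, pB Q v w = 0) → v = 0 := hnd
  have hH'le : H' ≤ simG (pB Q) := by
    rw [← map_sim h2]; exact Subgroup.map_mono hHle
  have hodd : ¬ 2 ∣ H'.relIndex (simG (pB Q)) := by
    rw [← map_sim h2, ← Subgroup.relIndex_comap, Subgroup.comap_map_eq_self_of_injective rowHom_injective]
    exact hHidx 2 h2pi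
  obtain ⟨b, m, ho, hroot, hroot', hfix⟩ := exists_setup_basis (pB Q) hs hnd' h2 H' hH'le hodd
  have hord : ∀ g ∈ H', g ^ p = 1 → g = 1 := by
    rintro _ ⟨M, hM, rfl⟩ hg
    rw [← map_pow] at hg
    have hMp : M ^ p = 1 := rowHom_injective (by rw [hg, map_one])
    by_contra hne
    have hM1 : M ≠ 1 := by rintro rfl; exact hne (map_one _)
    have hoM : orderOf M = p := orderOf_eq_prime hMp hM1
    apply hppi
    apply hHpi p hp
    have := orderOf_dvd_natCard (⟨M, hM⟩ : H)
    rwa [Subgroup.orderOf_mk, hoM] at this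
  have hset : Setup (pB Q) H' b :=
    { symm := hs
      nd := hnd'
      two := h2
      sim := fun g hg => hH'le hg
      orth := ho
      root := hroot
      nounip := fun u e he hue h1 h2 => no_unip p hpodd (pB Q) hs H' hord h1.1 he hue h1.2 h2.2 }
  have hdim : Fintype.card (Fin (Module.finrank F (Fin n → F))) = n := by simp
  obtain ⟨x', y', z', hx, hy, hz, ⟨hxx, hyy, hzz⟩, hfin⟩ :=
    core hset h3 hF (by rw [hdim]; exact hn) m hfix hroot'
  obtain ⟨x, rfl⟩ := rowHom_surjective x'
  obtain ⟨y, rfl⟩ := rowHom_surjective y'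
  obtain ⟨z, rfl⟩ := rowHom_surjective z'
  have hinv : ∀ {x : GL (Fin n) F}, rowHom n F x * rowHom n F x = 1 → x * x = 1 := by
    intro x h
    apply rowHom_injective
    rw [map_mul, h, map_one]
  have hiso : ∀ {x : GL (Fin n) F}, (∀ v w, pB Q (rowHom n F x v) (rowHom n F x w) = pB Q v w) →
      x ∈ qSimilitudeGroup (⇑Q : (Fin n → F) → F) := by
    intro x h
    exact mem_of_sim h2 ⟨1, one_ne_zero, fun v w => by rw [h, one_mul]⟩
  -- a reflection in `H`
  let i0 : Fin (Module.finrank F (Fin n → F)) := ⟨0, by simp; omega⟩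
  obtain ⟨hb0, R, hR, hRr⟩ := hroot i0
  have hRR : R * R = 1 := hinv (by rw [hRr]; exact refl_mul_self _ _)
  have hRdet : Matrix.det (R : Matrix (Fin n) (Fin n) F) = -1 := by
    have hRi : R⁻¹ = R := inv_eq_of_mul_eq_one_left hRR
    have h4 := toMatrix_eq R
    rw [hRi, hRr] at h4
    rw [h4, Matrix.det_transpose, LinearMap.det_toMatrix', det_refl _ hb0]
  refine ⟨x, y, z, mem_prod hR (hHle hR) hRdet hRR (hiso hx) (hinv hxx),
    mem_prod hR (hHle hR) hRdet hRR (hiso hy) (hinv hyy),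
    mem_prod hR (hHle hR) hRdet hRR (hiso hz) (hinv hzz), ?_⟩
  intro g hg
  have hgi := (H ⊓ conjBy H x ⊓ conjBy H y ⊓ conjBy H z).inv_mem hg
  obtain ⟨⟨⟨g0, g1⟩, g2⟩, g3⟩ := hgi
  have hconj : ∀ {w : GL (Fin n) F}, g⁻¹ ∈ conjBy H w →
      rowHom n F w * rowHom n F g⁻¹ * (rowHom n F w)⁻¹ ∈ H' := by
    intro w hw
    rw [← map_inv, ← map_mul, ← map_mul]
    exact Subgroup.mem_map_of_mem _ (mem_conjBy hw)
  obtain ⟨c, hc⟩ := hfin (rowHom n F g⁻¹) (Subgroup.mem_map_of_mem _ g0) (hconj g1) (hconj g2) (hconj g3)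
  refine ⟨c, mat_eq_of_vecMul fun v => ?_⟩
  rw [← rowHom_inv_apply, hc, Matrix.vecMul_smul, Matrix.vecMul_one]

end HallOrth
end

theorem stmt12 (p f q n : ℕ) (hp : p.Prime) (hpodd : p ≠ 2) (hf : 1 ≤ f) (hq : q = p ^ f)
    (F : Type) [Field F] [Fintype F] (hcard : Fintype.card F = q)
    (hn : 7 ≤ n)
    (Q : QuadraticForm F (Fin n → F))
    (hnd : ∀ v : Fin n → F, (∀ w : Fin n → F, QuadraticMap.polar (⇑Q) v w = 0) → v = 0)
    (hnonsolv : ¬ IsSolvable ↥(qSimilitudeGroup (⇑Q : (Fin n → F) → F)))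
    (π : Set ℕ) (hπ : ∀ r ∈ π, r.Prime) (h2pi : 2 ∈ π) (h3pi : 3 ∈ π) (hppi : p ∉ π)
    (H : Subgroup (GL (Fin n) F))
    (hH : IsHallSubgroupIn π (qSimilitudeGroup (⇑Q : (Fin n → F) → F)) H)
    (hsolv : IsSolvable ↥H)
    :
    ∃ x y z : GL (Fin n) F,
      x ∈ (H : Set (GL (Fin n) F)) * ((qSimilitudeGroup (⇑Q : (Fin n → F) → F) ⊓ SLsub n F : Subgroup (GL (Fin n) F)) : Set (GL (Fin n) F)) ∧
      y ∈ (H : Set (GL (Fin n) F)) * ((qSimilitudeGroup (⇑Q : (Fin n → F) → F) ⊓ SLsub n F : Subgroup (GL (Fin n) F)) : Set (GL (Fin n) F)) ∧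
      z ∈ (H : Set (GL (Fin n) F)) * ((qSimilitudeGroup (⇑Q : (Fin n → F) → F) ⊓ SLsub n F : Subgroup (GL (Fin n) F)) : Set (GL (Fin n) F)) ∧
    ∀ g ∈ H ⊓ conjBy H x ⊓ conjBy H y ⊓ conjBy H z,
      ∃ c : F, (g : Matrix (Fin n) (Fin n) F) = c • (1 : Matrix (Fin n) (Fin n) F) := by
  subst hq
  exact HallOrth.main p f hp hpodd hf hcard hn Q hnd π h2pi h3pi hppi H hH hsolv
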